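/- arXiv:2109.00447 — 16 statements merged into one kernel-verified Lean document; each statement's English description precedes it below -/
import Mathlib

section
/- A linear bijection F of T*𝔥₃, written in the basis (e₁,…,e₆) as a 2×2 block matrix with 3×3 blocks F = [[A, C],[B, D]], is a Lie algebra automorphism of T*𝔥₃ if and only if C = 0, A is invertible, D = (det A)·A^{−T}, and B is an arbitrary 3×3 real matrix. -/
open Matrix

noncomputable section

/-- The Lie bracket of `T*𝔥₃` in the basis `(e₁,…,e₆)`:
`[e₁,e₂]=e₆`, `[e₁,e₃]=−e₅`, `[e₂,e₃]=e₄`. -/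
def bra (x y : Fin 6 → ℝ) : Fin 6 → ℝ :=
  ![0, 0, 0, x 1 * y 2 - x 2 * y 1, x 2 * y 0 - x 0 * y 2, x 0 * y 1 - x 1 * y 0]

theorem aux_gen (M : Matrix (Fin 6) (Fin 6) ℝ) (x : Fin 6 → ℝ) (i : Fin 6) :
    M.mulVec x i = M i 0 * x 0 + M i 1 * x 1 + M i 2 * x 2 + M i 3 * x 3 + M i 4 * x 4
      + M i 5 * x 5 := by
  simp only [Matrix.mulVec, dotProduct, Fin.sum_univ_six]

theorem aux_mulVec (A C B D : Matrix (Fin 3) (Fin 3) ℝ) (x : Fin 6 → ℝ) :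
    (Matrix.reindex finSumFinEquiv finSumFinEquiv (Matrix.fromBlocks A C B D) :
      Matrix (Fin 6) (Fin 6) ℝ).mulVec x =
    ![A 0 0 * x 0 + A 0 1 * x 1 + A 0 2 * x 2 + C 0 0 * x 3 + C 0 1 * x 4 + C 0 2 * x 5,
      A 1 0 * x 0 + A 1 1 * x 1 + A 1 2 * x 2 + C 1 0 * x 3 + C 1 1 * x 4 + C 1 2 * x 5,
      A 2 0 * x 0 + A 2 1 * x 1 + A 2 2 * x 2 + C 2 0 * x 3 + C 2 1 * x 4 + C 2 2 * x 5,
      B 0 0 * x 0 + B 0 1 * x 1 + B 0 2 * x 2 + D 0 0 * x 3 + D 0 1 * x 4 + D 0 2 * x 5,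
      B 1 0 * x 0 + B 1 1 * x 1 + B 1 2 * x 2 + D 1 0 * x 3 + D 1 1 * x 4 + D 1 2 * x 5,
      B 2 0 * x 0 + B 2 1 * x 1 + B 2 2 * x 2 + D 2 0 * x 3 + D 2 1 * x 4 + D 2 2 * x 5] := by
  funext i
  refine (aux_gen _ x i).trans ?_
  fin_cases i <;> rfl

theorem aux_hom (A C B D : Matrix (Fin 3) (Fin 3) ℝ)
    (F : Matrix (Fin 6) (Fin 6) ℝ)
    (hF : F = Matrix.reindex finSumFinEquiv finSumFinEquiv (Matrix.fromBlocks A C B D)) :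
    (∀ x y : Fin 6 → ℝ, F.mulVec (bra x y) = bra (F.mulVec x) (F.mulVec y)) ↔
      (C = 0 ∧ D = (A.adjugate)ᵀ) := by
  subst hF
  simp only [aux_mulVec, bra]
  constructor
  · intro h
    have h1 := h ![1,0,0,0,0,0] ![0,1,0,0,0,0]
    have h2 := h ![0,0,1,0,0,0] ![1,0,0,0,0,0]
    have h3 := h ![0,1,0,0,0,0] ![0,0,1,0,0,0]
    simp at h1 h2 h3
    constructor
    · ext i j
      fin_cases i <;> fin_cases j <;> simp [h1, h2, h3]
    · rw [Matrix.adjugate_fin_three]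
      ext i j
      fin_cases i <;> fin_cases j <;> simp [h1, h2, h3] <;> ring
  · rintro ⟨rfl, rfl⟩ x y
    rw [Matrix.adjugate_fin_three]
    ext i
    fin_cases i <;> simp <;> ring

/-- A linear bijection of `T*𝔥₃`, written blockwise as `[[A, C],[B, D]]`, is a Lie algebra
automorphism iff `C = 0`, `A` is invertible and `D = (det A) • A⁻ᵀ` (with `B` arbitrary). -/
theorem stmt_0 (A C B D : Matrix (Fin 3) (Fin 3) ℝ)
    (F : Matrix (Fin 6) (Fin 6) ℝ)
    (hF : F = Matrix.reindex finSumFinEquiv finSumFinEquiv (Matrix.fromBlocks A C B D)) :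
    (Function.Bijective F.mulVec ∧
        ∀ x y : Fin 6 → ℝ, F.mulVec (bra x y) = bra (F.mulVec x) (F.mulVec y)) ↔
      (C = 0 ∧ IsUnit A.det ∧ D = A.det • (A⁻¹)ᵀ) := by
  rw [aux_hom A C B D F hF]
  have hb : Function.Bijective F.mulVec ↔ IsUnit F.det := by
    rw [← Matrix.isUnit_iff_isUnit_det]
    constructor
    · intro h
      exact Matrix.mulVec_injective_iff_isUnit.1 h.1
    · intro h
      exact ⟨Matrix.mulVec_injective_iff_isUnit.2 h, Matrix.mulVec_surjective_iff_isUnit.2 h⟩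
  have hdet : C = 0 → F.det = A.det * D.det := by
    rintro rfl
    rw [hF, Matrix.det_reindex_self, Matrix.det_fromBlocks_zero₁₂]
  have hadj : IsUnit A.det → A.det • (A⁻¹)ᵀ = (A.adjugate)ᵀ := by
    intro h
    rw [Matrix.inv_def, Matrix.transpose_smul, smul_smul, Ring.mul_inverse_cancel _ h, one_smul]
  rw [hb]
  constructor
  · rintro ⟨hu, hC, hD⟩
    rw [hdet hC] at hu
    have hA := isUnit_of_mul_isUnit_left hu
    exact ⟨hC, hA, by rw [hadj hA, hD]⟩
  · rintro ⟨hC, hA, hD⟩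
    rw [hadj hA] at hD
    refine ⟨?_, hC, hD⟩
    rw [hdet hC, hD, Matrix.det_transpose, Matrix.det_adjugate]
    exact hA.mul (hA.pow _)
end
end

section
/- Let S be a real symmetric 3×3 matrix all of whose eigenvalues are positive. Then there exists a real 3×3 matrix A with det A > 0 and Aᵀ·E₂₁·A = E₂₁ such that Aᵀ·S·A is a diagonal matrix with strictly positive diagonal entries. -/
open Matrix

noncomputable section

/-- `E₂₁ = diag(1,1,−1)`. -/
def E21 : Matrix (Fin 3) (Fin 3) ℝ := Matrix.diagonal ![1, 1, -1]

lemma spec_aux (M : Matrix (Fin 3) (Fin 3) ℝ) (h : M.IsSymm) :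
    ∃ (U : Matrix (Fin 3) (Fin 3) ℝ) (d : Fin 3 → ℝ), Uᵀ * U = 1 ∧ Uᵀ * M * U = diagonal d := by
  have hH : M.IsHermitian := by
    rw [Matrix.IsHermitian, Matrix.conjTranspose_eq_transpose_of_trivial]; exact h
  have hU : (hH.eigenvectorUnitary : Matrix (Fin 3) (Fin 3) ℝ)ᵀ * hH.eigenvectorUnitary = 1 := by
    have := (Matrix.mem_unitaryGroup_iff').1 hH.eigenvectorUnitary.2
    rwa [Matrix.star_eq_conjTranspose, Matrix.conjTranspose_eq_transpose_of_trivial] at this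
  refine ⟨hH.eigenvectorUnitary, hH.eigenvalues, hU, ?_⟩
  have hs := hH.spectral_theorem
  rw [Unitary.conjStarAlgAut_apply, Matrix.star_eq_conjTranspose,
    Matrix.conjTranspose_eq_transpose_of_trivial] at hs
  generalize (hH.eigenvectorUnitary : Matrix (Fin 3) (Fin 3) ℝ) = U at *
  have hd : (RCLike.ofReal ∘ hH.eigenvalues : Fin 3 → ℝ) = hH.eigenvalues := by
    ext i; simp
  rw [hd] at hs
  generalize hH.eigenvalues = d at *
  rw [hs]
  calc Uᵀ * (U * diagonal d * Uᵀ) * U = (Uᵀ * U) * diagonal d * (Uᵀ * U) := by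
        simp only [Matrix.mul_assoc]
    _ = _ := by rw [hU]; simp

lemma key_aux (P S : Matrix (Fin 3) (Fin 3) ℝ) (l : Fin 3 → ℝ)
    (hS : Pᵀ * S * P = 1) (hE : Pᵀ * E21 * P = diagonal l)
    (h0 : 0 < l 0) (h1 : 0 < l 1) (h2 : l 2 < 0) :
    ∃ A : Matrix (Fin 3) (Fin 3) ℝ, 0 < A.det ∧ Aᵀ * E21 * A = E21 ∧
      ∃ d : Fin 3 → ℝ, (∀ i, 0 < d i) ∧ Aᵀ * S * A = Matrix.diagonal d := by
  have hl : ∀ i, 0 < |l i| := by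
    intro i; apply abs_pos.2; fin_cases i
    exacts [h0.ne', h1.ne', h2.ne]
  set c : Fin 3 → ℝ := fun i => (√|l i|)⁻¹ with hc
  have hcpos : ∀ i, 0 < c i := fun i => inv_pos.2 (Real.sqrt_pos.2 (hl i))
  have hc2 : ∀ i, c i * c i = |l i|⁻¹ := by
    intro i
    rw [hc]; simp only
    rw [← mul_inv, Real.mul_self_sqrt (hl i).le]
  have hA : (P * diagonal c)ᵀ * E21 * (P * diagonal c) = E21 := by
    calc _ = diagonal c * (Pᵀ * E21 * P) * diagonal c := by
          simp only [Matrix.mul_assoc, Matrix.transpose_mul, Matrix.diagonal_transpose]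
      _ = _ := by
        rw [hE, Matrix.diagonal_mul_diagonal, Matrix.diagonal_mul_diagonal, E21]
        congr 1
        ext i
        rw [mul_right_comm, hc2]
        fin_cases i
        · simp [abs_of_pos h0, h0.ne']
        · simp [abs_of_pos h1, h1.ne']
        · simp [abs_of_neg h2, h2.ne, inv_neg]
  have hB : (P * diagonal c)ᵀ * S * (P * diagonal c) = diagonal (fun i => c i * c i) := by
    calc _ = diagonal c * (Pᵀ * S * P) * diagonal c := by
          simp only [Matrix.mul_assoc, Matrix.transpose_mul, Matrix.diagonal_transpose]
      _ = _ := by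
        rw [hS, Matrix.mul_one, Matrix.diagonal_mul_diagonal]
  generalize P * diagonal c = A at *
  have hdet : A.det ≠ 0 := by
    intro h
    have := congrArg Matrix.det hA
    simp [h, E21, Matrix.det_diagonal, Fin.prod_univ_three] at this
  rcases hdet.lt_or_gt with h | h
  · refine ⟨-A, ?_, ?_, _, fun i => mul_pos (hcpos i) (hcpos i), ?_⟩
    · rw [Matrix.det_neg]; simp; nlinarith
    · simpa using hA
    · simpa using hB
  · exact ⟨A, h, hA, _, fun i => mul_pos (hcpos i) (hcpos i), hB⟩

lemma perm_aux (P S : Matrix (Fin 3) (Fin 3) ℝ) (l : Fin 3 → ℝ) (σ : Equiv.Perm (Fin 3))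
    (hS : Pᵀ * S * P = 1) (hE : Pᵀ * E21 * P = diagonal l)
    (h0 : 0 < l (σ 0)) (h1 : 0 < l (σ 1)) (h2 : l (σ 2) < 0) :
    ∃ A : Matrix (Fin 3) (Fin 3) ℝ, 0 < A.det ∧ Aᵀ * E21 * A = E21 ∧
      ∃ d : Fin 3 → ℝ, (∀ i, 0 < d i) ∧ Aᵀ * S * A = Matrix.diagonal d := by
  have key : ∀ X : Matrix (Fin 3) (Fin 3) ℝ,
      (P.submatrix id σ)ᵀ * X * (P.submatrix id σ) = (Pᵀ * X * P).submatrix σ σ := by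
    intro X; ext i j
    simp [Matrix.mul_apply]
  refine key_aux (P.submatrix id σ) S (l ∘ σ) ?_ ?_ h0 h1 h2
  · rw [key, hS]; simp
  · rw [key, hE, Matrix.submatrix_diagonal_equiv]

theorem stmt_1 (S : Matrix (Fin 3) (Fin 3) ℝ) (hsym : S.IsSymm)
    (hpos : ∀ μ : ℝ, Module.End.HasEigenvalue (Matrix.toLin' S) μ → 0 < μ) :
    ∃ A : Matrix (Fin 3) (Fin 3) ℝ, 0 < A.det ∧ Aᵀ * E21 * A = E21 ∧
      ∃ d : Fin 3 → ℝ, (∀ i, 0 < d i) ∧ Aᵀ * S * A = Matrix.diagonal d := by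
  obtain ⟨U, d, hU, hd⟩ := spec_aux S hsym
  have hU' : U * Uᵀ = 1 := mul_eq_one_comm.1 hU
  have hdpos : ∀ i, 0 < d i := by
    intro i
    apply hpos
    apply Module.End.hasEigenvalue_of_hasEigenvector (x := U *ᵥ Pi.single i 1)
    rw [Module.End.hasEigenvector_iff, Module.End.mem_eigenspace_iff]
    constructor
    · have h1 : S * U = U * diagonal d := by
        rw [← hd, ← Matrix.mul_assoc, ← Matrix.mul_assoc, hU', Matrix.one_mul]
      rw [Matrix.toLin'_apply, Matrix.mulVec_mulVec, h1, ← Matrix.mulVec_mulVec,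
        ← Matrix.mulVec_smul]
      congr 1
      ext j
      simp [Matrix.mulVec_diagonal, Pi.single_apply]
      grind
    · intro h
      have := congrArg (fun v => (Uᵀ *ᵥ v) i) h
      simp only [Matrix.mulVec_mulVec, hU] at this
      simp at this
  set c : Fin 3 → ℝ := fun i => (√(d i))⁻¹ with hc
  have h1 : (U * diagonal c)ᵀ * S * (U * diagonal c) = 1 := by
    calc _ = diagonal c * (Uᵀ * S * U) * diagonal c := by
          simp only [Matrix.mul_assoc, Matrix.transpose_mul, Matrix.diagonal_transpose]
      _ = _ := by
        rw [hd, Matrix.diagonal_mul_diagonal, Matrix.diagonal_mul_diagonal,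
          ← Matrix.diagonal_one]
        congr 1
        ext i
        have := Real.mul_self_sqrt (hdpos i).le
        have h3 := Real.sqrt_pos.2 (hdpos i)
        simp only [hc]
        field_simp
        nlinarith
  generalize U * diagonal c = P0 at *
  obtain ⟨Q, l, hQ, hl⟩ := spec_aux (P0ᵀ * E21 * P0) (by
    simp [Matrix.IsSymm, E21, Matrix.mul_assoc])
  have hS : (P0 * Q)ᵀ * S * (P0 * Q) = 1 := by
    calc _ = Qᵀ * (P0ᵀ * S * P0) * Q := by
          simp only [Matrix.mul_assoc, Matrix.transpose_mul]
      _ = _ := by rw [h1, Matrix.mul_one, hQ]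
  have hE : (P0 * Q)ᵀ * E21 * (P0 * Q) = diagonal l := by
    rw [← hl]; simp only [Matrix.mul_assoc, Matrix.transpose_mul]
  generalize P0 * Q = P at *
  have hdetP : P.det ≠ 0 := by
    intro h
    have := congrArg Matrix.det hS
    simp [h] at this
  have hprod : l 0 * l 1 * l 2 < 0 := by
    have := congrArg Matrix.det hE
    simp [E21, Matrix.det_diagonal, Fin.prod_univ_three] at this
    rw [← this]
    have := mul_self_pos.2 hdetP
    linarith
  have hnot : ¬ (l 0 < 0 ∧ l 1 < 0 ∧ l 2 < 0) := by
    rintro ⟨a, b, c⟩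
    have hinv : P * P⁻¹ = 1 := Matrix.mul_nonsing_inv _ (isUnit_iff_ne_zero.2 hdetP)
    have h : (P⁻¹)ᵀ * diagonal l * P⁻¹ = E21 := by
      rw [← hE]
      calc _ = (P * P⁻¹)ᵀ * E21 * (P * P⁻¹) := by
            simp only [Matrix.mul_assoc, Matrix.transpose_mul]
        _ = _ := by rw [hinv]; simp
    have := congrFun (congrFun h 0) 0
    generalize P⁻¹ = R at *
    simp [Matrix.mul_apply, Fin.sum_univ_three, E21, Matrix.diagonal_apply] at this
    nlinarith [mul_nonneg (neg_pos.2 a).le (mul_self_nonneg (R 0 0)),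
      mul_nonneg (neg_pos.2 b).le (mul_self_nonneg (R 1 0)),
      mul_nonneg (neg_pos.2 c).le (mul_self_nonneg (R 2 0))]
  have n0 : l 0 ≠ 0 := by rintro h; simp [h] at hprod
  have n1 : l 1 ≠ 0 := by rintro h; simp [h] at hprod
  have n2 : l 2 ≠ 0 := by rintro h; simp [h] at hprod
  rcases n0.lt_or_gt with a | a <;> rcases n1.lt_or_gt with b | b <;>
    rcases n2.lt_or_gt with c | c
  · exact absurd ⟨a, b, c⟩ hnot
  · exact absurd hprod (mul_pos (mul_pos_of_neg_of_neg a b) c).le.not_gt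
  · exact absurd hprod (mul_pos_of_neg_of_neg (mul_neg_of_neg_of_pos a b) c).le.not_gt
  · exact perm_aux P S l (Equiv.swap 0 2) hS hE (by simpa using c)
      (by rw [Equiv.swap_apply_of_ne_of_ne (by decide) (by decide)]; exact b) (by simpa using a)
  · exact absurd hprod (mul_pos_of_neg_of_neg (mul_neg_of_pos_of_neg a b) c).le.not_gt
  · exact perm_aux P S l (Equiv.swap 1 2) hS hE
      (by rw [Equiv.swap_apply_of_ne_of_ne (by decide) (by decide)]; exact a)
      (by simpa using c) (by simpa using b)
  · exact perm_aux P S l 1 hS hE a b c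
  · exact absurd hprod (mul_pos (mul_pos a b) c).le.not_gt
end
end

section
/- Let S be a real symmetric 3×3 matrix of signature (2,1), and suppose the (in general non-symmetric) matrix E₂₁·S is diagonalizable over ℝ. Then there exists a real 3×3 matrix A with Aᵀ·E₂₁·A = E₂₁ such that Aᵀ·S·A = diag(λ₁,λ₂,λ₃), where exactly two of λ₁,λ₂,λ₃ are positive and one is negative. -/
open Matrix

noncomputable section

theorem aux_sign (R : Matrix (Fin 3) (Fin 3) ℝ) (hR : IsUnit R.det) (g : Fin 3 → ℝ)
    (h : Rᵀ * E21 * R = Matrix.diagonal g) : ∃ i : Fin 3, g i < 0 ∧ ∀ j, j ≠ i → 0 < g j := by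
  have hdet : g 0 * g 1 * g 2 < 0 := by
    have h1 := congrArg Matrix.det h
    rw [det_mul, det_mul, det_transpose, E21, det_diagonal, det_diagonal, Fin.prod_univ_three,
      Fin.prod_univ_three] at h1
    simp at h1
    have h2 : 0 < R.det ^ 2 := by
      have := hR.ne_zero
      positivity
    nlinarith
  have hE : E21 = (R⁻¹)ᵀ * Matrix.diagonal g * R⁻¹ := by
    rw [← h]
    have h1 : (R⁻¹)ᵀ * Rᵀ = 1 := by
      rw [← transpose_mul, mul_nonsing_inv _ hR, transpose_one]
    calc E21 = ((R⁻¹)ᵀ * Rᵀ) * E21 * (R * R⁻¹) := by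
          rw [h1, mul_nonsing_inv _ hR, one_mul, mul_one]
      _ = _ := by simp only [Matrix.mul_assoc]
  have h00 := congrFun (congrFun hE 0) 0
  rw [mul_apply] at h00
  simp only [mul_diagonal, transpose_apply, Fin.sum_univ_three] at h00
  simp [E21] at h00
  have hneg : ¬ (g 0 < 0 ∧ g 1 < 0 ∧ g 2 < 0) := by
    rintro ⟨a, b, c⟩
    nlinarith [mul_nonneg (neg_nonneg.2 a.le) (sq_nonneg (R⁻¹ 0 0)),
      mul_nonneg (neg_nonneg.2 b.le) (sq_nonneg (R⁻¹ 1 0)),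
      mul_nonneg (neg_nonneg.2 c.le) (sq_nonneg (R⁻¹ 2 0))]
  have n0 : g 0 ≠ 0 := by intro h; simp [h] at hdet
  have n1 : g 1 ≠ 0 := by intro h; simp [h] at hdet
  have n2 : g 2 ≠ 0 := by intro h; simp [h] at hdet
  rcases lt_or_gt_of_ne n0 with a | a <;> rcases lt_or_gt_of_ne n1 with b | b <;>
    rcases lt_or_gt_of_ne n2 with c | c
  · exact absurd ⟨a, b, c⟩ hneg
  · have := mul_pos (mul_pos_of_neg_of_neg a b) c; linarith
  · have := mul_pos_of_neg_of_neg (mul_neg_of_neg_of_pos a b) c; linarith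
  · exact ⟨0, a, fun j hj => by fin_cases j <;> simp_all⟩
  · have := mul_pos_of_neg_of_neg (mul_neg_of_pos_of_neg a b) c; linarith
  · exact ⟨1, b, fun j hj => by fin_cases j <;> simp_all⟩
  · exact ⟨2, c, fun j hj => by fin_cases j <;> simp_all⟩
  · have := mul_pos (mul_pos a b) c; linarith

theorem aux_spec {n : Type*} [Fintype n] [DecidableEq n] (G : Matrix n n ℝ) (hG : G.IsSymm) :
    ∃ U : Matrix n n ℝ, Uᵀ * U = 1 ∧ ∃ g : n → ℝ, Uᵀ * G * U = Matrix.diagonal g := by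
  have hH : G.IsHermitian := by
    rw [Matrix.IsHermitian, conjTranspose_eq_transpose_of_trivial]; exact hG
  have h1 : (hH.eigenvectorUnitary : Matrix n n ℝ)ᵀ * (hH.eigenvectorUnitary : Matrix n n ℝ) = 1 := by
    have := Unitary.coe_star_mul_self hH.eigenvectorUnitary
    rwa [star_eq_conjTranspose, conjTranspose_eq_transpose_of_trivial] at this
  refine ⟨hH.eigenvectorUnitary, h1, hH.eigenvalues, ?_⟩
  have := hH.spectral_theorem
  rw [Unitary.conjStarAlgAut_apply] at this
  rw [star_eq_conjTranspose, conjTranspose_eq_transpose_of_trivial] at this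
  set V := (hH.eigenvectorUnitary : Matrix n n ℝ)
  calc Vᵀ * G * V = (Vᵀ * V) * Matrix.diagonal (RCLike.ofReal ∘ hH.eigenvalues) * (Vᵀ * V) := by
        conv_lhs => rw [this]
        simp only [Matrix.mul_assoc]
    _ = _ := by rw [h1, one_mul, mul_one]; rfl

theorem aux_simul (G : Matrix (Fin 3) (Fin 3) ℝ) (hG : G.IsSymm) (d : Fin 3 → ℝ)
    (hc : ∀ i j, d i ≠ d j → G i j = 0) :
    ∃ U : Matrix (Fin 3) (Fin 3) ℝ, Uᵀ * U = 1 ∧ Matrix.diagonal d * U = U * Matrix.diagonal d ∧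
      ∃ g : Fin 3 → ℝ, Uᵀ * G * U = Matrix.diagonal g := by
  classical
  let B : ∀ v : Set.range d, Matrix {i // Set.rangeFactorization d i = v}
    {i // Set.rangeFactorization d i = v} ℝ := fun v => G.submatrix Subtype.val Subtype.val
  have hB : ∀ v, (B v).IsSymm := fun v => hG.submatrix _
  choose V hV g hg using fun v => aux_spec (B v) (hB v)
  let e := Equiv.sigmaFiberEquiv (Set.rangeFactorization d)
  let V' := blockDiagonal' V
  have hV' : V'ᵀ * V' = 1 := by
    simp only [V']
    rw [blockDiagonal'_transpose, ← blockDiagonal'_mul]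
    simp only [hV]
    exact blockDiagonal'_one
  have hGB : G.submatrix e e = blockDiagonal' B := by
    ext ⟨v, i⟩ ⟨w, j⟩
    by_cases hvw : v = w
    · subst hvw
      rw [blockDiagonal'_apply_eq]
      rfl
    · rw [blockDiagonal'_apply_ne _ _ _ hvw]
      apply hc
      intro h
      apply hvw
      rw [← i.2, ← j.2]
      exact Subtype.ext h
  have hV'G : V'ᵀ * G.submatrix e e * V' = Matrix.diagonal (fun ik => g ik.1 ik.2) := by
    rw [hGB]
    simp only [V']
    rw [blockDiagonal'_transpose, ← blockDiagonal'_mul, ← blockDiagonal'_mul]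
    simp only [hg]
    exact blockDiagonal'_diagonal _
  have hGe : G = (G.submatrix e e).submatrix e.symm e.symm := by simp
  refine ⟨V'.submatrix e.symm e.symm, ?_, ?_, fun i => g (e.symm i).1 (e.symm i).2, ?_⟩
  · rw [transpose_submatrix, submatrix_mul_equiv, hV', submatrix_one_equiv]
  · ext i j
    rw [diagonal_mul, mul_diagonal]
    by_cases h : d i = d j
    · rw [h, mul_comm]
    · have : V'.submatrix e.symm e.symm i j = 0 := by
        rw [submatrix_apply]
        apply blockDiagonal'_apply_ne
        intro h'
        exact h (congrArg Subtype.val h')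
      rw [this]; simp
  · conv_lhs => rw [hGe]
    rw [transpose_submatrix, submatrix_mul_equiv, submatrix_mul_equiv, hV'G,
      submatrix_diagonal_equiv]
    rfl

/-- A real symmetric `3×3` matrix `S` of signature `(2,1)` (i.e. congruent to `E₂₁`)
such that `E₂₁·S` is diagonalizable over `ℝ` can be diagonalized by an element of
`O(2,1)`, with exactly two positive and one negative diagonal entry. -/
theorem stmt_2 (S : Matrix (Fin 3) (Fin 3) ℝ) (hsym : S.IsSymm)
    (hsig : ∃ Q : Matrix (Fin 3) (Fin 3) ℝ, IsUnit Q.det ∧ Qᵀ * S * Q = E21)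
    (hdiag : ∃ P : Matrix (Fin 3) (Fin 3) ℝ, IsUnit P.det ∧
      ∃ d : Fin 3 → ℝ, P⁻¹ * (E21 * S) * P = Matrix.diagonal d) :
    ∃ A : Matrix (Fin 3) (Fin 3) ℝ, Aᵀ * E21 * A = E21 ∧
      ∃ lam : Fin 3 → ℝ, Aᵀ * S * A = Matrix.diagonal lam ∧
        ∃ i : Fin 3, lam i < 0 ∧ ∀ j, j ≠ i → 0 < lam j := by
  obtain ⟨Q, hQ, hQS⟩ := hsig
  obtain ⟨P, hP, d, hPd⟩ := hdiag
  have hEE : E21 * E21 = 1 := by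
    rw [E21, diagonal_mul_diagonal, ← diagonal_one]
    congr 1; ext i; fin_cases i <;> simp
  have hET : E21ᵀ = E21 := by rw [E21, diagonal_transpose]
  have hESP : E21 * S * P = P * Matrix.diagonal d := by
    rw [← hPd, Matrix.mul_assoc P⁻¹, mul_nonsing_inv_cancel_left _ _ hP]
  have hSP : S * P = E21 * (P * Matrix.diagonal d) := by
    rw [← hESP, Matrix.mul_assoc, ← Matrix.mul_assoc E21, hEE, one_mul]
  have hG : (Pᵀ * E21 * P).IsSymm := by
    rw [Matrix.IsSymm]; simp [Matrix.transpose_mul, hET, Matrix.mul_assoc]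
  have hPSP : Pᵀ * S * P = (Pᵀ * E21 * P) * Matrix.diagonal d := by
    rw [Matrix.mul_assoc, hSP]; simp only [Matrix.mul_assoc]
  have hGD : ((Pᵀ * E21 * P) * Matrix.diagonal d).IsSymm := by
    rw [← hPSP, Matrix.IsSymm]; simp [Matrix.transpose_mul, hsym.eq, Matrix.mul_assoc]
  obtain ⟨U, hU, hUd, g, hg⟩ := aux_simul _ hG d (by
    intro i j hij
    have h1 := hGD.apply i j
    rw [mul_diagonal, mul_diagonal, hG.apply i j] at h1
    have h2 : (d i - d j) * (Pᵀ * E21 * P) i j = 0 := by linarith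
    exact (mul_eq_zero.1 h2).resolve_left (sub_ne_zero.2 hij))
  have hUdet : IsUnit U.det := isUnit_det_of_left_inverse hU
  have hR : IsUnit (P * U).det := by rw [det_mul]; exact hP.mul hUdet
  have hRE : (P * U)ᵀ * E21 * (P * U) = Matrix.diagonal g := by
    rw [← hg, transpose_mul]; simp only [Matrix.mul_assoc]
  have hRS : (P * U)ᵀ * S * (P * U) = Matrix.diagonal (fun i => g i * d i) := by
    rw [← diagonal_mul_diagonal, ← hg]
    calc (P * U)ᵀ * S * (P * U) = Uᵀ * (Pᵀ * S * P) * U := by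
          rw [transpose_mul]; simp only [Matrix.mul_assoc]
      _ = Uᵀ * (Pᵀ * E21 * P) * (Matrix.diagonal d * U) := by
          rw [hPSP]; simp only [Matrix.mul_assoc]
      _ = _ := by rw [hUd]; simp only [Matrix.mul_assoc]
  generalize P * U = R at hR hRE hRS
  obtain ⟨i, hi, hi'⟩ := aux_sign R hR g hRE
  have hSQ : S = (Q⁻¹)ᵀ * E21 * Q⁻¹ := by
    have h1 : (Q⁻¹)ᵀ * Qᵀ = 1 := by
      rw [← transpose_mul, mul_nonsing_inv _ hQ, transpose_one]
    rw [← hQS]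
    calc S = ((Q⁻¹)ᵀ * Qᵀ) * S * (Q * Q⁻¹) := by
          rw [h1, mul_nonsing_inv _ hQ, one_mul, mul_one]
      _ = _ := by simp only [Matrix.mul_assoc]
  obtain ⟨k, hk, hk'⟩ := aux_sign (Q⁻¹ * R)
    (by rw [det_mul]; exact (isUnit_nonsing_inv_det _ hQ).mul hR) (fun i => g i * d i) (by
      rw [← hRS, transpose_mul]
      conv_rhs => rw [hSQ]
      simp only [Matrix.mul_assoc])
  have gne : ∀ j, g j ≠ 0 := fun j => by
    by_cases h : j = i
    · rw [h]; exact hi.ne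
    · exact (hi' j h).ne'
  let p : Equiv.Perm (Fin 3) := Equiv.swap i 2
  let s : Fin 3 → ℝ := fun j => (Real.sqrt |g (p j)|)⁻¹
  have hs : ∀ j, s j * s j = |g (p j)|⁻¹ := fun j => by
    simp only [s]
    rw [← mul_inv, Real.mul_self_sqrt (abs_nonneg _)]
  have key : ∀ (M : Matrix (Fin 3) (Fin 3) ℝ) (m : Fin 3 → ℝ), Rᵀ * M * R = Matrix.diagonal m →
      (R.submatrix id p * Matrix.diagonal s)ᵀ * M * (R.submatrix id p * Matrix.diagonal s) =
        Matrix.diagonal (fun j => m (p j) * |g (p j)|⁻¹) := by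
    intro M m hM
    have h1 : (R.submatrix id p)ᵀ * M * R.submatrix id p = Matrix.diagonal (m ∘ p) := by
      rw [← submatrix_diagonal_equiv, ← hM]
      rfl
    calc _ = Matrix.diagonal s * ((R.submatrix id p)ᵀ * M * R.submatrix id p) *
          Matrix.diagonal s := by
          rw [transpose_mul, diagonal_transpose]; simp only [Matrix.mul_assoc]
      _ = _ := by
          rw [h1, diagonal_mul_diagonal, diagonal_mul_diagonal]
          congr 1; ext j
          rw [← hs]; simp only [Function.comp]; ring
  refine ⟨R.submatrix id p * Matrix.diagonal s, ?_, _, key S _ hRS, p.symm k, ?_, ?_⟩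
  · rw [key E21 g hRE, E21]
    congr 1; ext j
    by_cases hj : j = 2
    · subst hj
      have : p 2 = i := Equiv.swap_apply_right _ _
      rw [this, abs_of_neg hi]
      have := hi.ne
      simp; field_simp
    · have h1 : p j ≠ i := by
        intro h; apply hj
        have : p 2 = i := Equiv.swap_apply_right _ _
        exact p.injective (h.trans this.symm)
      have h2 := hi' _ h1
      rw [abs_of_pos h2, mul_inv_cancel₀ h2.ne']
      fin_cases j <;> simp_all
  · simp only [Equiv.apply_symm_apply]
    exact mul_neg_of_neg_of_pos hk (inv_pos.2 (abs_pos.2 (gne _)))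
  · intro j hj
    refine mul_pos (hk' (p j) ?_) (inv_pos.2 (abs_pos.2 (gne _)))
    intro h
    exact hj (by rw [← h]; simp)
end
end

section
/- An invertible real 3×3 matrix M satisfies Mᵀ·E₂₀·M = E₂₀ if and only if M has the form [[λ, a, b],[0, cos φ, ∓sin φ],[0, sin φ, ±cos φ]] for some λ ≠ 0, a, b, φ ∈ ℝ; equivalently, if and only if the entries M₂₁ and M₃₁ vanish, M₁₁ ≠ 0, and the lower-right 2×2 block of M is an orthogonal matrix. -/
open Matrix

noncomputable section

/-- `E₂₀ = diag(0,1,1)`. -/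
def E20 : Matrix (Fin 3) (Fin 3) ℝ := Matrix.diagonal ![0, 1, 1]

theorem key_A (M : Matrix (Fin 3) (Fin 3) ℝ) : Mᵀ * E20 * M = E20 ↔
    (M 1 0 = 0 ∧ M 2 0 = 0 ∧ M 1 1 ^ 2 + M 2 1 ^ 2 = 1 ∧ M 1 2 ^ 2 + M 2 2 ^ 2 = 1 ∧
      M 1 1 * M 1 2 + M 2 1 * M 2 2 = 0) := by
  have e : ∀ i j, (Mᵀ * E20 * M) i j = M 1 i * M 1 j + M 2 i * M 2 j := by
    intro i j
    simp [E20, Matrix.mul_apply, Fin.sum_univ_three, Matrix.diagonal_apply]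
  constructor
  · intro h
    rw [h] at e
    have h00 := e 0 0
    have h11 := e 1 1
    have h22 := e 2 2
    have h12 := e 1 2
    simp [E20, Matrix.diagonal_apply] at h00 h11 h22 h12
    refine ⟨by nlinarith, by nlinarith, by nlinarith, by nlinarith, by linarith⟩
  · rintro ⟨h1, h2, h3, h4, h5⟩
    ext i j
    rw [e]
    fin_cases i <;> fin_cases j <;> simp [E20, Matrix.diagonal_apply, h1, h2] <;> linarith

theorem key_B (p r q s : ℝ) : (!![p, r; q, s])ᵀ * !![p, r; q, s] = 1 ↔
    (p ^ 2 + q ^ 2 = 1 ∧ r ^ 2 + s ^ 2 = 1 ∧ p * r + q * s = 0) := by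
  rw [← Matrix.ext_iff]
  simp [Fin.forall_fin_two, Matrix.mul_apply, Fin.sum_univ_two]
  constructor
  · rintro ⟨⟨h1, h2⟩, h3, h4⟩
    exact ⟨by linarith, by linarith, by linarith⟩
  · rintro ⟨h1, h2, h3⟩
    exact ⟨⟨by linarith, by linarith⟩, by linarith, by linarith⟩

theorem key_C (p q : ℝ) (h : p ^ 2 + q ^ 2 = 1) : ∃ φ, p = Real.cos φ ∧ q = Real.sin φ := by
  have hn : ‖(⟨p, q⟩ : ℂ)‖ = 1 := by
    rw [Complex.norm_def, Complex.normSq_mk, Real.sqrt_eq_one]; linarith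
  refine ⟨Complex.arg ⟨p, q⟩, ?_, ?_⟩
  · rw [Complex.cos_arg (by intro h0; rw [h0] at hn; simp at hn), hn]; simp
  · rw [Complex.sin_arg, hn]; simp

/-- Characterization of the invertible `3×3` matrices preserving the degenerate quadratic
form `E₂₀ = diag(0,1,1)`: both as matrices `[[λ,a,b],[0,cos φ,∓sin φ],[0,sin φ,±cos φ]]`
and, equivalently, via vanishing of the entries `M₂₁, M₃₁`, `M₁₁ ≠ 0` and orthogonality of
the lower-right `2×2` block. -/
theorem stmt_4 (M : Matrix (Fin 3) (Fin 3) ℝ) (hM : IsUnit M.det) :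
    (Mᵀ * E20 * M = E20 ↔
      ∃ lam a b φ : ℝ, lam ≠ 0 ∧
        (M = !![lam, a, b; 0, Real.cos φ, -Real.sin φ; 0, Real.sin φ, Real.cos φ] ∨
         M = !![lam, a, b; 0, Real.cos φ, Real.sin φ; 0, Real.sin φ, -Real.cos φ])) ∧
    (Mᵀ * E20 * M = E20 ↔
      (M 1 0 = 0 ∧ M 2 0 = 0 ∧ M 0 0 ≠ 0 ∧
        (!![M 1 1, M 1 2; M 2 1, M 2 2])ᵀ * !![M 1 1, M 1 2; M 2 1, M 2 2] = 1)) := by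
  have h00 : M 1 0 = 0 → M 2 0 = 0 → M 0 0 ≠ 0 := by
    intro h1 h2 h0
    apply hM.ne_zero
    rw [Matrix.det_fin_three, h0, h1, h2]; ring
  rw [key_A, key_B]
  refine ⟨⟨?_, ?_⟩, ?_⟩
  · rintro ⟨h1, h2, h3, h4, h5⟩
    obtain ⟨φ, hc, hs⟩ := key_C _ _ h3
    refine ⟨M 0 0, M 0 1, M 0 2, φ, h00 h1 h2, ?_⟩
    rw [← hc, ← hs]
    set d := M 1 1 * M 2 2 - M 2 1 * M 1 2 with hd
    have hr : M 1 2 = - M 2 1 * d := by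
      rw [hd]; linear_combination (-M 1 2) * h3 + M 1 1 * h5
    have hs' : M 2 2 = M 1 1 * d := by
      rw [hd]; linear_combination (-M 2 2) * h3 + M 2 1 * h5
    have hdd : (d - 1) * (d + 1) = 0 := by
      rw [hr, hs'] at h4
      linear_combination h4 - d ^ 2 * h3
    rcases mul_eq_zero.mp hdd with h | h
    · left
      have h' : d = 1 := by linarith
      rw [h'] at hr hs'
      ext i j
      fin_cases i <;> fin_cases j <;> simp [h1, h2] <;> linarith
    · right
      have h' : d = -1 := by linarith
      rw [h'] at hr hs'
      ext i j
      fin_cases i <;> fin_cases j <;> simp [h1, h2] <;> linarith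
  · rintro ⟨l, a, b, φ, hl, h | h⟩ <;> subst h <;> simp <;> ring
  · constructor
    · rintro ⟨h1, h2, h⟩
      exact ⟨h1, h2, h00 h1 h2, h⟩
    · rintro ⟨h1, h2, _, h⟩
      exact ⟨h1, h2, h⟩
end
end

section
/- Let ⟨·,·⟩ be a nondegenerate symmetric bilinear form on T*𝔥₃ whose restriction to the derived algebra 𝔤′ = span(e₄,e₅,e₆) is positive definite (respectively negative definite). Then there exists a Lie algebra automorphism F of T*𝔥₃ and nonzero reals λ₁ ≥ λ₂ ≥ λ₃ such that the matrix of the form (x,y) ↦ ⟨Fx, Fy⟩ in the basis (e₁,…,e₆) is diag(λ₁,λ₂,λ₃,1,1,1) (respectively diag(λ₁,λ₂,λ₃,−1,−1,−1)). -/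
open Matrix

noncomputable section

/-- The derived algebra `𝔤′ = span(e₄,e₅,e₆)` of `T*𝔥₃`. -/
def gder : Submodule ℝ (Fin 6 → ℝ) :=
  Submodule.span ℝ {Pi.single 3 1, Pi.single 4 1, Pi.single 5 1}

/-- `F` is a Lie algebra automorphism of `T*𝔥₃` (as a matrix in the basis `e`). -/
def IsAuto (F : Matrix (Fin 6) (Fin 6) ℝ) : Prop :=
  Function.Bijective F.mulVec ∧
    ∀ x y : Fin 6 → ℝ, F.mulVec (bra x y) = bra (F.mulVec x) (F.mulVec y)


lemma diag_sorted (T : Matrix (Fin 3) (Fin 3) ℝ) (hT : Tᵀ = T) :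
    ∃ (O : Matrix (Fin 3) (Fin 3) ℝ) (l : Fin 3 → ℝ), Oᵀ * O = 1 ∧
      Oᵀ * T * O = diagonal l ∧ l 0 ≥ l 1 ∧ l 1 ≥ l 2 := by
  have hH : T.IsHermitian := by
    rw [Matrix.IsHermitian, conjTranspose_eq_transpose_of_trivial, hT]
  let U : Matrix (Fin 3) (Fin 3) ℝ := hH.eigenvectorUnitary
  have hU : Uᵀ * U = 1 := by
    have := Unitary.coe_star_mul_self hH.eigenvectorUnitary
    rwa [star_eq_conjTranspose, conjTranspose_eq_transpose_of_trivial] at this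
  have hD : Uᵀ * T * U = diagonal hH.eigenvalues := by
    have := hH.conjStarAlgAut_star_eigenvectorUnitary
    rw [Unitary.conjStarAlgAut_star_apply, star_eq_conjTranspose,
      conjTranspose_eq_transpose_of_trivial] at this
    exact this
  let f : Fin 3 → ℝ := fun i => - hH.eigenvalues i
  let σ := Tuple.sort f
  have hs := Tuple.monotone_sort f
  refine ⟨U.submatrix id σ, hH.eigenvalues ∘ σ, ?_, ?_, ?_, ?_⟩
  · have : (U.submatrix id σ)ᵀ * U.submatrix id σ = (Uᵀ * U).submatrix σ σ := by
      ext i j; simp [Matrix.mul_apply]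
    rw [this, hU]; simp
  · have : (U.submatrix id σ)ᵀ * T * U.submatrix id σ = (Uᵀ * T * U).submatrix σ σ := by
      ext i j; simp [Matrix.mul_apply]
    rw [this, hD]; simp
  · have := hs (show (0 : Fin 3) ≤ 1 by decide)
    simpa [f] using this
  · have := hs (show (1 : Fin 3) ≤ 2 by decide)
    simpa [f] using this

lemma three (R S : Matrix (Fin 3) (Fin 3) ℝ) (hR : R.PosDef) (hS : Sᵀ = S) :
    ∃ (A : Matrix (Fin 3) (Fin 3) ℝ) (l : Fin 3 → ℝ), A.det ≠ 0 ∧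
      A.adjugate * R * A.adjugateᵀ = 1 ∧
      Aᵀ * S * A = diagonal l ∧ l 0 ≥ l 1 ∧ l 1 ≥ l 2 := by
  obtain ⟨M, hM⟩ : ∃ M : Matrix (Fin 3) (Fin 3) ℝ, R = M * Mᵀ := by
    open scoped MatrixOrder in
    obtain ⟨B, hB⟩ := CStarAlgebra.nonneg_iff_eq_star_mul_self.mp hR.posSemidef.nonneg
    refine ⟨Bᵀ, ?_⟩
    rw [hB, star_eq_conjTranspose, conjTranspose_eq_transpose_of_trivial, transpose_transpose]
  have hdet : 0 < R.det := hR.det_pos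
  have hdM : R.det = M.det ^ 2 := by rw [hM, det_mul, det_transpose, sq]
  let c : ℝ := Real.sqrt (Real.sqrt (R.det)⁻¹)
  have hc : c ^ 4 * R.det = 1 := by
    have h1 : c ^ 2 = Real.sqrt (R.det)⁻¹ := Real.sq_sqrt (Real.sqrt_nonneg _)
    have h2 : Real.sqrt (R.det)⁻¹ ^ 2 = (R.det)⁻¹ := Real.sq_sqrt (by positivity)
    rw [show c ^ 4 = (c ^ 2) ^ 2 by ring, h1, h2, inv_mul_cancel₀ hdet.ne']
  have hc0 : c ≠ 0 := by
    intro h; simp [h] at hc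
  have hM0 : M.det ≠ 0 := by
    intro h; simp [h] at hdM; exact hdet.ne' hdM
  obtain ⟨O, l, hO, hD, h01, h12⟩ := diag_sorted ((c • M)ᵀ * S * (c • M)) (by
    simp only [transpose_mul, transpose_transpose, hS, Matrix.mul_assoc])
  have hOd : O.det ≠ 0 := by
    intro h
    have := congrArg Matrix.det hO
    simp [h] at this
  have hO' : O.adjugate * O.adjugateᵀ = 1 := by
    rw [adjugate_transpose, ← adjugate_mul_distrib, hO, adjugate_one]
  refine ⟨c • M * O, l, ?_, ?_, ?_, h01, h12⟩
  · rw [det_mul, det_smul]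
    exact mul_ne_zero (mul_ne_zero (pow_ne_zero _ hc0) hM0) hOd
  · have hN : (c • M * O).adjugate * M = (c ^ 2 * M.det) • O.adjugate := by
      rw [adjugate_mul_distrib, adjugate_smul, Matrix.mul_assoc, Matrix.smul_mul, adjugate_mul]
      simp [smul_smul]
    have : (c • M * O).adjugate * R * (c • M * O).adjugateᵀ =
        ((c • M * O).adjugate * M) * ((c • M * O).adjugate * M)ᵀ := by
      rw [hM, transpose_mul]; simp only [Matrix.mul_assoc]
    rw [this, hN, transpose_smul, Matrix.smul_mul, Matrix.mul_smul, hO', smul_smul]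
    have : c ^ 2 * M.det * (c ^ 2 * M.det) = 1 := by rw [← hc, hdM]; ring
    rw [this, one_smul]
  · rw [← hD, transpose_mul]; simp only [Matrix.mul_assoc]

/-- block matrix of an automorphism -/
def bF (A B : Matrix (Fin 3) (Fin 3) ℝ) : Matrix (Fin 6) (Fin 6) ℝ :=
  (fromBlocks A 0 B A.adjugateᵀ).submatrix
    (finSumFinEquiv (m := 3) (n := 3)).symm (finSumFinEquiv (m := 3) (n := 3)).symm

lemma bF_explicit (A B : Matrix (Fin 3) (Fin 3) ℝ) (x : Fin 6 → ℝ) :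
    (bF A B).mulVec x =
     ![A 0 0 * x 0 + A 0 1 * x 1 + A 0 2 * x 2,
       A 1 0 * x 0 + A 1 1 * x 1 + A 1 2 * x 2,
       A 2 0 * x 0 + A 2 1 * x 1 + A 2 2 * x 2,
       B 0 0 * x 0 + B 0 1 * x 1 + B 0 2 * x 2 + A.adjugate 0 0 * x 3 + A.adjugate 1 0 * x 4
        + A.adjugate 2 0 * x 5,
       B 1 0 * x 0 + B 1 1 * x 1 + B 1 2 * x 2 + A.adjugate 0 1 * x 3 + A.adjugate 1 1 * x 4
        + A.adjugate 2 1 * x 5,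
       B 2 0 * x 0 + B 2 1 * x 1 + B 2 2 * x 2 + A.adjugate 0 2 * x 3 + A.adjugate 1 2 * x 4
        + A.adjugate 2 2 * x 5] := by
  have h : ∀ i, (bF A B).mulVec x i = ∑ j : Fin 3 ⊕ Fin 3,
      fromBlocks A 0 B A.adjugateᵀ ((finSumFinEquiv (m := 3) (n := 3)).symm i) j *
        x (finSumFinEquiv (m := 3) (n := 3) j) := by
    intro i
    rw [← (finSumFinEquiv (m := 3) (n := 3)).symm.sum_comp]
    simp [bF, mulVec, dotProduct]
  have e0 : (finSumFinEquiv (m := 3) (n := 3)).symm 0 = Sum.inl 0 := rfl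
  have e1 : (finSumFinEquiv (m := 3) (n := 3)).symm 1 = Sum.inl 1 := rfl
  have e2 : (finSumFinEquiv (m := 3) (n := 3)).symm 2 = Sum.inl 2 := rfl
  have e3 : (finSumFinEquiv (m := 3) (n := 3)).symm 3 = Sum.inr 0 := rfl
  have e4 : (finSumFinEquiv (m := 3) (n := 3)).symm 4 = Sum.inr 1 := rfl
  have e5 : (finSumFinEquiv (m := 3) (n := 3)).symm 5 = Sum.inr 2 := rfl
  have f0 : finSumFinEquiv (m := 3) (n := 3) (Sum.inl 0) = 0 := rfl
  have f1 : finSumFinEquiv (m := 3) (n := 3) (Sum.inl 1) = 1 := rfl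
  have f2 : finSumFinEquiv (m := 3) (n := 3) (Sum.inl 2) = 2 := rfl
  have f3 : finSumFinEquiv (m := 3) (n := 3) (Sum.inr 0) = 3 := rfl
  have f4 : finSumFinEquiv (m := 3) (n := 3) (Sum.inr 1) = 4 := rfl
  have f5 : finSumFinEquiv (m := 3) (n := 3) (Sum.inr 2) = 5 := rfl
  ext i
  rw [h, Fintype.sum_sum_type, Fin.sum_univ_three, Fin.sum_univ_three, f0, f1, f2, f3, f4, f5]
  fin_cases i
  · change fromBlocks A 0 B A.adjugateᵀ (Sum.inl 0) _ * _ + _ + _ + _ = _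
    simp [e0]
  · simp [e1]
  · simp [e2]
  · simp [e3]; ring
  · simp [e4]; ring
  · simp [e5]; ring

lemma bF_auto (A B : Matrix (Fin 3) (Fin 3) ℝ) (hA : A.det ≠ 0) : IsAuto (bF A B) := by
  constructor
  · have : IsUnit (bF A B) := by
      rw [Matrix.isUnit_iff_isUnit_det, bF, det_submatrix_equiv_self, det_fromBlocks_zero₁₂,
        det_transpose, det_adjugate]
      exact (mul_ne_zero hA (pow_ne_zero _ hA)).isUnit
    exact ⟨mulVec_injective_iff_isUnit.mpr this, mulVec_surjective_iff_isUnit.mpr this⟩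
  · intro x y
    rw [bF_explicit, bF_explicit, bF_explicit, adjugate_fin_three]
    ext i
    fin_cases i <;> simp [bra] <;> ring

lemma form_eq (g : (Fin 6 → ℝ) →ₗ[ℝ] (Fin 6 → ℝ) →ₗ[ℝ] ℝ) (x y : Fin 6 → ℝ) :
    g x y = ∑ k, ∑ m, x k * (y m * g (Pi.single k 1) (Pi.single m 1)) := by
  have hx : ∀ x : Fin 6 → ℝ, x = ∑ k, x k • (Pi.single k 1 : Fin 6 → ℝ) := by
    intro x; ext i; simp [Finset.sum_apply, Pi.single_apply]
  conv_lhs => rw [hx x, hx y]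
  simp only [map_sum, Finset.mul_sum, map_smul, LinearMap.sum_apply, LinearMap.smul_apply, smul_eq_mul]
  rw [Finset.sum_comm]
  refine Finset.sum_congr rfl fun k _ => Finset.sum_congr rfl fun m _ => ?_
  ring

lemma blockcalc (A B P Q R : Matrix (Fin 3) (Fin 3) ℝ) (C : Matrix (Fin 3) (Fin 3) ℝ)
    (ε : ℝ) (l : Fin 3 → ℝ) (hR : Rᵀ = R) (hB : R * B = -(Qᵀ * A))
    (h1 : Aᵀ * P * A + Aᵀ * Q * B = diagonal l) (h2 : Cᵀ * R * C = ε • 1) :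
    (fromBlocks A 0 B C)ᵀ * fromBlocks P Q Qᵀ R * fromBlocks A 0 B C =
      fromBlocks (diagonal l) 0 0 (ε • 1) := by
  have hB' : Bᵀ * R = -(Aᵀ * Q) := by
    have := congrArg transpose hB
    simpa [transpose_mul, hR] using this
  rw [fromBlocks_transpose, fromBlocks_multiply, fromBlocks_multiply]
  simp only [transpose_zero, Matrix.zero_mul, Matrix.mul_zero, zero_add, add_zero, h2]
  have a : (Aᵀ * Q + Bᵀ * R) = 0 := by rw [hB']; simp
  rw [a]
  congr 1
  · have : Bᵀ * Qᵀ * A = Aᵀ * Q * B := by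
      rw [Matrix.mul_assoc]
      have : Qᵀ * A = -(R * B) := by rw [hB]; simp
      rw [this, Matrix.mul_neg, ← Matrix.mul_assoc, hB']; simp
    rw [← h1, add_mul, this]; simp
  · simp
  · rw [Matrix.mul_assoc, Matrix.mul_assoc, hB]; simp

/-- A nondegenerate symmetric bilinear form on `T*𝔥₃` whose restriction to `𝔤′` is
definite (positive if `ε = 1`, negative if `ε = −1`) can be brought, by an automorphism,
to the diagonal form `diag(λ₁,λ₂,λ₃,ε,ε,ε)` with `λ₁ ≥ λ₂ ≥ λ₃` nonzero. -/
theorem stmt_5 (g : (Fin 6 → ℝ) →ₗ[ℝ] (Fin 6 → ℝ) →ₗ[ℝ] ℝ)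
    (hsym : ∀ x y, g x y = g y x)
    (hnd : ∀ x, (∀ y, g x y = 0) → x = 0)
    (ε : ℝ) (hε : ε = 1 ∨ ε = -1)
    (hdef : ∀ x ∈ gder, x ≠ 0 → 0 < ε * g x x) :
    ∃ F : Matrix (Fin 6) (Fin 6) ℝ, IsAuto F ∧
      ∃ l1 l2 l3 : ℝ, l1 ≠ 0 ∧ l2 ≠ 0 ∧ l3 ≠ 0 ∧ l1 ≥ l2 ∧ l2 ≥ l3 ∧
        (Matrix.of fun i j : Fin 6 =>
            g (F.mulVec (Pi.single i 1)) (F.mulVec (Pi.single j 1))) =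
          Matrix.diagonal ![l1, l2, l3, ε, ε, ε] := by
  let e := finSumFinEquiv (m := 3) (n := 3)
  let G : Matrix (Fin 6) (Fin 6) ℝ := Matrix.of fun i j => g (Pi.single i 1) (Pi.single j 1)
  have hG : Gᵀ = G := by ext i j; exact hsym _ _
  let G' : Matrix (Fin 3 ⊕ Fin 3) (Fin 3 ⊕ Fin 3) ℝ := G.submatrix e e
  let P := G'.toBlocks₁₁
  let Q := G'.toBlocks₁₂
  let R := G'.toBlocks₂₂
  have hP : Pᵀ = P := by ext i j; exact hsym _ _
  have hR : Rᵀ = R := by ext i j; exact hsym _ _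
  have hGb : G' = fromBlocks P Q Qᵀ R := by
    ext i j
    rcases i with i | i <;> rcases j with j | j
    · rfl
    · rfl
    · exact hsym _ _
    · rfl
  have hεε : ε * ε = 1 := by rcases hε with h | h <;> simp [h]
  have hpd : (ε • R).PosDef := by
    refine PosDef.of_dotProduct_mulVec_pos ?_ ?_
    · rw [Matrix.IsHermitian, conjTranspose_eq_transpose_of_trivial, transpose_smul, hR]
    · intro x hx
      let X : Fin 6 → ℝ := x 0 • Pi.single 3 1 + x 1 • Pi.single 4 1 + x 2 • Pi.single 5 1
      have hX : X ∈ gder := by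
        refine add_mem (add_mem ?_ ?_) ?_ <;>
          exact Submodule.smul_mem _ _ (Submodule.subset_span (by simp))
      have hX0 : X ≠ 0 := by
        intro h
        apply hx
        ext i
        fin_cases i
        · simpa [X, Pi.single_apply] using congrFun h 3
        · simpa [X, Pi.single_apply] using congrFun h 4
        · simpa [X, Pi.single_apply] using congrFun h 5
      have := hdef X hX hX0
      suffices hh : star x ⬝ᵥ ((ε • R) *ᵥ x) = ε * g X X by rw [hh]; exact this
      have r : ∀ i j, R i j = g (Pi.single (e (Sum.inr i)) 1) (Pi.single (e (Sum.inr j)) 1) :=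
        fun _ _ => rfl
      have f3 : e (Sum.inr 0) = 3 := rfl
      have f4 : e (Sum.inr 1) = 4 := rfl
      have f5 : e (Sum.inr 2) = 5 := rfl
      simp only [X, dotProduct, mulVec, Fin.sum_univ_three, r, f3, f4, f5, map_add, map_smul,
        LinearMap.add_apply, LinearMap.smul_apply, smul_eq_mul, Matrix.smul_apply, Pi.star_apply,
        star_trivial]
      ring
  have hRu : IsUnit R.det := by
    have := hpd.det_pos.ne'
    rw [det_smul] at this
    exact (right_ne_zero_of_mul this).isUnit
  obtain ⟨A, l, hA, hA1, hA2, h01, h12⟩ := three (ε • R) (P - Q * R⁻¹ * Qᵀ) hpd (by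
    rw [transpose_sub, hP, transpose_mul, transpose_mul, transpose_nonsing_inv, hR,
      transpose_transpose, Matrix.mul_assoc])
  let B := -(R⁻¹ * (Qᵀ * A))
  have hbc := blockcalc A B P Q R A.adjugateᵀ ε l hR
    (by rw [Matrix.mul_neg, Matrix.mul_nonsing_inv_cancel_left _ _ hRu])
    (by rw [← hA2, Matrix.mul_sub, Matrix.sub_mul, Matrix.mul_neg, sub_eq_add_neg]
        simp only [Matrix.mul_assoc])
    (by rw [transpose_transpose, ← hA1, Matrix.mul_smul, Matrix.smul_mul, smul_smul, hεε,
          one_smul])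
  have hauto := bF_auto A B hA
  have key : (Matrix.of fun i j : Fin 6 =>
            g ((bF A B).mulVec (Pi.single i 1)) ((bF A B).mulVec (Pi.single j 1))) =
          Matrix.diagonal ![l 0, l 1, l 2, ε, ε, ε] := by
    have h1 : (Matrix.of fun i j : Fin 6 =>
            g ((bF A B).mulVec (Pi.single i 1)) ((bF A B).mulVec (Pi.single j 1))) =
        (bF A B)ᵀ * G * bF A B := by
      ext i j
      rw [Matrix.of_apply, form_eq]
      simp only [Matrix.mul_apply, Finset.sum_mul, transpose_apply, mulVec_single_one, col_apply, G,
        Matrix.of_apply]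
      rw [Finset.sum_comm]
      refine Finset.sum_congr rfl fun k _ => Finset.sum_congr rfl fun m _ => ?_
      ring
    have h2 : G = G'.submatrix e.symm e.symm := by ext i j; simp [G']
    rw [h1, h2, bF, transpose_submatrix, submatrix_mul_equiv, submatrix_mul_equiv, hGb, hbc]
    ext i j
    fin_cases i <;> fin_cases j <;>
      first
      | rfl
      | exact mul_one ε
      | exact mul_zero ε
  have hne : ∀ i, ![l 0, l 1, l 2, ε, ε, ε] i ≠ 0 := by
    intro i hi
    have h0 : (bF A B).mulVec (Pi.single i 1) = 0 := by
      apply hnd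
      intro y
      obtain ⟨z, rfl⟩ := hauto.1.2 y
      have hz : z = ∑ k, z k • (Pi.single k 1 : Fin 6 → ℝ) := by
        ext i; simp [Finset.sum_apply, Pi.single_apply]
      rw [hz, mulVec_sum, map_sum]
      refine Finset.sum_eq_zero fun k _ => ?_
      rw [mulVec_smul, map_smul]
      have := congrFun (congrFun key i) k
      rw [Matrix.of_apply] at this
      rw [this, diagonal_apply]
      split_ifs <;> simp [hi]
    have := hauto.1.1 (h0.trans (mulVec_zero _).symm)
    simpa using congrFun this i
  exact ⟨bF A B, hauto, l 0, l 1, l 2, hne 0, hne 1, hne 2, h01, h12, key⟩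
end
end

section
/- Let ⟨·,·⟩ be a nondegenerate symmetric bilinear form on T*𝔥₃ whose restriction to 𝔤′ = span(e₄,e₅,e₆) has signature (2,1), and suppose the restriction of ⟨·,·⟩ to the orthogonal complement of 𝔤′ is positive definite or negative definite. Then there exists a Lie algebra automorphism F of T*𝔥₃ and nonzero reals δ₁, δ₂, δ₃ such that the matrix of (x,y) ↦ ⟨Fx, Fy⟩ in the basis (e₁,…,e₆) is diag(ε δ₁², ε δ₂², ε δ₃², 1, 1, −1) for some ε ∈ {+1, −1}. -/
open Matrix

noncomputable section

lemma orth_diag (T : Matrix (Fin 3) (Fin 3) ℝ) (hT : Tᵀ = T) :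
    ∃ (R : Matrix (Fin 3) (Fin 3) ℝ) (d : Fin 3 → ℝ), Rᵀ * R = 1 ∧ Rᵀ * T * R = diagonal d := by
  have hH : T.IsHermitian := by
    rw [Matrix.IsHermitian, conjTranspose_eq_transpose_of_trivial, hT]
  refine ⟨hH.eigenvectorUnitary, hH.eigenvalues, ?_, ?_⟩
  · have := (Matrix.mem_unitaryGroup_iff').1 hH.eigenvectorUnitary.2
    rwa [star_eq_conjTranspose, conjTranspose_eq_transpose_of_trivial] at this
  · have := hH.conjStarAlgAut_star_eigenvectorUnitary
    rw [Unitary.conjStarAlgAut_star_apply, star_eq_conjTranspose,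
      conjTranspose_eq_transpose_of_trivial] at this
    exact this

lemma entry_diag (N W : Matrix (Fin 3) (Fin 3) ℝ) (i : Fin 3) :
    (Wᵀ * N * W) i i = (W.col i) ⬝ᵥ N *ᵥ (W.col i) := by
  simp [Matrix.mul_apply, dotProduct, mulVec, Fin.sum_univ_three]
  ring

lemma exists_P (N : Matrix (Fin 3) (Fin 3) ℝ) (hN : Nᵀ = N)
    (hp : ∀ x : Fin 3 → ℝ, x ≠ 0 → 0 < x ⬝ᵥ N *ᵥ x) :
    ∃ P : Matrix (Fin 3) (Fin 3) ℝ, P.det ≠ 0 ∧ Pᵀ * N * P = 1 := by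
  obtain ⟨R, d, hR, hd⟩ := orth_diag N hN
  have hdetR : R.det ≠ 0 := by
    intro h
    have := congrArg det hR
    simp [h] at this
  have hpos : ∀ i, 0 < d i := by
    intro i
    have h1 := entry_diag N R i
    rw [hd, diagonal_apply_eq] at h1
    rw [h1]
    apply hp
    intro h0
    apply hdetR
    exact det_eq_zero_of_column_eq_zero i (fun j => congrFun h0 j)
  refine ⟨R * diagonal (fun i => (Real.sqrt (d i))⁻¹), ?_, ?_⟩
  · rw [det_mul, det_diagonal]
    refine mul_ne_zero hdetR (Finset.prod_ne_zero_iff.2 fun i _ => ?_)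
    exact inv_ne_zero (Real.sqrt_pos.2 (hpos i)).ne'
  · rw [transpose_mul, diagonal_transpose]
    calc _ = diagonal (fun i => (Real.sqrt (d i))⁻¹) * (Rᵀ * N * R) *
          diagonal (fun i => (Real.sqrt (d i))⁻¹) := by simp only [Matrix.mul_assoc]
      _ = 1 := by
        rw [hd, diagonal_mul_diagonal, diagonal_mul_diagonal, ← diagonal_one]
        congr 1
        ext i
        have := (Real.sqrt_pos.2 (hpos i)).ne'
        have h2 := Real.mul_self_sqrt (hpos i).le
        field_simp
        nlinarith

lemma signs (d : Fin 3 → ℝ) (W : Matrix (Fin 3) (Fin 3) ℝ)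
    (h : Wᵀ * diagonal d * W = E21) :
    ∃ σ : Equiv.Perm (Fin 3), 0 < d (σ 0) ∧ 0 < d (σ 1) ∧ d (σ 2) < 0 := by
  have h1 := congrArg det h
  have h2 := congrFun (congrFun h 0) 0
  simp [E21, det_mul, Fin.prod_univ_three] at h1
  simp [E21, Matrix.mul_apply, Fin.sum_univ_three, diagonal] at h2
  have h3 : d 0 * d 1 * d 2 < 0 := by
    by_contra hc
    push Not at hc
    nlinarith [mul_nonneg (mul_self_nonneg W.det) hc]
  have h4 : 0 < d 0 ∨ 0 < d 1 ∨ 0 < d 2 := by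
    by_contra hc
    push Not at hc
    nlinarith [mul_nonneg (mul_self_nonneg (W 0 0)) (neg_nonneg.2 hc.1),
      mul_nonneg (mul_self_nonneg (W 1 0)) (neg_nonneg.2 hc.2.1),
      mul_nonneg (mul_self_nonneg (W 2 0)) (neg_nonneg.2 hc.2.2)]
  have n0 : d 0 ≠ 0 := by rintro h; simp [h] at h3
  have n1 : d 1 ≠ 0 := by rintro h; simp [h] at h3
  have n2 : d 2 ≠ 0 := by rintro h; simp [h] at h3
  rcases lt_or_gt_of_ne n0 with a | a <;> rcases lt_or_gt_of_ne n1 with b | b <;>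
    rcases lt_or_gt_of_ne n2 with c | c
  · exfalso; rcases h4 with h | h | h <;> linarith
  · exact absurd h3 (by have := mul_pos (mul_pos_of_neg_of_neg a b) c; linarith)
  · exact absurd h3 (by have := mul_pos_of_neg_of_neg (mul_neg_of_neg_of_pos a b) c; linarith)
  · refine ⟨Equiv.swap 0 2, ?_, ?_, ?_⟩
    · simpa using c
    · rw [Equiv.swap_apply_of_ne_of_ne (by decide) (by decide)]; exact b
    · simpa using a
  · exact absurd h3 (by have := mul_pos_of_neg_of_neg (mul_neg_of_pos_of_neg a b) c; linarith)
  · refine ⟨Equiv.swap 1 2, ?_, ?_, ?_⟩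
    · rw [Equiv.swap_apply_of_ne_of_ne (by decide) (by decide)]; exact a
    · simpa using c
    · simpa using b
  · exact ⟨1, a, b, c⟩
  · exact absurd h3 (by have := mul_pos (mul_pos a b) c; linarith)

lemma key (M N Q : Matrix (Fin 3) (Fin 3) ℝ) (hM : Mᵀ = M) (hN : Nᵀ = N)
    (hp : ∀ x : Fin 3 → ℝ, x ≠ 0 → 0 < x ⬝ᵥ N *ᵥ x)
    (hQ : Qᵀ * M * Q = E21) :
    ∃ (A : Matrix (Fin 3) (Fin 3) ℝ) (s : Fin 3 → ℝ), A.det ≠ 0 ∧ (∀ i, s i ≠ 0) ∧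
      Aᵀ * N * A = diagonal (fun i => s i ^ 2) ∧
      A.adjugate * M * A.adjugateᵀ = E21 := by
  obtain ⟨P, hP, hPN⟩ := exists_P N hN hp
  obtain ⟨R₀, d₀, hR₀, hd₀⟩ := orth_diag (P.adjugate * M * P.adjugateᵀ) (by
    simp only [transpose_mul, transpose_transpose, hM, Matrix.mul_assoc])
  have hdet0 : R₀.det ≠ 0 := by
    intro h
    have := congrArg det hR₀
    simp [h] at this
  have hadjP : P.adjugate.det ≠ 0 := by
    rw [det_adjugate]; exact pow_ne_zero _ hP
  have hY : IsUnit (R₀ᵀ * P.adjugate).det := by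
    rw [det_mul, det_transpose]; exact (mul_ne_zero hdet0 hadjP).isUnit
  obtain ⟨σ, s0, s1, s2⟩ := signs d₀ ((R₀ᵀ * P.adjugate)ᵀ⁻¹ * Q) (by
    have e : diagonal d₀ = (R₀ᵀ * P.adjugate) * M * (R₀ᵀ * P.adjugate)ᵀ := by
      rw [← hd₀]; simp only [transpose_mul, transpose_transpose, Matrix.mul_assoc]
    rw [e, transpose_mul, transpose_nonsing_inv, transpose_transpose, ← hQ]
    generalize R₀ᵀ * P.adjugate = Y at hY
    calc _ = Qᵀ * (Y⁻¹ * Y) * M * (Yᵀ * Yᵀ⁻¹) * Q := by simp only [Matrix.mul_assoc]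
      _ = _ := by
        rw [nonsing_inv_mul _ hY, mul_nonsing_inv _ (by rwa [det_transpose])]; simp)
  obtain ⟨R, d, hR, hd, p0, p1, p2⟩ : ∃ (R : Matrix (Fin 3) (Fin 3) ℝ) (d : Fin 3 → ℝ),
      Rᵀ * R = 1 ∧ Rᵀ * (P.adjugate * M * P.adjugateᵀ) * R = diagonal d ∧
      0 < d 0 ∧ 0 < d 1 ∧ d 2 < 0 := by
    refine ⟨R₀.submatrix id σ, d₀ ∘ σ, ?_, ?_, s0, s1, s2⟩
    · have := congrArg (fun X => X.submatrix σ σ) hR₀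
      ext i j
      simpa [Matrix.mul_apply, Matrix.one_apply] using congrFun (congrFun this i) j
    · have := congrArg (fun X => X.submatrix σ σ) hd₀
      ext i j
      simpa [Matrix.mul_apply, diagonal_apply] using congrFun (congrFun this i) j
  have hdetR2 : R.det * R.det = 1 := by
    have := congrArg det hR
    simpa using this
  have hdet : R.det ≠ 0 := by intro h; simp [h] at hdetR2
  have hadjR : R.adjugate = R.det • Rᵀ := by
    calc R.adjugate = (Rᵀ * R) * R.adjugate := by rw [hR, Matrix.one_mul]
      _ = R.det • Rᵀ := by rw [Matrix.mul_assoc, mul_adjugate]; simp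
  -- scaling
  obtain ⟨s, hs, t0, t1, t2⟩ : ∃ s : Fin 3 → ℝ, (∀ i, s i ≠ 0) ∧
      d 0 * (s 1 * s 2) ^ 2 = 1 ∧ d 1 * (s 0 * s 2) ^ 2 = 1 ∧ d 2 * (s 0 * s 1) ^ 2 = -1 := by
    obtain ⟨a, ha, ea⟩ : ∃ a, 0 < a ∧ a ^ 4 = d 0 :=
      ⟨Real.sqrt (Real.sqrt (d 0)), by positivity, by
        rw [show 4 = 2 * 2 from rfl, pow_mul, Real.sq_sqrt (by positivity), Real.sq_sqrt p0.le]⟩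
    obtain ⟨b, hb, eb⟩ : ∃ a, 0 < a ∧ a ^ 4 = d 1 :=
      ⟨Real.sqrt (Real.sqrt (d 1)), by positivity, by
        rw [show 4 = 2 * 2 from rfl, pow_mul, Real.sq_sqrt (by positivity), Real.sq_sqrt p1.le]⟩
    have p2' : 0 < - d 2 := by linarith
    obtain ⟨c, hc, ec⟩ : ∃ a, 0 < a ∧ a ^ 4 = - d 2 :=
      ⟨Real.sqrt (Real.sqrt (- d 2)), by positivity, by
        rw [show 4 = 2 * 2 from rfl, pow_mul, Real.sq_sqrt (by positivity), Real.sq_sqrt p2'.le]⟩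
    have ec' : d 2 = - c ^ 4 := by linarith
    refine ⟨![a / (b * c), b / (a * c), c / (a * b)], ?_, ?_, ?_, ?_⟩
    · intro i; fin_cases i <;> simp <;> refine ⟨?_, ?_, ?_⟩ <;> positivity
    · simp [← ea]; field_simp
    · simp [← eb]; field_simp
    · simp [ec']; field_simp
  refine ⟨P * R * diagonal s, s, ?_, hs, ?_, ?_⟩
  · rw [det_mul, det_mul, det_diagonal]
    exact mul_ne_zero (mul_ne_zero hP hdet) (Finset.prod_ne_zero_iff.2 fun i _ => hs i)
  · calc _ = diagonal s * (Rᵀ * (Pᵀ * N * P) * R) * diagonal s := by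
          simp only [transpose_mul, diagonal_transpose, Matrix.mul_assoc]
      _ = _ := by
        rw [hPN, Matrix.mul_one, hR, Matrix.mul_one, diagonal_mul_diagonal]
        simp only [sq]
  · rw [adjugate_mul_distrib, adjugate_mul_distrib, hadjR]
    calc _ = (R.det * R.det) • (adjugate (diagonal s) * (Rᵀ * (P.adjugate * M * P.adjugateᵀ) * R)
            * (adjugate (diagonal s))ᵀ) := by
          simp only [transpose_mul, transpose_smul, transpose_transpose, Matrix.mul_assoc,
            Matrix.smul_mul, Matrix.mul_smul, smul_smul]
      _ = _ := by
        rw [hdetR2, hd, one_smul, adjugate_fin_three, E21]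
        ext i j
        fin_cases i <;> fin_cases j <;>
          simp [Matrix.mul_apply, Fin.sum_univ_three, vecMul_diagonal]
        · linarith
        · linarith
        · linarith

def inl : (Fin 3 → ℝ) →ₗ[ℝ] (Fin 6 → ℝ) where
  toFun u := ![u 0, u 1, u 2, 0, 0, 0]
  map_add' u v := by ext i; fin_cases i <;> simp
  map_smul' c u := by ext i; fin_cases i <;> simp

def inr : (Fin 3 → ℝ) →ₗ[ℝ] (Fin 6 → ℝ) where
  toFun u := ![0, 0, 0, u 0, u 1, u 2]
  map_add' u v := by ext i; fin_cases i <;> simp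
  map_smul' c u := by ext i; fin_cases i <;> simp

def pr1 : (Fin 6 → ℝ) →ₗ[ℝ] (Fin 3 → ℝ) where
  toFun u := ![u 0, u 1, u 2]
  map_add' u v := by ext i; fin_cases i <;> simp
  map_smul' c u := by ext i; fin_cases i <;> simp

def pr2 : (Fin 6 → ℝ) →ₗ[ℝ] (Fin 3 → ℝ) where
  toFun u := ![u 3, u 4, u 5]
  map_add' u v := by ext i; fin_cases i <;> simp
  map_smul' c u := by ext i; fin_cases i <;> simp

lemma bil (g : (Fin 6 → ℝ) →ₗ[ℝ] (Fin 6 → ℝ) →ₗ[ℝ] ℝ)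
    (h k : (Fin 3 → ℝ) →ₗ[ℝ] (Fin 6 → ℝ)) (u v : Fin 3 → ℝ) :
    g (h u) (k v) = u ⬝ᵥ (LinearMap.toMatrix₂' ℝ (g.compl₁₂ h k)) *ᵥ v := by
  rw [← Matrix.toLinearMap₂'_apply', Matrix.toLinearMap₂'_toMatrix', LinearMap.compl₁₂_apply]

lemma gder_le : gder ≤ LinearMap.range inr := by
  rw [gder, Submodule.span_le]
  rintro x (rfl | rfl | rfl)
  · exact ⟨Pi.single 0 1, by ext i; fin_cases i <;> simp [inr]⟩
  · exact ⟨Pi.single 1 1, by ext i; fin_cases i <;> simp [inr]⟩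
  · exact ⟨Pi.single 2 1, by ext i; fin_cases i <;> simp [inr]⟩

lemma inr_single (i : Fin 3) : inr (Pi.single i 1) = Pi.single (i.addNat 3) 1 := by
  fin_cases i <;> (ext j; fin_cases j <;> simp [inr])

/-- the graph embedding -/
def jj (B : Matrix (Fin 3) (Fin 3) ℝ) : (Fin 3 → ℝ) →ₗ[ℝ] (Fin 6 → ℝ) :=
  inl + inr ∘ₗ toLin' B

def FF (A B : Matrix (Fin 3) (Fin 3) ℝ) : (Fin 6 → ℝ) →ₗ[ℝ] (Fin 6 → ℝ) :=
  jj B ∘ₗ toLin' A ∘ₗ pr1 + inr ∘ₗ toLin' A.adjugateᵀ ∘ₗ pr2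

lemma FF_apply (A B : Matrix (Fin 3) (Fin 3) ℝ) (x : Fin 6 → ℝ) :
    FF A B x = jj B (A *ᵥ pr1 x) + inr (A.adjugateᵀ *ᵥ pr2 x) := by
  simp [FF]

lemma FF_bra (A B : Matrix (Fin 3) (Fin 3) ℝ) (x y : Fin 6 → ℝ) :
    FF A B (bra x y) = bra (FF A B x) (FF A B y) := by
  rw [FF_apply, FF_apply, FF_apply]
  have h0 : pr1 (bra x y) = 0 := by ext i; fin_cases i <;> simp [pr1, bra]
  rw [h0, mulVec_zero, map_zero, zero_add]
  ext i
  fin_cases i <;>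
    simp [inr, inl, jj, bra, pr1, pr2, adjugate_fin_three, mulVec, dotProduct,
      Fin.sum_univ_three] <;> ring

lemma FF_inj (A B : Matrix (Fin 3) (Fin 3) ℝ) (hA : A.det ≠ 0) :
    Function.Injective (FF A B) := by
  rw [injective_iff_map_eq_zero]
  intro x hx
  rw [FF_apply] at hx
  have h1 : A *ᵥ pr1 x = 0 := by
    ext i
    have := congrFun hx (i.castLE (by norm_num))
    fin_cases i <;> simpa [jj, inl, inr] using this
  have h2 := eq_zero_of_mulVec_eq_zero hA h1
  rw [h1, map_zero, zero_add] at hx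
  have h3 : A.adjugateᵀ *ᵥ pr2 x = 0 := by
    ext i
    have := congrFun hx (i.addNat 3)
    fin_cases i <;> simpa [inr] using this
  have h4 := eq_zero_of_mulVec_eq_zero (by
    rw [det_transpose, det_adjugate]; exact pow_ne_zero _ hA) h3
  ext i
  fin_cases i
  · exact congrFun h2 0
  · exact congrFun h2 1
  · exact congrFun h2 2
  · exact congrFun h4 0
  · exact congrFun h4 1
  · exact congrFun h4 2

lemma conj_dot (A N : Matrix (Fin 3) (Fin 3) ℝ) (u v : Fin 3 → ℝ) :
    (A *ᵥ u) ⬝ᵥ N *ᵥ (A *ᵥ v) = u ⬝ᵥ (Aᵀ * N * A) *ᵥ v := by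
  rw [← mulVec_mulVec, ← mulVec_mulVec, dotProduct_mulVec u, vecMul_transpose]

/-- A nondegenerate symmetric bilinear form on `T*𝔥₃` whose restriction to `𝔤′` has
signature `(2,1)` and whose restriction to `𝔤′^⊥` is definite can be brought, by an
automorphism, to the diagonal form `diag(εδ₁², εδ₂², εδ₃², 1, 1, −1)`. -/
theorem stmt_6 (g : (Fin 6 → ℝ) →ₗ[ℝ] (Fin 6 → ℝ) →ₗ[ℝ] ℝ)
    (hsym : ∀ x y, g x y = g y x)
    (hnd : ∀ x, (∀ y, g x y = 0) → x = 0)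
    (hsig : ∃ Q : Matrix (Fin 3) (Fin 3) ℝ, IsUnit Q.det ∧
      Qᵀ * (Matrix.of fun i j : Fin 3 =>
        g (Pi.single (i.addNat 3) 1) (Pi.single (j.addNat 3) 1)) * Q = E21)
    (hperp : (∀ x : Fin 6 → ℝ, (∀ z ∈ gder, g x z = 0) → x ≠ 0 → 0 < g x x) ∨
             (∀ x : Fin 6 → ℝ, (∀ z ∈ gder, g x z = 0) → x ≠ 0 → g x x < 0)) :
    ∃ F : Matrix (Fin 6) (Fin 6) ℝ, IsAuto F ∧
      ∃ ε d1 d2 d3 : ℝ, (ε = 1 ∨ ε = -1) ∧ d1 ≠ 0 ∧ d2 ≠ 0 ∧ d3 ≠ 0 ∧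
        (Matrix.of fun i j : Fin 6 =>
            g (F.mulVec (Pi.single i 1)) (F.mulVec (Pi.single j 1))) =
          Matrix.diagonal ![ε * d1 ^ 2, ε * d2 ^ 2, ε * d3 ^ 2, 1, 1, -1] := by
  obtain ⟨Q, hQu, hQ⟩ := hsig
  have hMdef : (Matrix.of fun i j : Fin 3 =>
        g (Pi.single (i.addNat 3) 1) (Pi.single (j.addNat 3) 1)) =
      LinearMap.toMatrix₂' ℝ (g.compl₁₂ inr inr) := by
    ext i j
    simp [LinearMap.toMatrix₂'_apply, inr_single]
  rw [hMdef] at hQ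
  set M := LinearMap.toMatrix₂' ℝ (g.compl₁₂ inr inr) with hM
  set K := LinearMap.toMatrix₂' ℝ (g.compl₁₂ inr inl) with hK
  have hMdet : IsUnit M.det := by
    have := congrArg det hQ
    rw [isUnit_iff_ne_zero]
    intro h0
    simp [h0, E21, Fin.prod_univ_three] at this
  have hMs : Mᵀ = M := by
    ext i j
    simp only [hM, transpose_apply, LinearMap.toMatrix₂'_apply, LinearMap.compl₁₂_apply]
    exact hsym _ _
  obtain ⟨B, hB⟩ : ∃ B : Matrix (Fin 3) (Fin 3) ℝ, B = -(M⁻¹ * K) := ⟨_, rfl⟩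
  have horth : ∀ z u, g (inr z) (jj B u) = 0 := by
    intro z u
    have : jj B u = inl u + inr (B *ᵥ u) := by simp [jj]
    rw [this, map_add, bil, bil, ← hM, ← hK, ← dotProduct_add, mulVec_mulVec, ← add_mulVec, hB,
      Matrix.mul_neg, ← Matrix.mul_assoc, mul_nonsing_inv _ hMdet, Matrix.one_mul]
    simp
  have horth' : ∀ u z, g (jj B u) (inr z) = 0 := fun u z => by rw [hsym, horth]
  have hperp' : ∀ u, ∀ z ∈ gder, g (jj B u) z = 0 := by
    intro u z hz
    obtain ⟨w, rfl⟩ := gder_le hz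
    exact horth' u w
  have hjne : ∀ u, u ≠ 0 → jj B u ≠ 0 := by
    intro u hu h
    apply hu
    ext i
    have := congrFun h (i.castLE (by norm_num))
    fin_cases i <;> simpa [jj, inl, inr] using this
  obtain ⟨ε, hε, hpos⟩ : ∃ ε : ℝ, (ε = 1 ∨ ε = -1) ∧
      ∀ u, u ≠ 0 → 0 < ε * g (jj B u) (jj B u) := by
    rcases hperp with h | h
    · exact ⟨1, Or.inl rfl, fun u hu => by
        have := h _ (hperp' u) (hjne u hu); linarith⟩
    · exact ⟨-1, Or.inr rfl, fun u hu => by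
        have := h _ (hperp' u) (hjne u hu); linarith⟩
  set N := LinearMap.toMatrix₂' ℝ (g.compl₁₂ (jj B) (jj B)) with hN
  have hNs : Nᵀ = N := by
    ext i j
    simp only [hN, transpose_apply, LinearMap.toMatrix₂'_apply, LinearMap.compl₁₂_apply]
    exact hsym _ _
  obtain ⟨A, s, hA, hs, hAN, hAM⟩ := key M (ε • N) Q hMs (by rw [transpose_smul, hNs]) (by
    intro u hu
    have := hpos u hu
    rwa [bil, ← hN, ← smul_eq_mul, ← dotProduct_smul, ← smul_mulVec] at this) hQ
  have hεε : ε * ε = 1 := by rcases hε with rfl | rfl <;> norm_num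
  have hAN' : Aᵀ * N * A = diagonal (fun i => ε * s i ^ 2) := by
    have h1 : ε • (Aᵀ * (ε • N) * A) = Aᵀ * N * A := by
      rw [Matrix.mul_smul, Matrix.smul_mul, smul_smul, hεε, one_smul]
    rw [← h1, hAN, ← diagonal_smul]
    rfl
  have hgram : ∀ x y, g (FF A B x) (FF A B y) =
      pr1 x ⬝ᵥ diagonal (fun i => ε * s i ^ 2) *ᵥ pr1 y + pr2 x ⬝ᵥ E21 *ᵥ pr2 y := by
    intro x y
    rw [FF_apply, FF_apply]
    simp only [map_add, LinearMap.add_apply, horth, horth']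
    rw [bil g (jj B) (jj B), bil g inr inr, ← hN, ← hM, conj_dot, conj_dot, hAN',
      transpose_transpose, hAM]
    ring
  have hmv : ∀ x, (LinearMap.toMatrix' (FF A B)) *ᵥ x = FF A B x := fun x =>
    LinearMap.toMatrix'_mulVec _ _
  refine ⟨LinearMap.toMatrix' (FF A B), ⟨?_, ?_⟩, ε, s 0, s 1, s 2, hε, hs 0, hs 1, hs 2, ?_⟩
  · have hf : (LinearMap.toMatrix' (FF A B)).mulVec = FF A B := funext hmv
    rw [hf]
    have hi := FF_inj A B hA
    exact ⟨hi, LinearMap.injective_iff_surjective.1 hi⟩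
  · intro x y
    rw [hmv, hmv, hmv, FF_bra]
  · ext i j
    rw [of_apply, hmv, hmv, hgram]
    fin_cases i <;> fin_cases j <;>
      simp [pr1, pr2, E21, mulVec_diagonal, dotProduct, Fin.sum_univ_three, diagonal_apply]
end
end

section
/- Let ⟨·,·⟩ be a nondegenerate symmetric bilinear form on T*𝔥₃ that vanishes identically on 𝔤′ × 𝔤′, where 𝔤′ = span(e₄,e₅,e₆). Then there exists a Lie algebra automorphism F of T*𝔥₃ such that the matrix of (x,y) ↦ ⟨Fx,Fy⟩ in the basis (e₁,…,e₆) is the block matrix [[0, M],[Mᵀ, 0]], where M is one of the following 3×3 matrices: diag(1, λ₂, λ₃); [[1,0,0],[0,λ₂,1],[0,0,λ₂]]; [[1,1,0],[0,1,1],[0,0,1]]; or [[1,0,0],[0,λ₂,−λ₃],[0,λ₃,λ₂]] with λ₃ ≠ 0. In particular, every such form has neutral signature (3,3). -/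
open Matrix

noncomputable section

def InL (M : Matrix (Fin 3) (Fin 3) ℝ) : Prop :=
  ∃ l2 l3 : ℝ,
          M = Matrix.diagonal ![1, l2, l3] ∨
          M = !![1, 0, 0; 0, l2, 1; 0, 0, l2] ∨
          M = !![1, 1, 0; 0, 1, 1; 0, 0, 1] ∨
          (l3 ≠ 0 ∧ M = !![1, 0, 0; 0, l2, -l3; 0, l3, l2])

def Good (B : Matrix (Fin 3) (Fin 3) ℝ) : Prop :=
  ∃ (P M : Matrix (Fin 3) (Fin 3) ℝ) (c : ℝ), P.det ≠ 0 ∧ c ≠ 0 ∧ InL M ∧ B * P = c • (P * M)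

theorem Good.step {B B' P : Matrix (Fin 3) (Fin 3) ℝ} {c : ℝ} (h : Good B') (hP : P.det ≠ 0)
    (hc : c ≠ 0) (e : B * P = c • (P * B')) : Good B := by
  obtain ⟨P', M, c', h1, h2, h3, h4⟩ := h
  refine ⟨P * P', M, c * c', ?_, mul_ne_zero hc h2, h3, ?_⟩
  · rw [det_mul]; exact mul_ne_zero hP h1
  · rw [← Matrix.mul_assoc, e, smul_mul_assoc, Matrix.mul_assoc, h4, mul_smul_comm, smul_smul,
      Matrix.mul_assoc]

theorem Good.of_inL {M : Matrix (Fin 3) (Fin 3) ℝ} (h : InL M) : Good M :=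
  ⟨1, M, 1, by simp, one_ne_zero, h, by simp⟩

theorem good_diag (p s : ℝ) : Good !![1, 0, 0; 0, p, 0; 0, 0, s] := by
  refine Good.of_inL ⟨p, s, Or.inl ?_⟩
  ext i j; fin_cases i <;> fin_cases j <;> simp

theorem eq33 {a b c d e f g h i a' b' c' d' e' f' g' h' i' : ℝ}
    (h1 : a = a') (h2 : b = b') (h3 : c = c') (h4 : d = d') (h5 : e = e') (h6 : f = f')
    (h7 : g = g') (h8 : h = h') (h9 : i = i') :
    !![a, b, c; d, e, f; g, h, i] = !![a', b', c'; d', e', f'; g', h', i'] := by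
  subst_vars; rfl

theorem step33 {a b c d e f g h i a' b' c' d' e' f' g' h' i' : ℝ}
    (x00 x01 x02 x10 x11 x12 x20 x21 x22 k : ℝ)
    (H : Good !![a', b', c'; d', e', f'; g', h', i'])
    (hP : x00 * x11 * x22 - x00 * x12 * x21 - x01 * x10 * x22 + x01 * x12 * x20
      + x02 * x10 * x21 - x02 * x11 * x20 ≠ 0) (hk : k ≠ 0)
    (e00 : a * x00 + b * x10 + c * x20 = k * (x00 * a' + x01 * d' + x02 * g'))
    (e01 : a * x01 + b * x11 + c * x21 = k * (x00 * b' + x01 * e' + x02 * h'))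
    (e02 : a * x02 + b * x12 + c * x22 = k * (x00 * c' + x01 * f' + x02 * i'))
    (e10 : d * x00 + e * x10 + f * x20 = k * (x10 * a' + x11 * d' + x12 * g'))
    (e11 : d * x01 + e * x11 + f * x21 = k * (x10 * b' + x11 * e' + x12 * h'))
    (e12 : d * x02 + e * x12 + f * x22 = k * (x10 * c' + x11 * f' + x12 * i'))
    (e20 : g * x00 + h * x10 + i * x20 = k * (x20 * a' + x21 * d' + x22 * g'))
    (e21 : g * x01 + h * x11 + i * x21 = k * (x20 * b' + x21 * e' + x22 * h'))
    (e22 : g * x02 + h * x12 + i * x22 = k * (x20 * c' + x21 * f' + x22 * i')) :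
    Good !![a, b, c; d, e, f; g, h, i] := by
  refine H.step (P := !![x00, x01, x02; x10, x11, x12; x20, x21, x22]) (c := k) ?_ hk ?_
  · rw [det_fin_three]; simpa using hP
  · ext m n
    fin_cases m <;> fin_cases n <;> simp [Matrix.mul_apply, Fin.sum_univ_three] <;> linarith

theorem good_jord (l : ℝ) : Good !![1, 0, 0; 0, l, 1; 0, 0, l] :=
  Good.of_inL ⟨l, 0, Or.inr (Or.inl rfl)⟩

theorem good_j3 : Good !![1, 1, 0; 0, 1, 1; 0, 0, 1] :=
  Good.of_inL ⟨0, 0, Or.inr (Or.inr (Or.inl rfl))⟩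

theorem good_tri_aux (p q s : ℝ) : Good !![1, 0, 0; 0, p, q; 0, 0, s] := by
  by_cases hq : q = 0
  · subst hq; exact good_diag p s
  by_cases hps : p = s
  · subst hps
    refine step33 1 0 0 0 q 0 0 0 1 1 (good_jord p) ?_ one_ne_zero ?_ ?_ ?_ ?_ ?_ ?_ ?_ ?_ ?_
    · simpa using hq
    all_goals ring
  · have : s - p ≠ 0 := fun h => hps (by linarith)
    refine step33 1 0 0 0 1 (q / (s - p)) 0 0 1 1 (good_diag p s) ?_ one_ne_zero ?_ ?_ ?_ ?_ ?_ ?_ ?_ ?_ ?_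
    · simp
    all_goals first | ring1 | (field_simp; ring1)

theorem good_tri (a b p q s : ℝ) (hp : p ≠ 0) (hs : s ≠ 0) :
    Good !![1, a, b; 0, p, q; 0, 0, s] := by
  by_cases hp1 : p = 1
  · subst hp1
    by_cases hs1 : s = 1
    · subst hs1
      by_cases ha : a = 0
      · subst ha
        by_cases hq : q = 0
        · subst hq
          by_cases hb : b = 0
          · subst hb; exact good_diag 1 1
          · refine step33 0 b 0 1 0 0 0 0 1 1 (good_jord 1) ?_ one_ne_zero ?_ ?_ ?_ ?_ ?_ ?_ ?_ ?_ ?_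
            · simpa using hb
            all_goals ring
        · refine step33 1 b 0 0 q 0 0 0 1 1 (good_jord 1) ?_ one_ne_zero ?_ ?_ ?_ ?_ ?_ ?_ ?_ ?_ ?_
          · simpa using hq
          all_goals ring
      · by_cases hq : q = 0
        · subst hq
          refine step33 0 a 0 b 0 1 (-a) 0 0 1 (good_jord 1) ?_ one_ne_zero ?_ ?_ ?_ ?_ ?_ ?_ ?_ ?_ ?_
          · simpa using ha
          all_goals ring
        · refine step33 1 (b / (a * q)) 0 0 (1 / a) 0 0 0 (1 / (a * q)) 1 good_j3 ?_ one_ne_zero ?_ ?_ ?_ ?_ ?_ ?_ ?_ ?_ ?_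
          · simp [ha, hq]
          all_goals first | ring1 | (field_simp; done) | (field_simp; ring1)
    · have h1 : s - 1 ≠ 0 := fun h => hs1 (by linarith)
      suffices H : Good !![1, a, 0; 0, 1, 0; 0, 0, s] by
        refine step33 1 0 ((b + a * (q / (s - 1))) / (s - 1)) 0 1 (q / (s - 1)) 0 0 1 1 H ?_ one_ne_zero ?_ ?_ ?_ ?_ ?_ ?_ ?_ ?_ ?_
        · simp
        all_goals first | ring1 | (field_simp; done) | (field_simp; ring1)
      by_cases ha : a = 0
      · subst ha; exact good_diag 1 s
      refine step33 0 1 0 0 0 (s / a) 1 0 0 s (good_jord (1 / s)) ?_ hs ?_ ?_ ?_ ?_ ?_ ?_ ?_ ?_ ?_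
      · simp [ha, hs]
      all_goals first | ring1 | (field_simp; done) | (field_simp; ring1)
  · have h1 : p - 1 ≠ 0 := fun h => hp1 (by linarith)
    suffices H : ∀ b, Good !![1, 0, b; 0, p, q; 0, 0, s] by
      refine step33 1 (a / (p - 1)) 0 0 1 0 0 0 1 1 (H (b - a / (p - 1) * q)) ?_ one_ne_zero ?_ ?_ ?_ ?_ ?_ ?_ ?_ ?_ ?_
      · simp
      all_goals first | ring1 | (field_simp; done) | (field_simp; ring1)
    clear b
    intro b
    by_cases hs1 : s = 1
    · subst hs1
      suffices H : Good !![1, 0, b; 0, p, 0; 0, 0, 1] by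
        refine step33 1 0 0 0 1 (- q / (p - 1)) 0 0 1 1 H ?_ one_ne_zero ?_ ?_ ?_ ?_ ?_ ?_ ?_ ?_ ?_
        · simp
        all_goals first | ring1 | (field_simp; done) | (field_simp; ring1)
      by_cases hb : b = 0
      · subst hb; exact good_diag p 1
      refine step33 0 1 0 1 0 0 0 0 (p / b) p (good_jord (1 / p)) ?_ hp ?_ ?_ ?_ ?_ ?_ ?_ ?_ ?_ ?_
      · simp [hb, hp]
      all_goals first | ring1 | (field_simp; done) | (field_simp; ring1)
    · have h1 : s - 1 ≠ 0 := fun h => hs1 (by linarith)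
      refine step33 1 0 (b / (s - 1)) 0 1 0 0 0 1 1 (good_tri_aux p q s) ?_ one_ne_zero ?_ ?_ ?_ ?_ ?_ ?_ ?_ ?_ ?_
      · simp
      all_goals first | ring1 | (field_simp; done) | (field_simp; ring1)

theorem good_cplx (a b l m : ℝ) (hm : m ≠ 0) :
    Good !![1, a, b; 0, l, -m; 0, m, l] := by
  have hD : (l - 1) ^ 2 + m ^ 2 ≠ 0 := by positivity
  refine step33 1 (((l - 1) * a - m * b) / ((l - 1) ^ 2 + m ^ 2))
    (((l - 1) * b + m * a) / ((l - 1) ^ 2 + m ^ 2)) 0 1 0 0 0 1 1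
    (Good.of_inL ⟨l, m, Or.inr (Or.inr (Or.inr ⟨hm, rfl⟩))⟩) ?_ one_ne_zero ?_ ?_ ?_ ?_ ?_ ?_ ?_ ?_ ?_
  · simp
  all_goals first | ring1 | (field_simp; done) | (field_simp; ring1)

theorem good_block (a b p q r s : ℝ) (h : p * s - q * r ≠ 0) :
    Good !![1, a, b; 0, p, q; 0, r, s] := by
  by_cases hr : r = 0
  · subst hr
    exact good_tri a b p q s (by rintro rfl; simp at h) (by rintro rfl; simp at h)
  rcases le_or_gt 0 ((p - s) ^ 2 + 4 * q * r) with hd | hd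
  · set d := √((p - s) ^ 2 + 4 * q * r) with hdd
    have hd2 : d ^ 2 = (p - s) ^ 2 + 4 * q * r := Real.sq_sqrt hd
    clear_value d
    obtain ⟨l, hl⟩ : ∃ l, l = (p + s + d) / 2 := ⟨_, rfl⟩
    have hl2 : l * (p + s - l) = p * s - q * r := by subst hl; linarith
    have hl0 : l ≠ 0 := by rintro h0; rw [h0] at hl2; apply h; linarith
    have hl1 : p + s - l ≠ 0 := by rintro h0; rw [h0] at hl2; apply h; linarith
    refine step33 1 0 0 0 (l - s) 1 0 r 0 1
      (good_tri (a * (l - s) + b * r) a l 1 (p + s - l) hl0 hl1) ?_ one_ne_zero ?_ ?_ ?_ ?_ ?_ ?_ ?_ ?_ ?_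
    · simpa using hr
    all_goals first | ring1 | linarith
  · have hd' : 0 < -((p - s) ^ 2 + 4 * q * r) := by linarith
    obtain ⟨m, hm⟩ : ∃ m, m = √(-((p - s) ^ 2 + 4 * q * r)) / 2 := ⟨_, rfl⟩
    have hm0 : m ≠ 0 := by
      have := Real.sqrt_pos.2 hd'
      rw [hm]; positivity
    have hm2 : m ^ 2 = -((p - s) ^ 2 + 4 * q * r) / 4 := by
      rw [hm, div_pow, Real.sq_sqrt hd'.le]; norm_num
    have hq : q ≠ 0 := by rintro rfl; nlinarith [sq_nonneg (p - s)]
    -- columns: m • e2 and (q, (s-p)/2)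
    refine step33 1 0 0 0 0 q 0 m ((s - p) / 2) 1
      (good_cplx (b * m) (a * q + b * ((s - p) / 2)) ((p + s) / 2) m hm0) ?_ one_ne_zero ?_ ?_ ?_ ?_ ?_ ?_ ?_ ?_ ?_
    · simpa using ⟨hq, hm0⟩
    all_goals first | ring1 | linarith

theorem cubic_root (a b c : ℝ) : ∃ x : ℝ, x ^ 3 + a * x ^ 2 + b * x + c = 0 := by
  set R := 1 + |a| + |b| + |c| with hR
  have ha := abs_nonneg a
  have hb := abs_nonneg b
  have hc := abs_nonneg c
  have h1 : 1 ≤ R := by linarith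
  have hR2 : R ≤ R ^ 2 := by nlinarith
  have hR2' : 1 ≤ R ^ 2 := by nlinarith
  have e : R ^ 3 = R ^ 2 + |a| * R ^ 2 + |b| * R ^ 2 + |c| * R ^ 2 := by
    rw [pow_succ, mul_comm]; nth_rewrite 1 [hR]; ring
  have k1 := mul_le_mul_of_nonneg_left hR2 hb
  have k2 := mul_le_mul_of_nonneg_left hR2' hc
  have a1 : -(|a| * R ^ 2) ≤ a * R ^ 2 := by nlinarith [neg_abs_le a]
  have a2 : a * R ^ 2 ≤ |a| * R ^ 2 := by nlinarith [le_abs_self a]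
  have b1 : -(|b| * R) ≤ b * R := by nlinarith [neg_abs_le b]
  have b2 : b * R ≤ |b| * R := by nlinarith [le_abs_self b]
  have c1 := neg_abs_le c
  have c2 := le_abs_self c
  have hcont : Continuous fun x : ℝ => x ^ 3 + a * x ^ 2 + b * x + c := by fun_prop
  have := mem_range_of_exists_le_of_exists_ge hcont (c := 0) ⟨-R, by nlinarith⟩ ⟨R, by nlinarith⟩
  exact this

theorem good_col (k a b p q r s : ℝ) (hk : k ≠ 0) (h : p * s - q * r ≠ 0) :
    Good !![k, a, b; 0, p, q; 0, r, s] := by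
  refine step33 1 0 0 0 1 0 0 0 1 k (good_block (a / k) (b / k) (p / k) (q / k) (r / k) (s / k) ?_)
    ?_ hk ?_ ?_ ?_ ?_ ?_ ?_ ?_ ?_ ?_
  · intro h0; apply h; field_simp at h0; linarith
  · simp
  all_goals field_simp; try ring

theorem good_of_col (B P : Matrix (Fin 3) (Fin 3) ℝ) (hB : B.det ≠ 0) (hP : P.det ≠ 0) (k : ℝ)
    (h : B *ᵥ (fun i => P i 0) = k • (fun i => P i 0)) : Good B := by
  have hu : IsUnit P.det := isUnit_iff_ne_zero.2 hP
  have hT : B * P = (1 : ℝ) • (P * (P⁻¹ * B * P)) := by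
    rw [one_smul, Matrix.mul_assoc, Matrix.mul_nonsing_inv_cancel_left _ _ hu]
  refine Good.step ?_ hP one_ne_zero hT
  have hdet : (P⁻¹ * B * P).det = B.det := by
    rw [det_mul, det_mul, mul_right_comm, ← det_mul, Matrix.nonsing_inv_mul _ hu]; simp
  have hc : ∀ i, (P⁻¹ * B * P) i 0 = k * (1 : Matrix (Fin 3) (Fin 3) ℝ) i 0 := by
    intro i
    have e1 : (P⁻¹ * B * P) i 0 = (P⁻¹ *ᵥ (B *ᵥ (fun i => P i 0))) i := by
      rw [Matrix.mul_assoc]; rfl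
    have e2 : (P⁻¹ * P) i 0 = (P⁻¹ *ᵥ (fun i => P i 0)) i := rfl
    rw [e1, h, Matrix.mulVec_smul, Pi.smul_apply, ← e2, Matrix.nonsing_inv_mul _ hu, smul_eq_mul]
  generalize P⁻¹ * B * P = T at *
  rw [← hdet] at hB
  have c0 := hc 0
  have c1 := hc 1
  have c2 := hc 2
  simp at c0 c1 c2
  rw [det_fin_three, c0, c1, c2] at hB
  have : k * (T 1 1 * T 2 2 - T 1 2 * T 2 1) ≠ 0 := by
    convert hB using 1; ring
  rw [T.eta_fin_three, c0, c1, c2]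
  exact good_col _ _ _ _ _ _ _ (left_ne_zero_of_mul this) (right_ne_zero_of_mul this)

theorem good_all (B : Matrix (Fin 3) (Fin 3) ℝ) (hB : B.det ≠ 0) : Good B := by
  obtain ⟨k, hk⟩ : ∃ k : ℝ, (B - k • (1 : Matrix (Fin 3) (Fin 3) ℝ)).det = 0 := by
    obtain ⟨x, hx⟩ := cubic_root (-(B 0 0 + B 1 1 + B 2 2))
      (B 0 0 * B 1 1 + B 0 0 * B 2 2 + B 1 1 * B 2 2 - B 0 1 * B 1 0 - B 0 2 * B 2 0 - B 1 2 * B 2 1)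
      (- B.det)
    refine ⟨x, ?_⟩
    rw [det_fin_three] at hx ⊢
    simp
    linarith
  obtain ⟨v, hv, hv2⟩ := Matrix.exists_mulVec_eq_zero_iff.2 hk
  have hv3 : B *ᵥ v = k • v := by
    rw [Matrix.sub_mulVec, Matrix.smul_mulVec, Matrix.one_mulVec] at hv2
    exact sub_eq_zero.1 hv2
  have key : ∀ P : Matrix (Fin 3) (Fin 3) ℝ, P.det ≠ 0 → (fun i => P i 0) = v → Good B := by
    intro P hP hPv
    exact good_of_col B P hB hP k (by rw [hPv]; exact hv3)
  by_cases h0 : v 0 = 0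
  · by_cases h1 : v 1 = 0
    · by_cases h2 : v 2 = 0
      · exact absurd (by ext i; fin_cases i <;> simp [h0, h1, h2]) hv
      · refine key !![v 0, 1, 0; v 1, 0, 1; v 2, 0, 0] ?_ ?_
        · rw [det_fin_three]; simpa using h2
        · ext i; fin_cases i <;> simp
    · refine key !![v 0, 1, 0; v 1, 0, 0; v 2, 0, 1] ?_ ?_
      · rw [det_fin_three]; simpa using h1
      · ext i; fin_cases i <;> simp
  · refine key !![v 0, 0, 0; v 1, 1, 0; v 2, 0, 1] ?_ ?_
    · rw [det_fin_three]; simpa using h0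
    · ext i; fin_cases i <;> simp

theorem exists_A (B : Matrix (Fin 3) (Fin 3) ℝ) (hB : B.det ≠ 0) :
    ∃ A M : Matrix (Fin 3) (Fin 3) ℝ, A.det ≠ 0 ∧ InL M ∧ Aᵀ * B * A.adjugateᵀ = M := by
  obtain ⟨P, M, c, hP, hc, hM, e⟩ := good_all B hB
  have hk : c * P.det ^ 2 ≠ 0 := by positivity
  obtain ⟨s, hs⟩ : ∃ s : ℝ, s ^ 3 + 0 * s ^ 2 + 0 * s + (-(1 / (c * P.det ^ 2))) = 0 :=
    cubic_root _ _ _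
  have hs1 : s ^ 3 * P.det ^ 2 * c = 1 := by
    have : s ^ 3 = 1 / (c * P.det ^ 2) := by linarith
    rw [this]; field_simp
  have hs0 : s ≠ 0 := by rintro rfl; simp at hs1
  refine ⟨s • P.adjugateᵀ, M, ?_, hM, ?_⟩
  · rw [det_smul, det_transpose, det_adjugate]; simp [hs0, hP]
  · have : P.adjugate.adjugate = P.det • P := by
      rw [Matrix.adjugate_adjugate _ (by simp)]; simp
    rw [Matrix.adjugate_smul, ← Matrix.adjugate_transpose]
    simp only [Matrix.transpose_smul, Matrix.transpose_transpose, this, smul_mul_assoc, mul_smul_comm, smul_smul,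
      Matrix.mul_assoc, e]
    rw [← Matrix.mul_assoc, Matrix.adjugate_mul, smul_mul_assoc, Matrix.one_mul, smul_smul]
    convert one_smul ℝ M using 2
    simp
    rw [← hs1]; ring

abbrev R6 : (Matrix (Fin 3 ⊕ Fin 3) (Fin 3 ⊕ Fin 3) ℝ) ≃ₐ[ℝ] Matrix (Fin 6) (Fin 6) ℝ :=
  Matrix.reindexAlgEquiv ℝ ℝ (finSumFinEquiv : Fin 3 ⊕ Fin 3 ≃ Fin 6)

theorem isAuto_blocks (A C : Matrix (Fin 3) (Fin 3) ℝ) (hA : A.det ≠ 0) :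
    IsAuto (R6 (fromBlocks A 0 C A.adjugateᵀ)) := by
  constructor
  · rw [Function.Bijective, Matrix.mulVec_injective_iff_isUnit, Matrix.mulVec_surjective_iff_isUnit, and_self,
      Matrix.isUnit_iff_isUnit_det]
    rw [isUnit_iff_ne_zero, Matrix.coe_reindexAlgEquiv, Matrix.det_reindex_self,
      Matrix.det_fromBlocks_zero₁₂, det_transpose, det_adjugate]
    simp [hA]
  · intro x y
    have key : ∀ z : Fin 6 → ℝ, R6 (fromBlocks A 0 C A.adjugateᵀ) *ᵥ z = 
        ![A 0 0 * z 0 + A 0 1 * z 1 + A 0 2 * z 2,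
          A 1 0 * z 0 + A 1 1 * z 1 + A 1 2 * z 2,
          A 2 0 * z 0 + A 2 1 * z 1 + A 2 2 * z 2,
          C 0 0 * z 0 + C 0 1 * z 1 + C 0 2 * z 2 + (A.adjugate 0 0 * z 3 + A.adjugate 1 0 * z 4 + A.adjugate 2 0 * z 5),
          C 1 0 * z 0 + C 1 1 * z 1 + C 1 2 * z 2 + (A.adjugate 0 1 * z 3 + A.adjugate 1 1 * z 4 + A.adjugate 2 1 * z 5),
          C 2 0 * z 0 + C 2 1 * z 1 + C 2 2 * z 2 + (A.adjugate 0 2 * z 3 + A.adjugate 1 2 * z 4 + A.adjugate 2 2 * z 5)] := by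
      intro z
      ext i
      have h : (R6 (fromBlocks A 0 C A.adjugateᵀ) *ᵥ z) i =
        ∑ j, fromBlocks A 0 C A.adjugateᵀ (finSumFinEquiv.symm i) j * z (finSumFinEquiv j) := by
        rw [← finSumFinEquiv.symm.sum_comp]
        simp [Matrix.mulVec, dotProduct]
      rw [h, Fintype.sum_sum_type, Fin.sum_univ_three, Fin.sum_univ_three]
      have f0 : (finSumFinEquiv (m := 3) (n := 3)).symm 0 = Sum.inl 0 := by decide
      have f1 : (finSumFinEquiv (m := 3) (n := 3)).symm 1 = Sum.inl 1 := by decide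
      have f2 : (finSumFinEquiv (m := 3) (n := 3)).symm 2 = Sum.inl 2 := by decide
      have f3 : (finSumFinEquiv (m := 3) (n := 3)).symm 3 = Sum.inr 0 := by decide
      have f4 : (finSumFinEquiv (m := 3) (n := 3)).symm 4 = Sum.inr 1 := by decide
      have f5 : (finSumFinEquiv (m := 3) (n := 3)).symm 5 = Sum.inr 2 := by decide
      have g0 : (finSumFinEquiv (m := 3) (n := 3)) (Sum.inl 0) = 0 := by decide
      have g1 : (finSumFinEquiv (m := 3) (n := 3)) (Sum.inl 1) = 1 := by decide
      have g2 : (finSumFinEquiv (m := 3) (n := 3)) (Sum.inl 2) = 2 := by decide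
      have g3 : (finSumFinEquiv (m := 3) (n := 3)) (Sum.inr 0) = 3 := by decide
      have g4 : (finSumFinEquiv (m := 3) (n := 3)) (Sum.inr 1) = 4 := by decide
      have g5 : (finSumFinEquiv (m := 3) (n := 3)) (Sum.inr 2) = 5 := by decide
      rw [g0, g1, g2, g3, g4, g5]
      fin_cases i <;> simp only [Fin.zero_eta, Fin.mk_one, Fin.reduceFinMk] <;>
        simp only [f0, f1, f2, f3, f4, f5] <;> simp
    rw [key, key, key]
    rw [adjugate_fin_three]
    ext i
    fin_cases i <;> simp [bra] <;> ring

theorem blocks_eq (G : Matrix (Fin 6) (Fin 6) ℝ) (hs : Gᵀ = G)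
    (h0 : ∀ i j : Fin 3, G (Fin.natAdd 3 i) (Fin.natAdd 3 j) = 0) :
    ∃ S B : Matrix (Fin 3) (Fin 3) ℝ, Sᵀ = S ∧ G = R6 (fromBlocks S B Bᵀ 0) := by
  have hs' : ∀ i j, G i j = G j i := fun i j => congrFun (congrFun hs j) i
  refine ⟨of fun i j => G (Fin.castAdd 3 i) (Fin.castAdd 3 j),
    of fun i j => G (Fin.castAdd 3 i) (Fin.natAdd 3 j), ?_, ?_⟩
  · ext i j; exact hs' _ _
  · rw [← AlgEquiv.symm_apply_eq]
    ext i j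
    rcases i with i | i <;> rcases j with j | j
    · rfl
    · rfl
    · exact hs' _ _
    · exact h0 i j

theorem r6_transpose (X : Matrix (Fin 3 ⊕ Fin 3) (Fin 3 ⊕ Fin 3) ℝ) : (R6 X)ᵀ = R6 Xᵀ := rfl

theorem r6_det (X : Matrix (Fin 3 ⊕ Fin 3) (Fin 3 ⊕ Fin 3) ℝ) : (R6 X).det = X.det := by
  rw [Matrix.coe_reindexAlgEquiv, Matrix.det_reindex_self]

theorem stmt_7 (g : (Fin 6 → ℝ) →ₗ[ℝ] (Fin 6 → ℝ) →ₗ[ℝ] ℝ)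
    (hsym : ∀ x y, g x y = g y x)
    (hnd : ∀ x, (∀ y, g x y = 0) → x = 0)
    (hvan : ∀ x ∈ gder, ∀ y ∈ gder, g x y = 0) :
    (∃ F : Matrix (Fin 6) (Fin 6) ℝ, IsAuto F ∧
      ∃ M : Matrix (Fin 3) (Fin 3) ℝ,
        (∃ l2 l3 : ℝ,
          M = Matrix.diagonal ![1, l2, l3] ∨
          M = !![1, 0, 0; 0, l2, 1; 0, 0, l2] ∨
          M = !![1, 1, 0; 0, 1, 1; 0, 0, 1] ∨
          (l3 ≠ 0 ∧ M = !![1, 0, 0; 0, l2, -l3; 0, l3, l2])) ∧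
        (Matrix.of fun i j : Fin 6 =>
            g (F.mulVec (Pi.single i 1)) (F.mulVec (Pi.single j 1))) =
          Matrix.reindex finSumFinEquiv finSumFinEquiv (Matrix.fromBlocks 0 M Mᵀ 0)) ∧
    (∃ Q : Matrix (Fin 6) (Fin 6) ℝ, IsUnit Q.det ∧
      Qᵀ * (Matrix.of fun i j : Fin 6 => g (Pi.single i 1) (Pi.single j 1)) * Q =
        Matrix.diagonal ![1, 1, 1, -1, -1, -1]) := by
  set G : Matrix (Fin 6) (Fin 6) ℝ :=
    Matrix.of fun i j : Fin 6 => g (Pi.single i 1) (Pi.single j 1) with hG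
  have hgx : ∀ x y, g x y = x ⬝ᵥ (G *ᵥ y) := by
    intro x y
    have : G = LinearMap.toMatrix₂' ℝ g := by
      ext i j; simp [hG, LinearMap.toMatrix₂'_apply]
    rw [this, ← Matrix.toLinearMap₂'_apply', Matrix.toLinearMap₂'_toMatrix']
  have hF : ∀ F : Matrix (Fin 6) (Fin 6) ℝ, (Matrix.of fun i j : Fin 6 =>
      g (F.mulVec (Pi.single i 1)) (F.mulVec (Pi.single j 1))) = Fᵀ * G * F := by
    intro F
    ext i j
    rw [Matrix.of_apply, hgx, Matrix.mul_assoc]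
    rw [Matrix.mulVec_single_one, Matrix.mulVec_single_one]
    rfl
  have hGs : Gᵀ = G := by
    ext i j; exact hsym _ _
  have hmem : ∀ i : Fin 3, (Pi.single (Fin.natAdd 3 i) 1 : Fin 6 → ℝ) ∈ gder := by
    intro i
    apply Submodule.subset_span
    fin_cases i
    · left; rfl
    · right; left; rfl
    · right; right; rfl
  obtain ⟨S, B, hS, hGB⟩ := blocks_eq G hGs (fun i j => hvan _ (hmem i) _ (hmem j))
  have hGdet : G.det ≠ 0 := by
    intro h
    obtain ⟨v, hv, hv2⟩ := Matrix.exists_mulVec_eq_zero_iff.2 h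
    apply hv
    apply hnd
    intro y
    rw [hsym, hgx, hv2, dotProduct_zero]
  have hB : B.det ≠ 0 := by
    intro h
    obtain ⟨v, hv, hv2⟩ := Matrix.exists_mulVec_eq_zero_iff.2 h
    apply hGdet
    rw [hGB, r6_det, ← Matrix.exists_mulVec_eq_zero_iff]
    refine ⟨Sum.elim 0 v, ?_, ?_⟩
    · intro h; apply hv; ext i; exact congrFun h (Sum.inr i)
    · rw [Matrix.fromBlocks_mulVec]
      ext i
      rcases i with i | i <;> simp [hv2]
  have hBu : IsUnit B.det := isUnit_iff_ne_zero.2 hB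
  have hBi : B * B⁻¹ = 1 := Matrix.mul_nonsing_inv _ hBu
  have hBiT : B⁻¹ᵀ * Bᵀ = 1 := by rw [← transpose_mul, hBi, transpose_one]
  constructor
  · obtain ⟨A, M, hA, hM, e⟩ := exists_A B hB
    refine ⟨R6 (fromBlocks A 0 (-(1/2 : ℝ) • (B⁻¹ * S * A)) A.adjugateᵀ), isAuto_blocks _ _ hA, M, hM, ?_⟩
    rw [hF, hGB, r6_transpose, ← map_mul, ← map_mul]
    change R6 _ = R6 _
    congr 1
    rw [fromBlocks_transpose, fromBlocks_multiply, fromBlocks_multiply]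
    have e' : A.adjugate * Bᵀ * A = Mᵀ := by
      rw [← e]; simp [Matrix.mul_assoc]
    congr 1
    · have h1 : B * (B⁻¹ * S * A) = S * A := by
        rw [Matrix.mul_assoc, ← Matrix.mul_assoc, hBi, Matrix.one_mul]
      have h2 : (B⁻¹ * S * A)ᵀ * Bᵀ = Aᵀ * S := by
        rw [← transpose_mul, h1, transpose_mul, hS]
      rw [transpose_smul, smul_mul_assoc, h2, mul_smul_comm, Matrix.mul_zero, add_zero, Matrix.mul_assoc Aᵀ B, h1]
      rw [Matrix.add_mul, smul_mul_assoc, Matrix.mul_assoc]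
      module
    · simpa using e
    · simpa using e'
    · simp
  · have hQ : (R6 (fromBlocks 1 1 ((1/2 : ℝ) • (B⁻¹ * (1 - S))) ((1/2 : ℝ) • (B⁻¹ * (-1 - S)))))ᵀ * G *
       R6 (fromBlocks 1 1 ((1/2 : ℝ) • (B⁻¹ * (1 - S))) ((1/2 : ℝ) • (B⁻¹ * (-1 - S)))) =
        Matrix.diagonal ![1, 1, 1, -1, -1, -1] := by
      have hd : Matrix.diagonal ![(1 : ℝ), 1, 1, -1, -1, -1] = R6 (fromBlocks 1 0 0 (-1)) := by
        ext i j
        fin_cases i <;> fin_cases j <;> first | rfl | exact neg_zero.symm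
      rw [hd, hGB, r6_transpose, ← map_mul, ← map_mul]
      congr 1
      rw [fromBlocks_transpose, fromBlocks_multiply, fromBlocks_multiply]
      have k : ∀ X : Matrix (Fin 3) (Fin 3) ℝ, B * (B⁻¹ * X) = X := by
        intro X; rw [← Matrix.mul_assoc, hBi, Matrix.one_mul]
      have k' : ∀ X : Matrix (Fin 3) (Fin 3) ℝ, X * B⁻¹ᵀ * Bᵀ = X := by
        intro X; rw [Matrix.mul_assoc, hBiT, Matrix.mul_one]
      simp only [transpose_smul, transpose_mul, transpose_sub, transpose_one, transpose_neg, hS,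
        smul_mul_assoc, mul_smul_comm, k, k', Matrix.one_mul, Matrix.mul_one, Matrix.mul_zero, smul_zero, add_zero]
      congr 1 <;> module
    refine ⟨_, ?_, hQ⟩
    rw [isUnit_iff_ne_zero]
    intro h0
    have := congrArg Matrix.det hQ
    rw [det_mul, h0, det_diagonal] at this
    simp [Fin.prod_univ_succ] at this
end
end

section
/- Let ⟨·,·⟩ be a nondegenerate symmetric bilinear form on T*𝔥₃ that vanishes identically on 𝔤′ × 𝔤′, where 𝔤′ = span(e₄,e₅,e₆). Then the associated left invariant metric is flat: the curvature R of the Levi-Civita connection of ⟨·,·⟩ vanishes identically, i.e. R(x,y)z = 0 for all x,y,z ∈ T*𝔥₃. -/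
open Matrix

noncomputable section

theorem bra_mem_gder (x y : Fin 6 → ℝ) : bra x y ∈ gder := by
  have h : bra x y = (bra x y 3) • (Pi.single 3 1 : Fin 6 → ℝ)
      + (bra x y 4) • (Pi.single 4 1 : Fin 6 → ℝ) + (bra x y 5) • (Pi.single 5 1 : Fin 6 → ℝ) := by
    ext i
    fin_cases i <;> simp [bra, Pi.single_apply]
  rw [h]
  refine add_mem (add_mem ?_ ?_) ?_ <;>
    exact Submodule.smul_mem _ _ (Submodule.subset_span (by simp))

theorem gder_coord (x : Fin 6 → ℝ) (hx : x ∈ gder) : x 0 = 0 ∧ x 1 = 0 ∧ x 2 = 0 := by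
  induction hx using Submodule.span_induction with
  | mem x h =>
    rcases h with h | h | h <;> subst h <;> simp [Pi.single_apply]
  | zero => simp
  | add x y _ _ h1 h2 => simp [h1, h2]
  | smul a x _ h => simp [h]

theorem finrank_gder : Module.finrank ℝ gder = 3 := by
  have hli : LinearIndependent ℝ (fun i : Fin 3 => Pi.basisFun ℝ (Fin 6) (![3, 4, 5] i)) :=
    (Pi.basisFun ℝ (Fin 6)).linearIndependent.comp ![3, 4, 5] (by decide)
  have h := finrank_span_eq_card hli
  have hr : Set.range (fun i : Fin 3 => Pi.basisFun ℝ (Fin 6) (![3, 4, 5] i))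
      = {Pi.single 3 1, Pi.single 4 1, Pi.single 5 1} := by
    ext v
    simp [Fin.exists_fin_succ, eq_comm]
  rw [hr] at h
  exact h.trans (by simp)

theorem bra_left_zero (x y : Fin 6 → ℝ) (hx : x ∈ gder) : bra x y = 0 := by
  obtain ⟨h0, h1, h2⟩ := gder_coord x hx
  ext i
  fin_cases i <;> simp [bra, h0, h1, h2]

theorem bra_right_zero (x y : Fin 6 → ℝ) (hy : y ∈ gder) : bra x y = 0 := by
  obtain ⟨h0, h1, h2⟩ := gder_coord y hy
  ext i
  fin_cases i <;> simp [bra, h0, h1, h2]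

/-- Any nondegenerate symmetric bilinear form on `T*𝔥₃` vanishing identically on
`𝔤′ × 𝔤′` gives a flat metric: the curvature of its Levi-Civita connection (the
connection determined by the Koszul formula) vanishes. -/
theorem stmt_8 (g : (Fin 6 → ℝ) →ₗ[ℝ] (Fin 6 → ℝ) →ₗ[ℝ] ℝ)
    (hsym : ∀ x y, g x y = g y x)
    (hnd : ∀ x, (∀ y, g x y = 0) → x = 0)
    (hvan : ∀ x ∈ gder, ∀ y ∈ gder, g x y = 0)
    (D : (Fin 6 → ℝ) → (Fin 6 → ℝ) → (Fin 6 → ℝ))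
    (hkoszul : ∀ x y z, 2 * g (D x y) z =
      g (bra x y) z - g (bra y z) x + g (bra z x) y) :
    ∀ x y z, D x (D y z) - D y (D x z) - D (bra x y) z = 0 := by
  have horth : ∀ v, (∀ w ∈ gder, g v w = 0) → v ∈ gder := by
    intro v hv
    have hB : LinearMap.BilinForm.Nondegenerate g := by
      refine ⟨fun x hx => hnd x hx, fun x hx => hnd x fun y => ?_⟩
      rw [hsym]; exact hx y
    have hf := LinearMap.BilinForm.finrank_orthogonal hB gder
    have hle : gder ≤ LinearMap.BilinForm.orthogonal g gder := by
      intro x hx w hw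
      exact hvan w hw x hx
    have heq := Submodule.eq_of_le_of_finrank_le hle (by rw [hf, finrank_gder]; simp)
    rw [heq]
    intro w hw
    exact (hsym w v).trans (hv w hw)
  have hD : ∀ x y, D x y ∈ gder := by
    intro x y
    refine horth _ fun w hw => ?_
    have h := hkoszul x y w
    rw [bra_right_zero y w hw, bra_left_zero w x hw, hvan _ (bra_mem_gder x y) w hw] at h
    simpa using h
  have hD1 : ∀ x w, w ∈ gder → D x w = 0 := by
    intro x w hw
    refine hnd _ fun z => ?_
    have h := hkoszul x w z
    rw [bra_right_zero x w hw, bra_left_zero w z hw, hvan _ (bra_mem_gder z x) w hw] at h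
    simpa using h
  have hD2 : ∀ x w, w ∈ gder → D w x = 0 := by
    intro x w hw
    refine hnd _ fun z => ?_
    have h := hkoszul w x z
    rw [bra_left_zero w x hw, bra_right_zero z w hw, hvan _ (bra_mem_gder x z) w hw] at h
    simpa using h
  intro x y z
  rw [hD1 _ _ (hD y z), hD1 _ _ (hD x z), hD2 _ _ (bra_mem_gder x y)]
  simp
end
end

section
/- Let 𝔤 be a finite-dimensional real Lie algebra with a nondegenerate symmetric bilinear form ⟨·,·⟩ and Levi-Civita connection ∇. A vector x ∈ 𝔤 is parallel (i.e. ∇_y x = 0 for all y ∈ 𝔤) if and only if ⟨x, [u,v]⟩ = 0 for all u,v ∈ 𝔤 and ⟨[x,y], z⟩ = −⟨y, [x,z]⟩ for all y,z ∈ 𝔤. -/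
/-- In a finite-dimensional real metric Lie algebra, a vector `x` is parallel for the
Levi-Civita connection (given by the Koszul formula) iff `x` is orthogonal to the derived
algebra and `ad_x` is skew-symmetric for the form (`ad*_x = −ad_x`). -/
theorem stmt_9 (L : Type*) [LieRing L] [LieAlgebra ℝ L] [Module.Finite ℝ L]
    (g : L →ₗ[ℝ] L →ₗ[ℝ] ℝ)
    (hsym : ∀ x y, g x y = g y x)
    (hnd : ∀ x, (∀ y, g x y = 0) → x = 0)
    (D : L → L → L)
    (hkoszul : ∀ x y z, 2 * g (D x y) z = g ⁅x, y⁆ z - g ⁅y, z⁆ x + g ⁅z, x⁆ y)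
    (x : L) :
    (∀ y, D y x = 0) ↔
      ((∀ u v : L, g x ⁅u, v⁆ = 0) ∧ ∀ y z : L, g ⁅x, y⁆ z = -g y ⁅x, z⁆) := by
  have key : ∀ y z, 2 * g (D y x) z = -g ⁅x, y⁆ z - g ⁅x, z⁆ y - g x ⁅y, z⁆ := by
    intro y z
    rw [hkoszul, ← lie_skew y x, ← lie_skew z y, hsym x]
    simp only [map_neg, LinearMap.neg_apply]
    ring
  have anti : ∀ y z, g x ⁅z, y⁆ = -g x ⁅y, z⁆ := by
    intro y z
    rw [← lie_skew z y, map_neg]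
  constructor
  · intro h
    have k0 : ∀ y z, -g ⁅x, y⁆ z - g ⁅x, z⁆ y - g x ⁅y, z⁆ = 0 := by
      intro y z
      rw [← key, h y]
      simp
    refine ⟨fun y z => ?_, fun y z => ?_⟩
    · linarith [k0 y z, k0 z y, anti y z]
    · rw [hsym y]
      linarith [k0 y z, k0 z y, anti y z]
  · rintro ⟨h1, h2⟩ y
    apply hnd
    intro z
    linarith [key y z, h1 y z, h2 y z, hsym y ⁅x, z⁆]
end

section
/- Let ε₁, ε₂ ∈ {+1, −1}, let E₁₀ = diag(0,0,1), and let M be a real 3×3 matrix of one of the forms diag(m₁₁, m₂₂, 0), [[m₁₁, m₁₂, 0],[−m₁₂, m₁₁, 0],[0,0,0]], or [[m₁₁, 0, 0],[1, m₁₁, 0],[0,0,0]]. Let ⟨·,·⟩ be the symmetric bilinear form on T*𝔥₃ whose matrix in the basis (e₁,…,e₆) is the block matrix [[ε₁E₁₀, M],[Mᵀ, ε₂E₁₀]], and assume this form is nondegenerate. Then the associated metric is locally symmetric and Ricci-flat: ∇R = 0 and ρ = 0. -/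
open Matrix

noncomputable section

/-- The bilinear form associated to the matrix `A`. -/
def gm (A : Matrix (Fin 6) (Fin 6) ℝ) (x y : Fin 6 → ℝ) : ℝ := x ⬝ᵥ A.mulVec y

/-- Curvature `R(x,y)z = ∇ₓ∇_y z − ∇_y∇ₓ z − ∇_{[x,y]} z` of a connection `D`. -/
def curv (D : (Fin 6 → ℝ) → (Fin 6 → ℝ) → (Fin 6 → ℝ)) (x y z : Fin 6 → ℝ) :
    Fin 6 → ℝ :=
  D x (D y z) - D y (D x z) - D (bra x y) z

/-- Ricci tensor `ρ(x,y) = tr(z ↦ R(z,x)y)`, computed in the standard basis. -/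
def ricci (D : (Fin 6 → ℝ) → (Fin 6 → ℝ) → (Fin 6 → ℝ)) (x y : Fin 6 → ℝ) : ℝ :=
  ∑ i : Fin 6, curv D (Pi.single i 1) x y i

/-- `E₁₀ = diag(0,0,1)`. -/
def E10 : Matrix (Fin 3) (Fin 3) ℝ := Matrix.diagonal ![0, 0, 1]


/-- The matrix of the metric with `M = [[a,b,0],[c,d,0],[0,0,0]]`. -/
def Sex (e f a b c d : ℝ) : Matrix (Fin 6) (Fin 6) ℝ :=
  !![0,0,0,a,b,0; 0,0,0,c,d,0; 0,0,e,0,0,0; a,c,0,0,0,0; b,d,0,0,0,0; 0,0,0,0,0,f]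

/-- Bilinear expression in four scalars with coefficient vector `k`. -/
def bl (k : Fin 4 → ℝ) (a b c d : ℝ) : ℝ := k 0 * a * c + k 1 * a * d + k 2 * b * c + k 3 * b * d

lemma Sex_eq (e f : ℝ) (a b c d : ℝ) (M : Matrix (Fin 3) (Fin 3) ℝ)
    (hM : M = !![a,b,0;c,d,0;0,0,0]) :
    Matrix.reindex finSumFinEquiv finSumFinEquiv
      (Matrix.fromBlocks (e • E10) M Mᵀ (f • E10)) = Sex e f a b c d := by
  subst hM
  have h0 : (finSumFinEquiv (m := 3) (n := 3)).symm 0 = Sum.inl 0 := by decide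
  have h1 : (finSumFinEquiv (m := 3) (n := 3)).symm 1 = Sum.inl 1 := by decide
  have h2 : (finSumFinEquiv (m := 3) (n := 3)).symm 2 = Sum.inl 2 := by decide
  have h3 : (finSumFinEquiv (m := 3) (n := 3)).symm 3 = Sum.inr 0 := by decide
  have h4 : (finSumFinEquiv (m := 3) (n := 3)).symm 4 = Sum.inr 1 := by decide
  have h5 : (finSumFinEquiv (m := 3) (n := 3)).symm 5 = Sum.inr 2 := by decide
  ext i j
  rw [Matrix.reindex_apply, Matrix.submatrix_apply]
  fin_cases i <;> fin_cases j <;>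
    simp [h0, h1, h2, h3, h4, h5, Sex, E10, Matrix.fromBlocks]

lemma Sex_det (e f a b c d : ℝ) (h : IsUnit (Sex e f a b c d).det) : a * d - b * c ≠ 0 := by
  intro h0
  have key : ∀ p q : ℝ, a * p + b * q = 0 → c * p + d * q = 0 → p = 0 ∧ q = 0 := by
    intro p q hp hq
    have := Matrix.eq_zero_of_mulVec_eq_zero h.ne_zero (v := ![0,0,0,p,q,0]) (by
      ext i; fin_cases i <;> simp [Sex, Matrix.mulVec, dotProduct, Fin.sum_univ_succ, hp, hq])
    exact ⟨by simpa using congrFun this 3, by simpa using congrFun this 4⟩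
  obtain ⟨hd, hc⟩ := key d (-c) (by linarith) (by ring)
  obtain ⟨hb, ha⟩ := key (-b) a (by ring) (by linarith)
  have hc : c = 0 := by linarith
  have hb : b = 0 := by linarith
  subst ha hb hc hd
  have := (key 1 0 (by simp) (by simp)).1
  exact one_ne_zero this

lemma shape (D : (Fin 6 → ℝ) → (Fin 6 → ℝ) → (Fin 6 → ℝ)) (p s q q' r r' : Fin 4 → ℝ)
    (hD : ∀ x y, D x y = ![0, 0, bl p (x 0) (x 1) (y 0) (y 1),
      bl q (x 0) (x 1) (y 2) (y 5) + bl q' (x 2) (x 5) (y 0) (y 1),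
      bl r (x 0) (x 1) (y 2) (y 5) + bl r' (x 2) (x 5) (y 0) (y 1),
      bl s (x 0) (x 1) (y 0) (y 1)]) :
    (∀ x y z w, D x (curv D y z w) - curv D (D x y) z w - curv D y (D x z) w
        - curv D y z (D x w) = 0) ∧
    (∀ x y, ricci D x y = 0) := by
  constructor
  · intro x y z w
    ext i
    fin_cases i <;> simp [curv, hD, bl, bra]
  · intro x y
    simp [ricci, curv, hD, bl, bra, Fin.sum_univ_succ, Pi.single_apply]

lemma main_gen (e f a b c d : ℝ) (he : e ≠ 0) (hf : f ≠ 0)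
    (hnd : IsUnit (Sex e f a b c d).det)
    (D : (Fin 6 → ℝ) → (Fin 6 → ℝ) → (Fin 6 → ℝ))
    (hk : ∀ x y z, 2 * gm (Sex e f a b c d) (D x y) z =
      gm (Sex e f a b c d) (bra x y) z - gm (Sex e f a b c d) (bra y z) x
        + gm (Sex e f a b c d) (bra z x) y) :
    (∀ x y z w, D x (curv D y z w) - curv D (D x y) z w - curv D y (D x z) w
        - curv D y z (D x w) = 0) ∧
    (∀ x y, ricci D x y = 0) := by
  have hδ := Sex_det _ _ _ _ _ _ hnd
  have hgm : ∀ u v : Fin 6 → ℝ, gm (Sex e f a b c d) u v =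
      u 0 * (a * v 3 + b * v 4) + u 1 * (c * v 3 + d * v 4) + u 2 * (e * v 2)
      + u 3 * (a * v 0 + c * v 1) + u 4 * (b * v 0 + d * v 1) + u 5 * (f * v 5) := by
    intro u v
    simp [gm, Sex, Matrix.mulVec, dotProduct, Fin.sum_univ_six]
  simp only [hgm] at hk
  obtain ⟨i, hi⟩ : ∃ i : ℝ, (a*d-b*c)*i = 1 := ⟨_, mul_inv_cancel₀ hδ⟩
  refine shape D ![2*b/(2*e), (d-a)/(2*e), (d-a)/(2*e), -2*c/(2*e)] ![0, 1/2, -1/2, 0]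
    ![(d*(-2*b)-b*(a-d))*i/2, (b*f)*i/2,
      (d*(a-d)-b*(2*c))*i/2, (d*f)*i/2]
    ![(-b*(a+d))*i/2, (-d*(a+d))*i/2,
      (b*f)*i/2, (d*f)*i/2]
    ![(c*(2*b)+a*(a-d))*i/2, (-a*f)*i/2,
      (-c*(a-d)+a*(2*c))*i/2, (-c*f)*i/2]
    ![(a*(a+d))*i/2, (c*(a+d))*i/2,
      (-a*f)*i/2, (-c*f)*i/2] ?_
  intro x y
  have k0 := hk x y ![1,0,0,0,0,0]
  have k1 := hk x y ![0,1,0,0,0,0]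
  have k2 := hk x y ![0,0,1,0,0,0]
  have k3 := hk x y ![0,0,0,1,0,0]
  have k4 := hk x y ![0,0,0,0,1,0]
  have k5 := hk x y ![0,0,0,0,0,1]
  generalize D x y = u at *
  simp [bra] at k0 k1 k2 k3 k4 k5
  have e5 : u 5 = (x 0 * y 1 - x 1 * y 0) / 2 := by
    apply mul_right_cancel₀ hf; linarith
  have e0 : u 0 = 0 := by
    apply mul_right_cancel₀ hδ; linear_combination d * k3 - c * k4
  have e1 : u 1 = 0 := by
    apply mul_right_cancel₀ hδ; linear_combination a * k4 - b * k3
  ext j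
  fin_cases j
  · simpa using e0
  · simpa using e1
  · simp [bl]
    field_simp
    linear_combination k2
  · simp [bl]
    linear_combination (i/2) * (d * k0 - b * k1) - u 3 * hi
  · simp [bl]
    linear_combination (i/2) * (a * k1 - c * k0) - u 4 * hi
  · simp [bl]
    linear_combination e5

/-- The metrics on `T*𝔥₃` with matrix `[[ε₁E₁₀, M],[Mᵀ, ε₂E₁₀]]`, `M` of one of the
three canonical forms of rank-1 center, are locally symmetric and Ricci-flat. -/
theorem stmt_11 (ε₁ ε₂ : ℝ) (h1 : ε₁ = 1 ∨ ε₁ = -1) (h2 : ε₂ = 1 ∨ ε₂ = -1)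
    (M : Matrix (Fin 3) (Fin 3) ℝ)
    (hM : ∃ m11 m22 m12 : ℝ,
      M = Matrix.diagonal ![m11, m22, 0] ∨
      M = !![m11, m12, 0; -m12, m11, 0; 0, 0, 0] ∨
      M = !![m11, 0, 0; 1, m11, 0; 0, 0, 0])
    (Smat : Matrix (Fin 6) (Fin 6) ℝ)
    (hSmat : Smat = Matrix.reindex finSumFinEquiv finSumFinEquiv
      (Matrix.fromBlocks (ε₁ • E10) M Mᵀ (ε₂ • E10)))
    (hnd : IsUnit Smat.det)
    (D : (Fin 6 → ℝ) → (Fin 6 → ℝ) → (Fin 6 → ℝ))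
    (hkoszul : ∀ x y z, 2 * gm Smat (D x y) z =
      gm Smat (bra x y) z - gm Smat (bra y z) x + gm Smat (bra z x) y) :
    (∀ x y z w, D x (curv D y z w) - curv D (D x y) z w - curv D y (D x z) w
        - curv D y z (D x w) = 0) ∧
    (∀ x y, ricci D x y = 0) := by
  obtain ⟨m11, m22, m12, hM⟩ := hM
  have he : ε₁ ≠ 0 := by rcases h1 with h | h <;> rw [h] <;> norm_num
  have hf : ε₂ ≠ 0 := by rcases h2 with h | h <;> rw [h] <;> norm_num
  have : ∃ a b c d : ℝ, M = !![a,b,0;c,d,0;0,0,0] := by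
    rcases hM with h | h | h
    · refine ⟨m11, 0, 0, m22, h.trans ?_⟩
      ext i j
      fin_cases i <;> fin_cases j <;> simp
    · exact ⟨_, _, _, _, h⟩
    · exact ⟨_, _, _, _, h⟩
  obtain ⟨a, b, c, d, hM⟩ := this
  rw [Sex_eq _ _ _ _ _ _ _ hM] at hSmat
  subst hSmat
  exact main_gen _ _ _ _ _ _ he hf hnd D hkoszul
end
end

section
/- Let E₁₀ = diag(0,0,1). (i) For λ ∈ ℝ with λ(λ ± √3) ≠ 0, the symmetric bilinear form on T*𝔥₃ with matrix [[E₁₀, M],[Mᵀ, E₁₀]] in the basis (e₁,…,e₆), where M = diag(λ ± √3, λ, 0), is flat: its curvature R vanishes identically. (ii) For λ₁ ∈ ℝ, the symmetric bilinear form with matrix [[−E₁₀, M],[Mᵀ, E₁₀]], where M = [[λ₁, ∓√3/2, 0],[±√3/2, λ₁, 0],[0,0,0]], is flat. -/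
open Matrix

noncomputable section

theorem gm1_eq (p q : ℝ) (u v : Fin 6 → ℝ) :
    gm (Matrix.reindex finSumFinEquiv finSumFinEquiv
      (Matrix.fromBlocks E10 (Matrix.diagonal ![p, q, 0])
        (Matrix.diagonal ![p, q, 0])ᵀ E10)) u v =
    p * (u 0 * v 3 + u 3 * v 0) + q * (u 1 * v 4 + u 4 * v 1) + u 2 * v 2 + u 5 * v 5 := by
  have e0 : (finSumFinEquiv (m := 3) (n := 3)).symm 0 = Sum.inl 0 := by decide
  have e1 : (finSumFinEquiv (m := 3) (n := 3)).symm 1 = Sum.inl 1 := by decide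
  have e2 : (finSumFinEquiv (m := 3) (n := 3)).symm 2 = Sum.inl 2 := by decide
  have e3 : (finSumFinEquiv (m := 3) (n := 3)).symm 3 = Sum.inr 0 := by decide
  have e4 : (finSumFinEquiv (m := 3) (n := 3)).symm 4 = Sum.inr 1 := by decide
  have e5 : (finSumFinEquiv (m := 3) (n := 3)).symm 5 = Sum.inr 2 := by decide
  simp only [gm, dotProduct, mulVec, Fin.sum_univ_six, reindex_apply, submatrix_apply,
    e0, e1, e2, e3, e4, e5]
  simp [E10, Matrix.diagonal]
  ring

theorem gm2_eq (a c : ℝ) (u v : Fin 6 → ℝ) :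
    gm (Matrix.reindex finSumFinEquiv finSumFinEquiv
      (Matrix.fromBlocks (-E10) !![a, -c, 0; c, a, 0; 0, 0, 0]
        (!![a, -c, 0; c, a, 0; 0, 0, 0])ᵀ E10)) u v =
    a * (u 0 * v 3 + u 3 * v 0 + u 1 * v 4 + u 4 * v 1) - c * (u 0 * v 4 + u 4 * v 0)
      + c * (u 1 * v 3 + u 3 * v 1) - u 2 * v 2 + u 5 * v 5 := by
  have e0 : (finSumFinEquiv (m := 3) (n := 3)).symm 0 = Sum.inl 0 := by decide
  have e1 : (finSumFinEquiv (m := 3) (n := 3)).symm 1 = Sum.inl 1 := by decide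
  have e2 : (finSumFinEquiv (m := 3) (n := 3)).symm 2 = Sum.inl 2 := by decide
  have e3 : (finSumFinEquiv (m := 3) (n := 3)).symm 3 = Sum.inr 0 := by decide
  have e4 : (finSumFinEquiv (m := 3) (n := 3)).symm 4 = Sum.inr 1 := by decide
  have e5 : (finSumFinEquiv (m := 3) (n := 3)).symm 5 = Sum.inr 2 := by decide
  simp only [gm, dotProduct, mulVec, Fin.sum_univ_six, reindex_apply, submatrix_apply,
    e0, e1, e2, e3, e4, e5]
  simp [E10, Matrix.diagonal]
  ring

theorem bra0 (x y : Fin 6 → ℝ) : bra x y 0 = 0 := rfl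
theorem bra1 (x y : Fin 6 → ℝ) : bra x y 1 = 0 := rfl
theorem bra2 (x y : Fin 6 → ℝ) : bra x y 2 = 0 := rfl
theorem bra3 (x y : Fin 6 → ℝ) : bra x y 3 = x 1 * y 2 - x 2 * y 1 := rfl
theorem bra4 (x y : Fin 6 → ℝ) : bra x y 4 = x 2 * y 0 - x 0 * y 2 := rfl
theorem bra5 (x y : Fin 6 → ℝ) : bra x y 5 = x 0 * y 1 - x 1 * y 0 := rfl

theorem flat1 (p q r : ℝ) (hp : p ≠ 0) (hq : q ≠ 0) (hr : r ^ 2 = 3) (hpq : p = q + r)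
    (D : (Fin 6 → ℝ) → (Fin 6 → ℝ) → (Fin 6 → ℝ))
    (g : (Fin 6 → ℝ) → (Fin 6 → ℝ) → ℝ)
    (hg : ∀ u v, g u v =
      p * (u 0 * v 3 + u 3 * v 0) + q * (u 1 * v 4 + u 4 * v 1) + u 2 * v 2 + u 5 * v 5)
    (hk : ∀ x y z, 2 * g (D x y) z = g (bra x y) z - g (bra y z) x + g (bra z x) y)
    (x y z : Fin 6 → ℝ) : curv D x y z = 0 := by
  simp only [hg, bra0, bra1, bra2, bra3, bra4, bra5] at hk
  have h0 : ∀ x y, D x y 0 = 0 := fun x y => by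
    have := hk x y (Pi.single 3 1)
    simp at this
    tauto
  have h1 : ∀ x y, D x y 1 = 0 := fun x y => by
    have := hk x y (Pi.single 4 1)
    simp at this
    tauto
  have h2 : ∀ x y, D x y 2 = -(r / 2) * (x 0 * y 1 + x 1 * y 0) := fun x y => by
    have := hk x y (Pi.single 2 1)
    simp at this
    subst hpq
    linear_combination this / 2
  have h5 : ∀ x y, D x y 5 = (x 0 * y 1 - x 1 * y 0) / 2 := fun x y => by
    have := hk x y (Pi.single 5 1)
    simp at this
    linear_combination this / 2
  have h3 : ∀ x y, p * D x y 3 = (p * (x 1 * y 2 - x 2 * y 1) - q * y 2 * x 1 + y 1 * x 5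
      - q * x 2 * y 1 + x 1 * y 5) / 2 := fun x y => by
    have := hk x y (Pi.single 0 1)
    simp at this
    linear_combination this / 2
  have h4 : ∀ x y, q * D x y 4 = (q * (x 2 * y 0 - x 0 * y 2) + p * y 2 * x 0 - y 0 * x 5
      + p * x 2 * y 0 - x 0 * y 5) / 2 := fun x y => by
    have := hk x y (Pi.single 1 1)
    simp at this
    linear_combination this / 2
  have k3 : p * curv D x y z 3 = 0 := by
    simp only [curv, Pi.sub_apply, mul_sub, h3, h0, h1, h2, h5, bra0, bra1, bra2, bra5]
    subst hpq
    linear_combination (-(1/4) * (x 1 * y 0 - x 0 * y 1) * z 1) * hr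
  have k4 : q * curv D x y z 4 = 0 := by
    simp only [curv, Pi.sub_apply, mul_sub, h4, h0, h1, h2, h5, bra0, bra1, bra2, bra5]
    subst hpq
    linear_combination (-(1/4) * (x 0 * y 1 - x 1 * y 0) * z 0) * hr
  funext i
  fin_cases i
  · simp [curv, h0]
  · simp [curv, h1]
  · simp [curv, h2, h0, h1, bra0, bra1]
  · simpa [hp] using k3
  · simpa [hq] using k4
  · simp [curv, h5, h0, h1, bra0, bra1]

theorem flat2 (a c : ℝ) (hc : c ^ 2 = 3 / 4)
    (D : (Fin 6 → ℝ) → (Fin 6 → ℝ) → (Fin 6 → ℝ))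
    (g : (Fin 6 → ℝ) → (Fin 6 → ℝ) → ℝ)
    (hg : ∀ u v, g u v =
      a * (u 0 * v 3 + u 3 * v 0 + u 1 * v 4 + u 4 * v 1) - c * (u 0 * v 4 + u 4 * v 0)
      + c * (u 1 * v 3 + u 3 * v 1) - u 2 * v 2 + u 5 * v 5)
    (hk : ∀ x y z, 2 * g (D x y) z = g (bra x y) z - g (bra y z) x + g (bra z x) y)
    (x y z : Fin 6 → ℝ) : curv D x y z = 0 := by
  simp only [hg, bra0, bra1, bra2, bra3, bra4, bra5] at hk
  have hn : a ^ 2 + c ^ 2 ≠ 0 := by rw [hc]; positivity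
  have hA : ∀ x y, a * D x y 0 + c * D x y 1 = 0 := fun x y => by
    have := hk x y (Pi.single 3 1)
    simp at this
    linear_combination this
  have hB : ∀ x y, a * D x y 1 - c * D x y 0 = 0 := fun x y => by
    have := hk x y (Pi.single 4 1)
    simp at this
    linear_combination this
  have h0 : ∀ x y, D x y 0 = 0 := fun x y => by
    refine (mul_eq_zero.1 ?_).resolve_left hn
    linear_combination a * hA x y - c * hB x y
  have h1 : ∀ x y, D x y 1 = 0 := fun x y => by
    refine (mul_eq_zero.1 ?_).resolve_left hn
    linear_combination c * hA x y + a * hB x y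
  have h2 : ∀ x y, D x y 2 = c * (x 1 * y 1 + x 0 * y 0) := fun x y => by
    have := hk x y (Pi.single 2 1)
    simp at this
    linear_combination -this / 2
  have h5 : ∀ x y, D x y 5 = (x 0 * y 1 - x 1 * y 0) / 2 := fun x y => by
    have := hk x y (Pi.single 5 1)
    simp at this
    linear_combination this / 2
  have h3 : ∀ x y, a * D x y 3 - c * D x y 4 =
      -(a * x 2 * y 1) + c * y 2 * x 0 + (x 1 * y 5 + y 1 * x 5) / 2 := fun x y => by
    have := hk x y (Pi.single 0 1)
    simp at this
    linear_combination this / 2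
  have h4 : ∀ x y, c * D x y 3 + a * D x y 4 =
      c * y 2 * x 1 + a * x 2 * y 0 - (y 0 * x 5 + x 0 * y 5) / 2 := fun x y => by
    have := hk x y (Pi.single 1 1)
    simp at this
    linear_combination this / 2
  have k3 : a * curv D x y z 3 - c * curv D x y z 4 = 0 := by
    have A := h3 x (D y z)
    have B := h3 y (D x z)
    have C := h3 (bra x y) z
    simp only [h0, h1, h2, h5, bra0, bra1, bra2, bra5] at A B C
    simp only [curv, Pi.sub_apply]
    linear_combination A - B - C + (z 1 * (x 0 * y 1 - x 1 * y 0)) * hc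
  have k4 : c * curv D x y z 3 + a * curv D x y z 4 = 0 := by
    have A := h4 x (D y z)
    have B := h4 y (D x z)
    have C := h4 (bra x y) z
    simp only [h0, h1, h2, h5, bra0, bra1, bra2, bra5] at A B C
    simp only [curv, Pi.sub_apply]
    linear_combination A - B - C - (z 0 * (x 0 * y 1 - x 1 * y 0)) * hc
  funext i
  fin_cases i
  · simp [curv, h0]
  · simp [curv, h1]
  · simp [curv, h2, h0, h1, bra0, bra1]
  · refine (mul_eq_zero.1 (?_ : (a ^ 2 + c ^ 2) * curv D x y z 3 = 0)).resolve_left hn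
    linear_combination a * k3 + c * k4
  · refine (mul_eq_zero.1 (?_ : (a ^ 2 + c ^ 2) * curv D x y z 4 = 0)).resolve_left hn
    linear_combination a * k4 - c * k3
  · simp [curv, h5, h0, h1, bra0, bra1]

/-- The metrics `(E₁₀, diag(λ±√3, λ, 0), E₁₀)` with `λ(λ±√3) ≠ 0`, and
`(−E₁₀, [[λ₁,∓√3/2,0],[±√3/2,λ₁,0],[0,0,0]], E₁₀)`, are flat. -/
theorem stmt_12 (s lam lam1 : ℝ) (hs : s = 1 ∨ s = -1)
    (hlam : lam * (lam + s * Real.sqrt 3) ≠ 0)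
    (S1 S2 : Matrix (Fin 6) (Fin 6) ℝ)
    (hS1 : S1 = Matrix.reindex finSumFinEquiv finSumFinEquiv
      (Matrix.fromBlocks E10 (Matrix.diagonal ![lam + s * Real.sqrt 3, lam, 0])
        (Matrix.diagonal ![lam + s * Real.sqrt 3, lam, 0])ᵀ E10))
    (hS2 : S2 = Matrix.reindex finSumFinEquiv finSumFinEquiv
      (Matrix.fromBlocks (-E10)
        !![lam1, -(s * (Real.sqrt 3 / 2)), 0; s * (Real.sqrt 3 / 2), lam1, 0; 0, 0, 0]
        (!![lam1, -(s * (Real.sqrt 3 / 2)), 0; s * (Real.sqrt 3 / 2), lam1, 0; 0, 0, 0])ᵀ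
        E10))
    (D1 D2 : (Fin 6 → ℝ) → (Fin 6 → ℝ) → (Fin 6 → ℝ))
    (hk1 : ∀ x y z, 2 * gm S1 (D1 x y) z =
      gm S1 (bra x y) z - gm S1 (bra y z) x + gm S1 (bra z x) y)
    (hk2 : ∀ x y z, 2 * gm S2 (D2 x y) z =
      gm S2 (bra x y) z - gm S2 (bra y z) x + gm S2 (bra z x) y) :
    (∀ x y z, curv D1 x y z = 0) ∧ (∀ x y z, curv D2 x y z = 0) := by
  have h3 : Real.sqrt 3 ^ 2 = 3 := Real.sq_sqrt (by norm_num)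
  have hs2 : s ^ 2 = 1 := by rcases hs with rfl | rfl <;> norm_num
  subst hS1 hS2
  refine ⟨flat1 _ _ (s * Real.sqrt 3) (right_ne_zero_of_mul hlam) (left_ne_zero_of_mul hlam)
    (by rw [mul_pow, h3, hs2]; norm_num) rfl D1 _ (gm1_eq _ _) hk1,
    flat2 _ _ (by rw [mul_pow, div_pow, h3, hs2]; norm_num) D2 _ (gm2_eq _ _) hk2⟩
end
end

section
/- Let S be an invertible real symmetric 3×3 matrix and let E be one of the matrices ±diag(1,1,1), ±diag(1,1,−1). Let ⟨·,·⟩ be the symmetric bilinear form on T*𝔥₃ whose matrix in the basis (e₁,…,e₆) is the block-diagonal matrix diag(S, E). Then the scalar curvature of the associated metric equals τ = − tr(S·E) / (2 det S). -/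
open Matrix

noncomputable section

/-- Explicit Levi-Civita connection; `t` is the inverse of `S`, `p q r` the diagonal of `E`. -/
def Dex (t11 t12 t13 t22 t23 t33 p q r : ℝ) (x y : Fin 6 → ℝ) : Fin 6 → ℝ :=
  let w0 := (y 1 * (r * x 5) - y 2 * (q * x 4)) + (x 1 * (r * y 5) - x 2 * (q * y 4))
  let w1 := (y 2 * (p * x 3) - y 0 * (r * x 5)) + (x 2 * (p * y 3) - x 0 * (r * y 5))
  let w2 := (y 0 * (q * x 4) - y 1 * (p * x 3)) + (x 0 * (q * y 4) - x 1 * (p * y 3))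
  ![(t11 * w0 + t12 * w1 + t13 * w2) / 2, (t12 * w0 + t22 * w1 + t23 * w2) / 2,
    (t13 * w0 + t23 * w1 + t33 * w2) / 2,
    (x 1 * y 2 - x 2 * y 1) / 2, (x 2 * y 0 - x 0 * y 2) / 2, (x 0 * y 1 - x 1 * y 0) / 2]

lemma gm_expand (S : Matrix (Fin 3) (Fin 3) ℝ) (p q r : ℝ) (x y : Fin 6 → ℝ) :
    gm (Matrix.reindex finSumFinEquiv finSumFinEquiv
      (Matrix.fromBlocks S 0 0 (Matrix.diagonal ![p, q, r]))) x y =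
    x 0 * (S 0 0 * y 0 + S 0 1 * y 1 + S 0 2 * y 2) +
    x 1 * (S 1 0 * y 0 + S 1 1 * y 1 + S 1 2 * y 2) +
    x 2 * (S 2 0 * y 0 + S 2 1 * y 1 + S 2 2 * y 2) +
    p * x 3 * y 3 + q * x 4 * y 4 + r * x 5 * y 5 := by
  have h : ∀ v : Fin 6 → ℝ, gm (Matrix.reindex finSumFinEquiv finSumFinEquiv
      (Matrix.fromBlocks S 0 0 (Matrix.diagonal ![p, q, r]))) x v =
      ∑ i : Fin 3 ⊕ Fin 3, x (finSumFinEquiv i) * ∑ j : Fin 3 ⊕ Fin 3,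
        (Matrix.fromBlocks S 0 0 (Matrix.diagonal ![p, q, r])) i j * v (finSumFinEquiv j) := by
    intro v
    simp only [gm, dotProduct, Matrix.mulVec]
    rw [← Equiv.sum_comp (finSumFinEquiv (m := 3) (n := 3))]
    refine Finset.sum_congr rfl fun i _ => ?_
    congr 1
    rw [← Equiv.sum_comp (finSumFinEquiv (m := 3) (n := 3))]
    refine Finset.sum_congr rfl fun j _ => ?_
    simp
  rw [h]
  have e0 : (Fin.castAdd 3 (0 : Fin 3) : Fin (3+3)) = (0 : Fin 6) := rfl
  have e1 : (Fin.castAdd 3 (1 : Fin 3) : Fin (3+3)) = (1 : Fin 6) := rfl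
  have e2 : (Fin.castAdd 3 (2 : Fin 3) : Fin (3+3)) = (2 : Fin 6) := rfl
  have e3 : (Fin.natAdd 3 (0 : Fin 3) : Fin (3+3)) = (3 : Fin 6) := rfl
  have e4 : (Fin.natAdd 3 (1 : Fin 3) : Fin (3+3)) = (4 : Fin 6) := rfl
  have e5 : (Fin.natAdd 3 (2 : Fin 3) : Fin (3+3)) = (5 : Fin 6) := rfl
  simp only [Fintype.sum_sum_type, Fin.sum_univ_three, finSumFinEquiv_apply_left,
    finSumFinEquiv_apply_right, e0, e1, e2, e3, e4, e5, Matrix.fromBlocks_apply₁₁,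
    Matrix.fromBlocks_apply₁₂, Matrix.fromBlocks_apply₂₁, Matrix.fromBlocks_apply₂₂]
  simp [Matrix.diagonal_apply]
  ring

lemma ricci_Dex (t11 t12 t13 t22 t23 t33 p q r : ℝ) (x y : Fin 6 → ℝ) :
    ricci (Dex t11 t12 t13 t22 t23 t33 p q r) x y =
    (t12 * r * (x 0 * y 1 + x 1 * y 0) + t13 * q * (x 0 * y 2 + x 2 * y 0)
      + t23 * p * (x 1 * y 2 + x 2 * y 1)
      - x 0 * y 0 * (t22 * r + t33 * q) - x 1 * y 1 * (t11 * r + t33 * p)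
      - x 2 * y 2 * (t11 * q + t22 * p)
      + p ^ 2 * (t22 * t33 - t23 ^ 2) * x 3 * y 3 + q ^ 2 * (t11 * t33 - t13 ^ 2) * x 4 * y 4
      + r ^ 2 * (t11 * t22 - t12 ^ 2) * x 5 * y 5
      + r * q * (t12 * t13 - t11 * t23) * (x 4 * y 5 + x 5 * y 4)
      + r * p * (t12 * t23 - t13 * t22) * (x 3 * y 5 + x 5 * y 3)
      + q * p * (t13 * t23 - t12 * t33) * (x 3 * y 4 + x 4 * y 3)) / 2 := by
  simp only [ricci, Fin.sum_univ_six, curv, Pi.sub_apply, Dex, bra]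
  simp
  ring

/-- For the metric `diag(S, E)` on `T*𝔥₃` with `S` invertible symmetric and
`E = ±diag(1,1,1)` or `±diag(1,1,−1)`, the scalar curvature (the trace of the Ricci
operator) equals `−tr(S·E)/(2·det S)`. -/
theorem stmt_13 (S E : Matrix (Fin 3) (Fin 3) ℝ) (hSsym : S.IsSymm)
    (hSdet : IsUnit S.det)
    (hE : E = 1 ∨ E = -1 ∨ E = Matrix.diagonal ![1, 1, -1] ∨
      E = -Matrix.diagonal ![1, 1, -1])
    (Smat : Matrix (Fin 6) (Fin 6) ℝ)
    (hSmat : Smat = Matrix.reindex finSumFinEquiv finSumFinEquiv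
      (Matrix.fromBlocks S 0 0 E))
    (D : (Fin 6 → ℝ) → (Fin 6 → ℝ) → (Fin 6 → ℝ))
    (hkoszul : ∀ x y z, 2 * gm Smat (D x y) z =
      gm Smat (bra x y) z - gm Smat (bra y z) x + gm Smat (bra z x) y)
    (Ric : Matrix (Fin 6) (Fin 6) ℝ)
    (hRic : ∀ x y, gm Smat (Ric.mulVec x) y = ricci D x y) :
    Ric.trace = -(S * E).trace / (2 * S.det) := by
  obtain ⟨p, q, r, hp, hq, hr, rfl⟩ : ∃ p q r : ℝ, p * p = 1 ∧ q * q = 1 ∧ r * r = 1 ∧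
      E = Matrix.diagonal ![p, q, r] := by
    have key : ∀ s a b c : ℝ, s • Matrix.diagonal ![a, b, c] =
        Matrix.diagonal ![s * a, s * b, s * c] := by
      intro s a b c
      ext i j
      fin_cases i <;> fin_cases j <;> simp
    rcases hE with h | h | h | h
    · refine ⟨1, 1, 1, by norm_num, by norm_num, by norm_num, ?_⟩
      rw [h]; ext i j; fin_cases i <;> fin_cases j <;> simp
    · refine ⟨-1, -1, -1, by norm_num, by norm_num, by norm_num, ?_⟩
      rw [h]; ext i j; fin_cases i <;> fin_cases j <;> simp
    · exact ⟨1, 1, -1, by norm_num, by norm_num, by norm_num, h⟩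
    · refine ⟨-1, -1, 1, by norm_num, by norm_num, by norm_num, ?_⟩
      rw [h]; ext i j; fin_cases i <;> fin_cases j <;> simp
  subst hSmat
  simp only [gm_expand] at hkoszul hRic
  have s01 : S 1 0 = S 0 1 := hSsym.apply 0 1
  have s02 : S 2 0 = S 0 2 := hSsym.apply 0 2
  have s12 : S 2 1 = S 1 2 := hSsym.apply 1 2
  have hd : S.det ≠ 0 := hSdet.ne_zero
  have htr : (S * Matrix.diagonal ![p, q, r]).trace = S 0 0 * p + S 1 1 * q + S 2 2 * r := by
    simp [Matrix.trace, Fin.sum_univ_three]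
  have hdet := Matrix.det_fin_three S
  rw [htr]
  have hT : Ric.trace = Ric 0 0 + Ric 1 1 + Ric 2 2 + Ric 3 3 + Ric 4 4 + Ric 5 5 := by
    simp [Matrix.trace, Fin.sum_univ_six]
  rw [hT]
  rw [s01, s02, s12] at hdet
  simp only [s01, s02, s12] at hkoszul hRic
  generalize S 0 0 = a at *
  generalize S 0 1 = b at *
  generalize S 0 2 = c at *
  generalize S 1 1 = d at *
  generalize S 1 2 = e at *
  generalize S 2 2 = f at *
  generalize S.det = δ at *
  obtain ⟨t11, h11⟩ : ∃ t, t = (d * f - e * e) / δ := ⟨_, rfl⟩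
  obtain ⟨t12, h12⟩ : ∃ t, t = (c * e - b * f) / δ := ⟨_, rfl⟩
  obtain ⟨t13, h13⟩ : ∃ t, t = (b * e - c * d) / δ := ⟨_, rfl⟩
  obtain ⟨t22, h22⟩ : ∃ t, t = (a * f - c * c) / δ := ⟨_, rfl⟩
  obtain ⟨t23, h23⟩ : ∃ t, t = (b * c - a * e) / δ := ⟨_, rfl⟩
  obtain ⟨t33, h33⟩ : ∃ t, t = (a * d - b * b) / δ := ⟨_, rfl⟩
  have m11 : a * t11 + b * t12 + c * t13 = 1 := by rw [h11, h12, h13]; field_simp; rw [hdet]; ring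
  have m12 : a * t12 + b * t22 + c * t23 = 0 := by rw [h12, h22, h23]; field_simp; ring
  have m13 : a * t13 + b * t23 + c * t33 = 0 := by rw [h13, h23, h33]; field_simp; ring
  have m21 : b * t11 + d * t12 + e * t13 = 0 := by rw [h11, h12, h13]; field_simp; ring
  have m22 : b * t12 + d * t22 + e * t23 = 1 := by rw [h12, h22, h23]; field_simp; rw [hdet]; ring
  have m23 : b * t13 + d * t23 + e * t33 = 0 := by rw [h13, h23, h33]; field_simp; ring
  have m31 : c * t11 + e * t12 + f * t13 = 0 := by rw [h11, h12, h13]; field_simp; ring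
  have m32 : c * t12 + e * t22 + f * t23 = 0 := by rw [h12, h22, h23]; field_simp; ring
  have m33 : c * t13 + e * t23 + f * t33 = 1 := by rw [h13, h23, h33]; field_simp; rw [hdet]; ring
  have g1 : a / δ = t22 * t33 - t23 * t23 := by
    rw [h22, h33, h23]; field_simp; rw [hdet]; ring
  have g2 : d / δ = t11 * t33 - t13 * t13 := by
    rw [h11, h33, h13]; field_simp; rw [hdet]; ring
  have g3 : f / δ = t11 * t22 - t12 * t12 := by
    rw [h22, h11, h12]; field_simp; rw [hdet]; ring
  have hgoal : -(a * p + d * q + f * r) / (2 * δ) =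
      -(a / δ * p + d / δ * q + f / δ * r) / 2 := by field_simp
  rw [hgoal, g1, g2, g3]
  have hD : D = Dex t11 t12 t13 t22 t23 t33 p q r := by
    funext x y
    have k0 := hkoszul x y (Pi.single 0 1)
    have k1 := hkoszul x y (Pi.single 1 1)
    have k2 := hkoszul x y (Pi.single 2 1)
    have k3 := hkoszul x y (Pi.single 3 1)
    have k4 := hkoszul x y (Pi.single 4 1)
    have k5 := hkoszul x y (Pi.single 5 1)
    simp [bra, Pi.single_apply] at k0 k1 k2 k3 k4 k5
    generalize D x y = v at *
    ext i
    fin_cases i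
    · simp [Dex]
      linear_combination (t11 * k0 + t12 * k1 + t13 * k2) / 2 - v 0 * m11 - v 1 * m21 - v 2 * m31
    · simp [Dex]
      linear_combination (t12 * k0 + t22 * k1 + t23 * k2) / 2 - v 0 * m12 - v 1 * m22 - v 2 * m32
    · simp [Dex]
      linear_combination (t13 * k0 + t23 * k1 + t33 * k2) / 2 - v 0 * m13 - v 1 * m23 - v 2 * m33
    · simp [Dex]
      linear_combination p * k3 / 2 + ((x 1 * y 2 - x 2 * y 1) / 2 - v 3) * hp
    · simp [Dex]
      linear_combination q * k4 / 2 + ((x 2 * y 0 - x 0 * y 2) / 2 - v 4) * hq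
    · simp [Dex]
      linear_combination r * k5 / 2 + ((x 0 * y 1 - x 1 * y 0) / 2 - v 5) * hr
  subst hD
  simp only [ricci_Dex] at hRic
  have k00 := hRic (Pi.single 0 1) (Pi.single 0 1)
  have k01 := hRic (Pi.single 0 1) (Pi.single 1 1)
  have k02 := hRic (Pi.single 0 1) (Pi.single 2 1)
  have k10 := hRic (Pi.single 1 1) (Pi.single 0 1)
  have k11 := hRic (Pi.single 1 1) (Pi.single 1 1)
  have k12 := hRic (Pi.single 1 1) (Pi.single 2 1)
  have k20 := hRic (Pi.single 2 1) (Pi.single 0 1)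
  have k21 := hRic (Pi.single 2 1) (Pi.single 1 1)
  have k22 := hRic (Pi.single 2 1) (Pi.single 2 1)
  have k3 := hRic (Pi.single 3 1) (Pi.single 3 1)
  have k4 := hRic (Pi.single 4 1) (Pi.single 4 1)
  have k5 := hRic (Pi.single 5 1) (Pi.single 5 1)
  simp at k00 k01 k02 k10 k11 k12 k20 k21 k22 k3 k4 k5
  linear_combination t11 * k00 + t12 * k01 + t13 * k02 + t12 * k10 + t22 * k11 + t23 * k12 + t13 * k20 + t23 * k21 + t33 * k22
    - Ric 0 0 * m11 - Ric 1 0 * m21 - Ric 2 0 * m31 - Ric 0 1 * m12 - Ric 1 1 * m22 - Ric 2 1 * m32 - Ric 0 2 * m13 - Ric 1 2 * m23 - Ric 2 2 * m33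
    + p * k3 + (p * (t22 * t33 - t23 ^ 2) / 2 - Ric 3 3) * hp
    + q * k4 + (q * (t11 * t33 - t13 ^ 2) / 2 - Ric 4 4) * hq
    + r * k5 + (r * (t11 * t22 - t12 ^ 2) / 2 - Ric 5 5) * hr
end
end

section
/- Let ε ∈ {+1, −1}, let E be one of the matrices ε·diag(0,1,1) or ε·diag(0,1,−1), let M be the 3×3 matrix whose only nonzero entry is a 1 in position (1,1), and let S be either diag(0, s₂₂, s₃₃) with s₂₂s₃₃ ≠ 0 or [[0,0,0],[0, s₂₂, |s₂₂|/2],[0, |s₂₂|/2, 0]] with s₂₂ ≠ 0 (the latter only when E = ±diag(0,1,−1)). Let ⟨·,·⟩ be the symmetric bilinear form on T*𝔥₃ with matrix [[S, M],[Mᵀ, E]] in the basis (e₁,…,e₆), assumed nondegenerate. Then this metric is a pp-wave: e₄ is a parallel null vector (∇_y e₄ = 0 for all y, and ⟨e₄,e₄⟩ = 0), and R(u,w) = 0 for all u, w with ⟨u, e₄⟩ = ⟨w, e₄⟩ = 0. -/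
open Matrix

noncomputable section

/-- The matrix `M` with single nonzero entry `1` in position `(1,1)`. -/
def Mw : Matrix (Fin 3) (Fin 3) ℝ := !![1, 0, 0; 0, 0, 0; 0, 0, 0]

lemma gm_aux (a b c p q : ℝ) (x y : Fin 6 → ℝ) :
    gm !![0,0,0,1,0,0; 0,a,b,0,0,0; 0,b,c,0,0,0; 1,0,0,0,0,0; 0,0,0,0,p,0; 0,0,0,0,0,q] x y =
      x 0 * y 3 + x 1 * (a * y 1 + b * y 2) + x 2 * (b * y 1 + c * y 2) + x 3 * y 0
        + x 4 * (p * y 4) + x 5 * (q * y 5) := by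
  simp [gm, dotProduct, Matrix.mulVec, Fin.sum_univ_six]

lemma main_aux (a b c p q : ℝ) (hp : p ≠ 0) (hq : q ≠ 0) (hd : a * c - b * b ≠ 0)
    (A : Matrix (Fin 6) (Fin 6) ℝ)
    (hA : A = !![0,0,0,1,0,0; 0,a,b,0,0,0; 0,b,c,0,0,0; 1,0,0,0,0,0; 0,0,0,0,p,0; 0,0,0,0,0,q])
    (D : (Fin 6 → ℝ) → (Fin 6 → ℝ) → (Fin 6 → ℝ))
    (hkoszul : ∀ x y z, 2 * gm A (D x y) z =
      gm A (bra x y) z - gm A (bra y z) x + gm A (bra z x) y) :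
    (∀ y, D y (Pi.single 3 1) = 0) ∧
    gm A (Pi.single 3 1) (Pi.single 3 1) = 0 ∧
    (∀ u w : Fin 6 → ℝ, gm A u (Pi.single 3 1) = 0 → gm A w (Pi.single 3 1) = 0 →
      ∀ z, curv D u w z = 0) := by
  subst hA
  simp only [gm_aux] at hkoszul ⊢
  obtain ⟨d, hdd⟩ : ∃ d, (a * c - b * b) * d = 1 := ⟨_, mul_inv_cancel₀ hd⟩
  have hD : ∀ x y, D x y = ![0,
      d * (c * (y 2 * x 0 - q * y 0 * x 5 + x 2 * y 0 - q * x 0 * y 5)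
        - b * (-y 1 * x 0 + p * y 0 * x 4 - x 1 * y 0 + p * x 0 * y 4)) / 2,
      d * (a * (-y 1 * x 0 + p * y 0 * x 4 - x 1 * y 0 + p * x 0 * y 4)
        - b * (y 2 * x 0 - q * y 0 * x 5 + x 2 * y 0 - q * x 0 * y 5)) / 2,
      (x 1 * y 2 - x 2 * y 1 - p * y 2 * x 4 + q * y 1 * x 5 - p * x 2 * y 4 + q * x 1 * y 5) / 2,
      (x 2 * y 0 - x 0 * y 2) / 2, (x 0 * y 1 - x 1 * y 0) / 2] := by
    intro x y
    have h0 := hkoszul x y (Pi.single 0 1)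
    have h1 := hkoszul x y (Pi.single 1 1)
    have h2 := hkoszul x y (Pi.single 2 1)
    have h3 := hkoszul x y (Pi.single 3 1)
    have h4 := hkoszul x y (Pi.single 4 1)
    have h5 := hkoszul x y (Pi.single 5 1)
    simp [bra, Pi.single_apply] at h0 h1 h2 h3 h4 h5
    funext i
    fin_cases i <;> simp
    · exact h3
    · linear_combination (-D x y 1) * hdd + d / 2 * c * h1 - d / 2 * b * h2
    · linear_combination (-D x y 2) * hdd + d / 2 * a * h2 - d / 2 * b * h1
    · linear_combination h0 / 2
    · apply mul_left_cancel₀ hp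
      linear_combination h4 / 2
    · apply mul_left_cancel₀ hq
      linear_combination h5 / 2
  clear hkoszul
  refine ⟨?_, ?_, ?_⟩
  · intro y
    rw [hD]
    funext i
    fin_cases i <;> simp [Pi.single_apply]
  · simp [Pi.single_apply]
  · intro u w hu hw z
    simp [Pi.single_apply] at hu hw
    funext i
    simp only [curv, hD, bra]
    fin_cases i <;> simp [hu, hw] <;> ring

/-- The pp-wave metrics of the classification: `e₄` is a parallel null vector and the
curvature vanishes on its orthogonal complement. -/
theorem stmt_14 (ε s22 s33 : ℝ) (hε : ε = 1 ∨ ε = -1)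
    (E S : Matrix (Fin 3) (Fin 3) ℝ)
    (hE : E = ε • Matrix.diagonal ![0, 1, 1] ∨ E = ε • Matrix.diagonal ![0, 1, -1])
    (hS : (S = Matrix.diagonal ![0, s22, s33] ∧ s22 * s33 ≠ 0) ∨
      (S = !![0, 0, 0; 0, s22, |s22| / 2; 0, |s22| / 2, 0] ∧ s22 ≠ 0 ∧
        (E = Matrix.diagonal ![0, 1, -1] ∨ E = -Matrix.diagonal ![0, 1, -1])))
    (Smat : Matrix (Fin 6) (Fin 6) ℝ)
    (hSmat : Smat = Matrix.reindex finSumFinEquiv finSumFinEquiv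
      (Matrix.fromBlocks S Mw Mwᵀ E))
    (hnd : IsUnit Smat.det)
    (D : (Fin 6 → ℝ) → (Fin 6 → ℝ) → (Fin 6 → ℝ))
    (hkoszul : ∀ x y z, 2 * gm Smat (D x y) z =
      gm Smat (bra x y) z - gm Smat (bra y z) x + gm Smat (bra z x) y) :
    (∀ y, D y (Pi.single 3 1) = 0) ∧
    gm Smat (Pi.single 3 1) (Pi.single 3 1) = 0 ∧
    (∀ u w : Fin 6 → ℝ, gm Smat u (Pi.single 3 1) = 0 → gm Smat w (Pi.single 3 1) = 0 →
      ∀ z, curv D u w z = 0) := by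
  have hε0 : ε ≠ 0 := by rcases hε with h | h <;> rw [h] <;> norm_num
  obtain ⟨p, q, hp, hq, hE'⟩ : ∃ p q : ℝ, p ≠ 0 ∧ q ≠ 0 ∧ E = !![0,0,0; 0,p,0; 0,0,q] := by
    rcases hE with h | h
    · refine ⟨ε, ε, hε0, hε0, ?_⟩
      rw [h]; ext i j; fin_cases i <;> fin_cases j <;> simp
    · refine ⟨ε, -ε, hε0, neg_ne_zero.mpr hε0, ?_⟩
      rw [h]; ext i j; fin_cases i <;> fin_cases j <;> simp
  obtain ⟨a, b, c, hd, hS'⟩ : ∃ a b c : ℝ, a * c - b * b ≠ 0 ∧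
      S = !![0,0,0; 0,a,b; 0,b,c] := by
    rcases hS with ⟨h, h0⟩ | ⟨h, h0, -⟩
    · refine ⟨s22, 0, s33, by simpa using h0, ?_⟩
      rw [h]; ext i j; fin_cases i <;> fin_cases j <;> simp
    · refine ⟨s22, |s22| / 2, 0, ?_, h⟩
      have := abs_pos.mpr h0
      nlinarith
  refine main_aux a b c p q hp hq hd Smat ?_ D hkoszul
  rw [hSmat, hE', hS']
  ext i j
  fin_cases i <;> fin_cases j <;> rfl
end
end

section
/- Let λ₁, λ₂, λ₃ be nonzero reals and let ⟨·,·⟩ be the symmetric bilinear form on T*𝔥₃ with matrix diag(λ₁, λ₂, λ₃, 1, 1, 1) in the basis (e₁,…,e₆). Then there exist γ ∈ ℝ and a Lie algebra derivation D of T*𝔥₃ with Ric = γ·id + D if and only if λ₁ = λ₂ = λ₃; in that case necessarily γ = −5/(2λ₁²), so the metric is an expanding algebraic Ricci soliton. -/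
open Matrix

noncomputable section

/-- `Der` is (the matrix of) a derivation of `T*𝔥₃`. -/
def IsDerivation (Der : Matrix (Fin 6) (Fin 6) ℝ) : Prop :=
  ∀ x y : Fin 6 → ℝ,
    Der.mulVec (bra x y) = bra (Der.mulVec x) y + bra x (Der.mulVec y)

def nab (l1 l2 l3 : ℝ) (x y : Fin 6 → ℝ) : Fin 6 → ℝ :=
  ![(y 1 * x 5 - y 2 * x 4 - x 2 * y 4 + x 1 * y 5) / (2 * l1),
    (y 2 * x 3 - y 0 * x 5 + x 2 * y 3 - x 0 * y 5) / (2 * l2),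
    (y 0 * x 4 - y 1 * x 3 - x 1 * y 3 + x 0 * y 4) / (2 * l3),
    (x 1 * y 2 - x 2 * y 1) / 2, (x 2 * y 0 - x 0 * y 2) / 2, (x 0 * y 1 - x 1 * y 0) / 2]

lemma gm_diag (l1 l2 l3 : ℝ) (x y : Fin 6 → ℝ) :
    gm (Matrix.diagonal ![l1, l2, l3, 1, 1, 1]) x y =
      l1 * x 0 * y 0 + l2 * x 1 * y 1 + l3 * x 2 * y 2 + x 3 * y 3 + x 4 * y 4 + x 5 * y 5 := by
  simp [gm, dotProduct, Matrix.mulVec_diagonal, Fin.sum_univ_six]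
  ring

lemma bra_apply (x y : Fin 6 → ℝ) : bra x y 0 = 0 ∧ bra x y 1 = 0 ∧ bra x y 2 = 0 ∧
    bra x y 3 = x 1 * y 2 - x 2 * y 1 ∧ bra x y 4 = x 2 * y 0 - x 0 * y 2 ∧
    bra x y 5 = x 0 * y 1 - x 1 * y 0 := ⟨rfl, rfl, rfl, rfl, rfl, rfl⟩

lemma nab_apply (l1 l2 l3 : ℝ) (x y : Fin 6 → ℝ) :
    nab l1 l2 l3 x y 0 = (y 1 * x 5 - y 2 * x 4 - x 2 * y 4 + x 1 * y 5) / (2 * l1) ∧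
    nab l1 l2 l3 x y 1 = (y 2 * x 3 - y 0 * x 5 + x 2 * y 3 - x 0 * y 5) / (2 * l2) ∧
    nab l1 l2 l3 x y 2 = (y 0 * x 4 - y 1 * x 3 - x 1 * y 3 + x 0 * y 4) / (2 * l3) ∧
    nab l1 l2 l3 x y 3 = (x 1 * y 2 - x 2 * y 1) / 2 ∧
    nab l1 l2 l3 x y 4 = (x 2 * y 0 - x 0 * y 2) / 2 ∧
    nab l1 l2 l3 x y 5 = (x 0 * y 1 - x 1 * y 0) / 2 := ⟨rfl, rfl, rfl, rfl, rfl, rfl⟩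

lemma D_eq (l1 l2 l3 : ℝ) (h1 : l1 ≠ 0) (h2 : l2 ≠ 0) (h3 : l3 ≠ 0)
    (D : (Fin 6 → ℝ) → (Fin 6 → ℝ) → (Fin 6 → ℝ))
    (hk : ∀ x y z, 2 * gm (Matrix.diagonal ![l1, l2, l3, 1, 1, 1]) (D x y) z =
      gm (Matrix.diagonal ![l1, l2, l3, 1, 1, 1]) (bra x y) z
      - gm (Matrix.diagonal ![l1, l2, l3, 1, 1, 1]) (bra y z) x
      + gm (Matrix.diagonal ![l1, l2, l3, 1, 1, 1]) (bra z x) y) :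
    D = nab l1 l2 l3 := by
  funext x y i
  have h := hk x y (Pi.single i 1)
  simp only [gm_diag, bra_apply] at h
  fin_cases i <;> simp [nab_apply, Pi.single_apply] at h ⊢ <;> field_simp <;> linarith

lemma ricci_eq (l1 l2 l3 : ℝ) (h1 : l1 ≠ 0) (h2 : l2 ≠ 0) (h3 : l3 ≠ 0) (x y : Fin 6 → ℝ) :
    ricci (nab l1 l2 l3) x y =
      -(1 / l2 + 1 / l3) / 2 * x 0 * y 0 - (1 / l1 + 1 / l3) / 2 * x 1 * y 1
      - (1 / l1 + 1 / l2) / 2 * x 2 * y 2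
      + 1 / (2 * l2 * l3) * x 3 * y 3 + 1 / (2 * l1 * l3) * x 4 * y 4
      + 1 / (2 * l1 * l2) * x 5 * y 5 := by
  simp only [ricci, Fin.sum_univ_six, curv, Pi.sub_apply, nab_apply, bra_apply]
  simp [Pi.single_apply]
  field_simp
  ring

lemma der_diag (M : Matrix (Fin 6) (Fin 6) ℝ) (h : IsDerivation M) :
    M 5 5 = M 0 0 + M 1 1 ∧ M 4 4 = M 0 0 + M 2 2 ∧ M 3 3 = M 1 1 + M 2 2 := by
  have a := congrFun (h (Pi.single 0 1) (Pi.single 1 1)) 5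
  have b := congrFun (h (Pi.single 2 1) (Pi.single 0 1)) 4
  have c := congrFun (h (Pi.single 1 1) (Pi.single 2 1)) 3
  simp [Matrix.mulVec, dotProduct, Fin.sum_univ_six, bra_apply, Pi.single_apply] at a b c
  refine ⟨a, ?_, c⟩
  linarith

lemma key_s15 (l1 l2 l3 : ℝ) (h1 : l1 ≠ 0) (h2 : l2 ≠ 0) (h3 : l3 ≠ 0) (γ : ℝ)
    (Der Ric : Matrix (Fin 6) (Fin 6) ℝ)
    (hR : ∀ x y, gm (Matrix.diagonal ![l1, l2, l3, 1, 1, 1]) (Ric.mulVec x) y =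
      ricci (nab l1 l2 l3) x y) (hD : IsDerivation Der)
    (hE : Ric = γ • (1 : Matrix (Fin 6) (Fin 6) ℝ) + Der) :
    (l1 = l2 ∧ l2 = l3) ∧ γ = -5 / (2 * l1 ^ 2) := by
  obtain ⟨d5, d4, d3⟩ := der_diag Der hD
  have e : ∀ i, Ric i i = γ + Der i i := by intro i; simp [hE]
  have r := fun i => hR (Pi.single i 1) (Pi.single i 1)
  simp only [ricci_eq l1 l2 l3 h1 h2 h3, gm_diag] at r
  have r0 := r 0
  have r1 := r 1
  have r2 := r 2
  have r3 := r 3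
  have r4 := r 4
  have r5 := r 5
  simp [e] at r0 r1 r2 r3 r4 r5
  rw [d3] at r3
  rw [d4] at r4
  rw [d5] at r5
  generalize Der 0 0 = A at *
  generalize Der 1 1 = B at *
  generalize Der 2 2 = C at *
  have hA : A = -(l2⁻¹ + l3⁻¹) / 2 * l1⁻¹ - γ := by field_simp at r0 ⊢; linarith
  have hB : B = -(l1⁻¹ + l3⁻¹) / 2 * l2⁻¹ - γ := by field_simp at r1 ⊢; linarith
  have hC : C = -(l1⁻¹ + l2⁻¹) / 2 * l3⁻¹ - γ := by field_simp at r2 ⊢; linarith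
  subst hA hB hC
  have i1 : l1⁻¹ ≠ 0 := inv_ne_zero h1
  have i3 : l3⁻¹ ≠ 0 := inv_ne_zero h3
  have p : l3⁻¹ * l1⁻¹ = l3⁻¹ * l2⁻¹ := by linarith
  have q : l1⁻¹ * l2⁻¹ = l1⁻¹ * l3⁻¹ := by linarith
  have p' : l1 = l2 := inv_injective (mul_left_cancel₀ i3 p)
  have q' : l2 = l3 := inv_injective (mul_left_cancel₀ i1 q)
  refine ⟨⟨p', q'⟩, ?_⟩
  subst p' q'
  field_simp at r5 ⊢
  linarith

/-- The metric `diag(λ₁,λ₂,λ₃,1,1,1)` on `T*𝔥₃` is an algebraic Ricci soliton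
(`Ric = γ·id + D`, `D` a derivation) iff `λ₁ = λ₂ = λ₃`; in that case necessarily
`γ = −5/(2λ₁²)` (an expanding soliton). -/
theorem stmt_15 (l1 l2 l3 : ℝ) (h1 : l1 ≠ 0) (h2 : l2 ≠ 0) (h3 : l3 ≠ 0)
    (Smat : Matrix (Fin 6) (Fin 6) ℝ)
    (hSmat : Smat = Matrix.diagonal ![l1, l2, l3, 1, 1, 1])
    (D : (Fin 6 → ℝ) → (Fin 6 → ℝ) → (Fin 6 → ℝ))
    (hkoszul : ∀ x y z, 2 * gm Smat (D x y) z =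
      gm Smat (bra x y) z - gm Smat (bra y z) x + gm Smat (bra z x) y) :
    ((∃ γ : ℝ, ∃ Der Ric : Matrix (Fin 6) (Fin 6) ℝ,
        (∀ x y, gm Smat (Ric.mulVec x) y = ricci D x y) ∧ IsDerivation Der ∧
        Ric = γ • (1 : Matrix (Fin 6) (Fin 6) ℝ) + Der) ↔ (l1 = l2 ∧ l2 = l3)) ∧
    (∀ γ : ℝ, ∀ Der Ric : Matrix (Fin 6) (Fin 6) ℝ,
      (∀ x y, gm Smat (Ric.mulVec x) y = ricci D x y) → IsDerivation Der →
      Ric = γ • (1 : Matrix (Fin 6) (Fin 6) ℝ) + Der → γ = -5 / (2 * l1 ^ 2)) := by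
  subst hSmat
  obtain rfl := D_eq l1 l2 l3 h1 h2 h3 D hkoszul
  refine ⟨⟨?_, ?_⟩, ?_⟩
  · rintro ⟨γ, Der, Ric, hR, hD, hE⟩
    exact (key_s15 l1 l2 l3 h1 h2 h3 γ Der Ric hR hD hE).1
  · rintro ⟨rfl, rfl⟩
    refine ⟨-5 / (2 * l1 ^ 2),
      Matrix.diagonal ![3 / (2 * l1 ^ 2), 3 / (2 * l1 ^ 2), 3 / (2 * l1 ^ 2),
        3 / l1 ^ 2, 3 / l1 ^ 2, 3 / l1 ^ 2], _, ?_, ?_, rfl⟩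
    · intro x y
      rw [ricci_eq l1 l1 l1 h1 h1 h1, gm_diag]
      simp [Matrix.add_mulVec, Matrix.smul_mulVec, Matrix.mulVec_diagonal]
      field_simp
      ring
    · intro x y
      funext i
      fin_cases i <;> simp [Matrix.mulVec_diagonal, bra_apply] <;> field_simp <;> ring
  · intro γ Der Ric hR hD hE
    exact (key_s15 l1 l2 l3 h1 h2 h3 γ Der Ric hR hD hE).2
end
end

section
/- Let λ ≠ 0 and let ⟨·,·⟩ be the symmetric bilinear form on T*𝔥₃ with matrix diag(λ, λ, −λ, 1, 1, −1) in the basis (e₁,…,e₆). Then there exists a Lie algebra derivation D of T*𝔥₃ such that Ric = (5/(2λ²))·id + D; that is, this metric is a shrinking algebraic Ricci soliton. -/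
open Matrix

noncomputable section

/-- The explicit Levi-Civita connection. -/
def lcConn (lam : ℝ) (x y : Fin 6 → ℝ) : Fin 6 → ℝ :=
  ![(-(x 4 * y 2 + x 5 * y 1) - x 2 * y 4 - x 1 * y 5) * (lam⁻¹ / 2),
    (x 3 * y 2 + x 5 * y 0 + x 2 * y 3 + x 0 * y 5) * (lam⁻¹ / 2),
    (x 3 * y 1 - x 4 * y 0 + x 1 * y 3 - x 0 * y 4) * (lam⁻¹ / 2),
    (x 1 * y 2 - x 2 * y 1) / 2, (x 2 * y 0 - x 0 * y 2) / 2, (x 0 * y 1 - x 1 * y 0) / 2]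

lemma gm_diag_s16 (d x y : Fin 6 → ℝ) : gm (Matrix.diagonal d) x y = ∑ i, x i * (d i * y i) := by
  simp [gm, dotProduct, Matrix.mulVec_diagonal]

/-- The metric `diag(λ,λ,−λ,1,1,−1)` on `T*𝔥₃` is a shrinking algebraic Ricci soliton:
`Ric = (5/(2λ²))·id + D` for some derivation `D`. -/
theorem stmt_16 (lam : ℝ) (hlam : lam ≠ 0)
    (Smat : Matrix (Fin 6) (Fin 6) ℝ)
    (hSmat : Smat = Matrix.diagonal ![lam, lam, -lam, 1, 1, -1])
    (D : (Fin 6 → ℝ) → (Fin 6 → ℝ) → (Fin 6 → ℝ))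
    (hkoszul : ∀ x y z, 2 * gm Smat (D x y) z =
      gm Smat (bra x y) z - gm Smat (bra y z) x + gm Smat (bra z x) y) :
    ∃ Der Ric : Matrix (Fin 6) (Fin 6) ℝ,
      (∀ x y, gm Smat (Ric.mulVec x) y = ricci D x y) ∧ IsDerivation Der ∧
      Ric = (5 / (2 * lam ^ 2)) • (1 : Matrix (Fin 6) (Fin 6) ℝ) + Der := by
  have hD : D = lcConn lam := by
    funext x y i
    have h := hkoszul x y (Pi.single i 1)
    subst hSmat
    simp only [gm_diag_s16, Fin.sum_univ_six] at h
    fin_cases i <;> simp [bra, lcConn, Pi.single_apply] at h ⊢ <;> field_simp <;> linarith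
  subst hD hSmat
  refine ⟨Matrix.diagonal ![-3 / 2 * lam⁻¹ ^ 2, -3 / 2 * lam⁻¹ ^ 2, -3 / 2 * lam⁻¹ ^ 2,
      -3 * lam⁻¹ ^ 2, -3 * lam⁻¹ ^ 2, -3 * lam⁻¹ ^ 2],
    Matrix.diagonal ![lam⁻¹ ^ 2, lam⁻¹ ^ 2, lam⁻¹ ^ 2,
      -1 / 2 * lam⁻¹ ^ 2, -1 / 2 * lam⁻¹ ^ 2, -1 / 2 * lam⁻¹ ^ 2], ?_, ?_, ?_⟩
  · intro x y
    simp only [gm_diag_s16, ricci, Fin.sum_univ_six, Matrix.mulVec_diagonal]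
    simp [curv, lcConn, bra, Pi.single_apply]
    field_simp
    ring
  · intro x y
    funext i
    rw [Matrix.mulVec_diagonal]
    fin_cases i <;> simp [bra, Matrix.mulVec_diagonal] <;> ring
  · rw [← Matrix.diagonal_one, ← Matrix.diagonal_smul, Matrix.diagonal_add]
    congr 1
    funext i
    fin_cases i <;> simp <;> field_simp <;> norm_num
end
end

section
/- Let ⟨·,·⟩ be a nondegenerate symmetric bilinear form on T*𝔥₃ whose restriction to 𝔤′ = span(e₄,e₅,e₆) is nondegenerate, and let ∇ be its Levi-Civita connection. Then every symmetric bilinear form T on T*𝔥₃ that is parallel, i.e. satisfies T(∇_x y, z) + T(y, ∇_x z) = 0 for all x, y, z ∈ T*𝔥₃, is a scalar multiple of ⟨·,·⟩. In particular, such metrics are invariantly (geodesically) rigid. -/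
open Matrix

noncomputable section

theorem mem_gder_iff (x : Fin 6 → ℝ) : x ∈ gder ↔ x 0 = 0 ∧ x 1 = 0 ∧ x 2 = 0 := by
  constructor
  · intro h
    unfold gder at h
    induction h using Submodule.span_induction with
    | mem x hx =>
      simp only [Set.mem_insert_iff, Set.mem_singleton_iff] at hx
      rcases hx with rfl | rfl | rfl <;> simp [Pi.single_apply]
    | zero => simp
    | add x y _ _ h1 h2 => simp [h1, h2]
    | smul a x _ h => simp [h]
  · rintro ⟨h0, h1, h2⟩
    have : x = x 3 • Pi.single 3 1 + x 4 • Pi.single 4 1 + x 5 • Pi.single 5 1 := by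
      ext i; fin_cases i <;> simp [h0, h1, h2, Pi.single_apply]
    rw [this]
    refine add_mem (add_mem ?_ ?_) ?_ <;>
      exact Submodule.smul_mem _ _ (Submodule.subset_span (by simp))

theorem vec_decomp (y : Fin 6 → ℝ) : y = y 0 • Pi.single 0 1 + y 1 • Pi.single 1 1 +
    y 2 • Pi.single 2 1 + y 3 • Pi.single 3 1 + y 4 • Pi.single 4 1 + y 5 • Pi.single 5 1 := by
  ext i; fin_cases i <;> simp [Pi.single_apply]

theorem dual_exists {V : Type*} [AddCommGroup V] [Module ℝ V] [FiniteDimensional ℝ V]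
    (g : V →ₗ[ℝ] V →ₗ[ℝ] ℝ) (hnd : ∀ x, (∀ y, g x y = 0) → x = 0) (f : V →ₗ[ℝ] ℝ) :
    ∃ u, g u = f := by
  have hinj : Function.Injective g := by
    rw [← LinearMap.ker_eq_bot, LinearMap.ker_eq_bot']
    intro x hx
    exact hnd x (fun y => by rw [hx]; rfl)
  have := (LinearMap.injective_iff_surjective_of_finrank_eq_finrank
    (f := g) (Subspace.dual_finrank_eq (K := ℝ) (V := V)).symm).1 hinj
  exact this f

/-- `t i` linear forms proportional to the coordinates. -/
theorem forms_prop (a b c : (Fin 6 → ℝ) →ₗ[ℝ] ℝ)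
    (h12 : ∀ x, x 1 * c x = x 2 * b x) (h20 : ∀ x, x 2 * a x = x 0 * c x)
    (h01 : ∀ x, x 0 * b x = x 1 * a x) :
    ∃ k : ℝ, ∀ x, a x = k * x 0 ∧ b x = k * x 1 ∧ c x = k * x 2 := by
  have ev : ∀ (f : (Fin 6 → ℝ) →ₗ[ℝ] ℝ) (x : Fin 6 → ℝ), f x = x 0 * f (Pi.single 0 1) +
      x 1 * f (Pi.single 1 1) + x 2 * f (Pi.single 2 1) + x 3 * f (Pi.single 3 1) +
      x 4 * f (Pi.single 4 1) + x 5 * f (Pi.single 5 1) := by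
    intro f x
    conv_lhs => rw [vec_decomp x]
    simp
  have Q : ∀ i j : Fin 6, (Pi.single i 1 + Pi.single j 1 : Fin 6 → ℝ) 1 * (c (Pi.single i 1) + c (Pi.single j 1))
      = (Pi.single i 1 + Pi.single j 1 : Fin 6 → ℝ) 2 * (b (Pi.single i 1) + b (Pi.single j 1)) ∧
      (Pi.single i 1 + Pi.single j 1 : Fin 6 → ℝ) 2 * (a (Pi.single i 1) + a (Pi.single j 1))
      = (Pi.single i 1 + Pi.single j 1 : Fin 6 → ℝ) 0 * (c (Pi.single i 1) + c (Pi.single j 1)) ∧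
      (Pi.single i 1 + Pi.single j 1 : Fin 6 → ℝ) 0 * (b (Pi.single i 1) + b (Pi.single j 1))
      = (Pi.single i 1 + Pi.single j 1 : Fin 6 → ℝ) 1 * (a (Pi.single i 1) + a (Pi.single j 1)) := by
    intro i j
    simp only [← map_add]
    exact ⟨h12 _, h20 _, h01 _⟩
  have q00 := Q 0 0
  have q11 := Q 1 1
  have q22 := Q 2 2
  have q01 := Q 0 1
  have q02 := Q 0 2
  have q12 := Q 1 2
  have q03 := Q 0 3
  have q04 := Q 0 4
  have q05 := Q 0 5
  have q13 := Q 1 3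
  have q14 := Q 1 4
  have q15 := Q 1 5
  simp [Pi.single_apply] at q00 q11 q22 q01 q02 q12 q03 q04 q05 q13 q14 q15
  refine ⟨a (Pi.single 0 1), fun x => ?_⟩
  rw [ev a x, ev b x, ev c x]
  grind

/-- If the restriction to `𝔤′` of a nondegenerate symmetric bilinear form on `T*𝔥₃` is
nondegenerate, every parallel symmetric bilinear form is a scalar multiple of the metric:
the metric is invariantly (geodesically) rigid. -/
theorem stmt_17 (g : (Fin 6 → ℝ) →ₗ[ℝ] (Fin 6 → ℝ) →ₗ[ℝ] ℝ)
    (hsym : ∀ x y, g x y = g y x)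
    (hnd : ∀ x, (∀ y, g x y = 0) → x = 0)
    (hndder : ∀ x ∈ gder, (∀ y ∈ gder, g x y = 0) → x = 0)
    (D : (Fin 6 → ℝ) → (Fin 6 → ℝ) → (Fin 6 → ℝ))
    (hkoszul : ∀ x y z, 2 * g (D x y) z =
      g (bra x y) z - g (bra y z) x + g (bra z x) y)
    (T : (Fin 6 → ℝ) →ₗ[ℝ] (Fin 6 → ℝ) →ₗ[ℝ] ℝ)
    (hTsym : ∀ x y, T x y = T y x)
    (hTpar : ∀ x y z, T (D x y) z + T y (D x z) = 0) :
    ∃ c : ℝ, ∀ x y, T x y = c * g x y := by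
  have hgder : ∀ x ∈ gder, ∀ y, bra x y = 0 ∧ bra y x = 0 := by
    intro x hx y
    obtain ⟨h0, h1, h2⟩ := (mem_gder_iff x).1 hx
    constructor <;> (ext i; fin_cases i <;> simp [bra, h0, h1, h2])
  have hbra : ∀ x y, bra x y ∈ gder := by
    intro x y; rw [mem_gder_iff]; simp [bra]
  have hanti : ∀ x y, bra x y = - bra y x := by
    intro x y; ext i; fin_cases i <;> simp [bra] <;> ring
  have hext : ∀ x y, (∀ w, g x w = g y w) → x = y := by
    intro x y h
    refine sub_eq_zero.1 (hnd _ fun w => ?_)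
    simp [h w]
  -- dual vectors of coordinates
  have hE : ∀ i : Fin 6, ∃ u, ∀ y, g u y = y i := by
    intro i
    obtain ⟨u, hu⟩ := dual_exists g hnd (LinearMap.proj i)
    exact ⟨u, fun y => by rw [hu]; rfl⟩
  choose E hE using hE
  have hU : ∀ i : Fin 6, ∃ u ∈ gder, ∀ y ∈ gder, g u y = y i := by
    intro i
    obtain ⟨u, hu⟩ := dual_exists (g.domRestrict₁₂ gder gder)
      (fun x hx => Subtype.ext (hndder x.1 x.2 fun y hy => hx ⟨y, hy⟩))
      ((LinearMap.proj i : (Fin 6 → ℝ) →ₗ[ℝ] ℝ).domRestrict gder)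
    exact ⟨u.1, u.2, fun y hy => LinearMap.congr_fun hu ⟨y, hy⟩⟩
  choose U hUm hU using hU
  -- formula for D
  have hDU : ∀ z ∈ gder, ∀ x w, 2 * g (D z x) w = - g z (bra x w) := by
    intro z hz x w
    have := hkoszul z x w
    rw [(hgder z hz x).1, (hgder z hz w).2] at this
    simpa [hsym z] using this
  have hDU' : ∀ z ∈ gder, ∀ x, D x z = D z x := by
    intro z hz x
    apply hext
    intro w
    have := hkoszul x z w
    rw [(hgder z hz x).2, (hgder z hz w).1, hanti w x] at this
    have h2 := hDU z hz x w
    simp [hsym _ z] at this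
    linarith
  have hD3 : ∀ x, (2:ℝ) • D (U 3) x = x 2 • E 1 - x 1 • E 2 := by
    intro x; apply hext; intro w
    have := hDU _ (hUm 3) x w
    rw [hU 3 _ (hbra x w)] at this
    simp [bra] at this
    simp [hE]; linarith
  have hD4 : ∀ x, (2:ℝ) • D (U 4) x = x 0 • E 2 - x 2 • E 0 := by
    intro x; apply hext; intro w
    have := hDU _ (hUm 4) x w
    rw [hU 4 _ (hbra x w)] at this
    simp [bra] at this
    simp [hE]; linarith
  have hD5 : ∀ x, (2:ℝ) • D (U 5) x = x 1 • E 0 - x 0 • E 1 := by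
    intro x; apply hext; intro w
    have := hDU _ (hUm 5) x w
    rw [hU 5 _ (hbra x w)] at this
    simp [bra] at this
    simp [hE]; linarith
  have hT0 : ∀ z x, T ((2:ℝ) • D z x) x = 0 := by
    intro z x
    have := hTpar z x x
    rw [hTsym x] at this
    simp; linarith
  obtain ⟨k, hk⟩ := forms_prop (T (E 0)) (T (E 1)) (T (E 2))
    (fun x => by have := hT0 (U 3) x; rw [hD3] at this; simp at this; linarith)
    (fun x => by have := hT0 (U 4) x; rw [hD4] at this; simp at this; linarith)
    (fun x => by have := hT0 (U 5) x; rw [hD5] at this; simp at this; linarith)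
  obtain ⟨B, hB⟩ : ∃ B, B = T - k • g := ⟨_, rfl⟩
  have hBsym : ∀ x y, B x y = B y x := by
    intro x y; simp [hB, hTsym x y, hsym x y]
  have hBpar : ∀ x y z, B (D x y) z + B y (D x z) = 0 := by
    intro x y z
    have h1 := hTpar x y z
    have h2 : g (D x y) z + g y (D x z) = 0 := by
      have a1 := hkoszul x y z
      have a2 := hkoszul x z y
      rw [hanti z x] at a1
      rw [hanti z y, hanti y x] at a2
      rw [hsym y]
      simp at a1 a2
      linarith
    simp [hB]
    linear_combination h1 - k * h2
  have hBE : ∀ x, B (E 0) x = 0 ∧ B (E 1) x = 0 ∧ B (E 2) x = 0 := by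
    intro x
    obtain ⟨h0, h1, h2⟩ := hk x
    simp [hB, hE, h0, h1, h2]
  have hperp : ∀ r, (∀ z ∈ gder, g r z = 0) → ∀ y, B r y = 0 := by
    intro r hr y
    have : r = g r (Pi.single 0 1) • E 0 + g r (Pi.single 1 1) • E 1
        + g r (Pi.single 2 1) • E 2 := by
      apply hext
      intro w
      have e3 := hr (Pi.single 3 1) (by simp [mem_gder_iff])
      have e4 := hr (Pi.single 4 1) (by simp [mem_gder_iff])
      have e5 := hr (Pi.single 5 1) (by simp [mem_gder_iff])
      conv_lhs => rw [vec_decomp w]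
      simp only [map_add, map_smul, LinearMap.add_apply, LinearMap.smul_apply, e3, e4, e5, hE,
        smul_eq_mul]
      ring
    obtain ⟨h0, h1, h2⟩ := hBE y
    rw [this]
    simp [h0, h1, h2]
  have hBbra : ∀ x y, ∀ z ∈ gder, B (bra x y) z = 0 := by
    intro x y z hz
    have h1 : B (D x z) y = 0 := by
      rw [hDU' z hz]
      refine hperp _ (fun w hw => ?_) y
      have := hDU z hz x w
      rw [(hgder w hw x).2] at this
      simpa using this
    have h2 : B ((2:ℝ) • D x y - bra x y) z = 0 := by
      refine hperp _ (fun w hw => ?_) z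
      have := hkoszul x y w
      rw [(hgder w hw y).2, (hgder w hw x).1] at this
      simp at this
      simp [this]
    have h3 := hBpar x y z
    rw [hBsym y, h1] at h3
    simp at h2 h3
    rw [h3] at h2
    simpa using h2
  have hBZ : ∀ x ∈ gder, ∀ z ∈ gder, B x z = 0 := by
    intro x hx z hz
    obtain ⟨h0, h1, h2⟩ := (mem_gder_iff x).1 hx
    have : x = x 3 • bra (Pi.single 1 1) (Pi.single 2 1) + x 4 • bra (Pi.single 2 1) (Pi.single 0 1)
        + x 5 • bra (Pi.single 0 1) (Pi.single 1 1) := by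
      ext i; fin_cases i <;> simp [bra, h0, h1, h2]
    rw [this]
    simp [hBbra _ _ z hz]
  have hdec : ∀ x, ∃ z ∈ gder, ∀ y, B x y = B z y := by
    intro x
    let z := g x (Pi.single 3 1) • U 3 + g x (Pi.single 4 1) • U 4 + g x (Pi.single 5 1) • U 5
    have hz : z ∈ gder := add_mem (add_mem (Submodule.smul_mem _ _ (hUm 3))
      (Submodule.smul_mem _ _ (hUm 4))) (Submodule.smul_mem _ _ (hUm 5))
    refine ⟨z, hz, fun y => ?_⟩
    have := hperp (x - z) (fun w hw => ?_) y
    · simpa [sub_eq_zero] using this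
    · obtain ⟨h0, h1, h2⟩ := (mem_gder_iff w).1 hw
      have e1 : g x w = w 3 * g x (Pi.single 3 1) + w 4 * g x (Pi.single 4 1)
          + w 5 * g x (Pi.single 5 1) := by
        conv_lhs => rw [vec_decomp w]
        simp [h0, h1, h2]
      have e2 : g z w = w 3 * g x (Pi.single 3 1) + w 4 * g x (Pi.single 4 1)
          + w 5 * g x (Pi.single 5 1) := by
        simp only [z, map_add, map_smul, LinearMap.add_apply, LinearMap.smul_apply, hU _ w hw,
          smul_eq_mul]
        ring
      rw [map_sub, LinearMap.sub_apply, e1, e2, sub_self]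
  refine ⟨k, fun x y => ?_⟩
  obtain ⟨z, hz, h1⟩ := hdec x
  obtain ⟨w, hw, h2⟩ := hdec y
  have : B x y = 0 := by rw [h1, hBsym, h2, hBZ w hw z hz]
  simp [hB] at this
  linarith
end
end
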